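/- For every positive integer h there exists an integer c_h such that the following holds: for every finite simple graph G with no odd K_h-minor and every positive integer k, if χ_pcf(Q) ≤ k for every induced bipartite subgraph Q of G, then χ_pcf(G) ≤ k + c_h. -/

import Mathlib

open SimpleGraph

universe u v

namespace CFPaper

variable {V : Type u} {W : Type v}

/-- A coloring is proper if adjacent vertices get distinct colors. -/
def Proper (G : SimpleGraph V) (φ : V → ℕ) : Prop :=
  ∀ ⦃u w : V⦄, G.Adj u w → φ u ≠ φ w

/-- A coloring is conflict-free if every non-isolated vertex has a color appearing
exactly once in its open neighborhood. -/
def ConflictFree (G : SimpleGraph V) (φ : V → ℕ) : Prop :=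
  ∀ v : V, (G.neighborSet v).Nonempty →
    ∃ c : ℕ, {u : V | G.Adj v u ∧ φ u = c}.ncard = 1

/-- `G` is conflict-free `k`-choosable (k a real number). -/
def CFChoosable (G : SimpleGraph V) (k : ℝ) : Prop :=
  ∀ L : V → Finset ℕ, (∀ v, k ≤ ((L v).card : ℝ)) →
    ∃ φ : V → ℕ, (∀ v, φ v ∈ L v) ∧ Proper G φ ∧ ConflictFree G φ

/-- A coloring is `S`-achieved if for every non-isolated vertex there are `s ∈ S`
and a color appearing exactly `s` times in its open neighborhood. -/
def SAchieved (S : Set ℕ) (G : SimpleGraph V) (φ : V → ℕ) : Prop :=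
  ∀ v : V, (G.neighborSet v).Nonempty →
    ∃ s ∈ S, ∃ c : ℕ, {u : V | G.Adj v u ∧ φ u = c}.ncard = s

/-- `G` is `S`-achieved `t`-choosable. -/
def SChoosable (S : Set ℕ) (G : SimpleGraph V) (t : ℕ) : Prop :=
  ∀ L : V → Finset ℕ, (∀ v, t ≤ (L v).card) →
    ∃ φ : V → ℕ, (∀ v, φ v ∈ L v) ∧ Proper G φ ∧ SAchieved S G φ

/-- `G` is properly `S`-achieved `t`-colorable (colors from `{1,…,t}`). -/
def SColorable (S : Set ℕ) (G : SimpleGraph V) (t : ℕ) : Prop :=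
  ∃ φ : V → ℕ, (∀ v, φ v ∈ Finset.Icc 1 t) ∧ Proper G φ ∧ SAchieved S G φ

/-- `G` has a proper conflict-free coloring with colors from `{1,…,t}`. -/
def PCFColorable (G : SimpleGraph V) (t : ℕ) : Prop :=
  ∃ φ : V → ℕ, (∀ v, φ v ∈ Finset.Icc 1 t) ∧ Proper G φ ∧ ConflictFree G φ

/-- The proper conflict-free chromatic number. -/
noncomputable def chiPCF (G : SimpleGraph V) : ℕ := sInf {t : ℕ | PCFColorable G t}

/-- `(B x : x : ι)` is a tree-decomposition of `G` with underlying tree `T`. -/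
structure IsTreeDecomp (G : SimpleGraph V) {ι : Type*} (T : SimpleGraph ι) (B : ι → Set V) :
    Prop where
  tree : T.IsTree
  bags_connected : ∀ vv : V, (T.induce {x : ι | vv ∈ B x}).Connected
  edge_in_bag : ∀ ⦃a b : V⦄, G.Adj a b → ∃ x : ι, a ∈ B x ∧ b ∈ B x

/-- The torso of a tree-decomposition at a node `x`. -/
def torso (G : SimpleGraph V) {ι : Type*} (T : SimpleGraph ι) (B : ι → Set V) (x : ι) :
    SimpleGraph (B x) :=
  SimpleGraph.fromRel fun a b =>
    G.Adj a b ∨ ∃ y : ι, T.Adj x y ∧ (a : V) ∈ B y ∧ (b : V) ∈ B y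

/-- The frame of a tree-decomposition at a node `x`. -/
def frame (G : SimpleGraph V) {ι : Type*} (T : SimpleGraph ι) (B : ι → Set V) (x : ι) :
    Set (Set (B x)) :=
  {s : Set (B x) | ∃ y : ι, T.Adj x y ∧ s = {a : B x | (a : V) ∈ B y}}

/-- A subgraph `H` of `G` is `C`-compatible: every edge of `H` has both ends in some member
of `C`. -/
def Compatible (C : Set (Set V)) (H : SimpleGraph V) : Prop :=
  ∀ ⦃a b : V⦄, H.Adj a b → ∃ c ∈ C, a ∈ c ∧ b ∈ c

/-- `G` is `(S,C,L,t)`-extendable. -/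
def Extendable (S : Set ℕ) (G : SimpleGraph V) (C : Set (Set V)) (L : V → Finset ℕ)
    (t : ℕ) : Prop :=
  ∀ (Wc : Set V), G.IsClique Wc → Wc.ncard ≤ t →
  ∀ (H : SimpleGraph V), H ≤ G → Compatible C H →
  ∀ (φW : V → ℕ), (∀ w ∈ Wc, φW w ∈ L w) →
    (∀ a ∈ Wc, ∀ b ∈ Wc, G.Adj a b → φW a ≠ φW b) →
  ∀ (f : V → ℕ) (g : V → Bool),
  ∃ φ : V → ℕ, (∀ w, φ w ∈ L w) ∧ Proper G φ ∧ (∀ w ∈ Wc, φ w = φW w) ∧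
    (∀ w ∈ Wc, g w = false → ∀ u : V, G.Adj w u → u ∉ Wc → φ u ≠ f w) ∧
    (∀ w : V, (w ∉ Wc ∨ (w ∈ Wc ∧ g w = true)) →
      (((G \ H).neighborSet w = ∅) ∨
        ∃ c : ℕ, {u : V | (G \ H).Adj w u ∧ φ u = c}.ncard ∈ S))

/-- `H` is a minor of `G` (branch-set definition). -/
def IsMinor (H : SimpleGraph W) (G : SimpleGraph V) : Prop :=
  ∃ ρ : W → Set V,
    (∀ w : W, (G.induce (ρ w)).Connected) ∧
    (Pairwise fun a b => Disjoint (ρ a) (ρ b)) ∧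
    ∀ ⦃a b : W⦄, H.Adj a b → ∃ x ∈ ρ a, ∃ y ∈ ρ b, G.Adj x y

/-- The spanning subgraph of `G` whose edges are those between `A` and its complement. -/
def crossGraph (G : SimpleGraph V) (A : Set V) : SimpleGraph V :=
  SimpleGraph.fromRel fun x y => G.Adj x y ∧ x ∈ A ∧ y ∉ A

/-- The odd contraction of `G` determined by the bipartition `{A, Aᶜ}`: contract each
connected component of the spanning bipartite subgraph between `A` and `Aᶜ`. -/
def oddContract (G : SimpleGraph V) (A : Set V) :
    SimpleGraph ((crossGraph G A).ConnectedComponent) :=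
  SimpleGraph.fromRel fun Ct Dt =>
    ∃ x y : V, (crossGraph G A).connectedComponentMk x = Ct ∧
      (crossGraph G A).connectedComponentMk y = Dt ∧ G.Adj x y

/-- `OddContractions G H`: `H` is obtained from `G` by repeatedly applying odd
contractions. -/
inductive OddContractions : ∀ {α : Type u}, SimpleGraph α → ∀ {β : Type u}, SimpleGraph β → Prop
  | refl {α : Type u} (G : SimpleGraph α) : OddContractions G G
  | step {α : Type u} (G : SimpleGraph α) (A : Set α) {β : Type u} {H : SimpleGraph β} :
      OddContractions (oddContract G A) H → OddContractions G H

/-- `H` is an odd minor of `G`: `H` is isomorphic to a graph obtained from a subgraph of `G`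
by repeatedly applying odd contractions. -/
def IsOddMinor (H : SimpleGraph W) (G : SimpleGraph V) : Prop :=
  ∃ (s : Set V) (G₀ : SimpleGraph s), G₀ ≤ G.induce s ∧
    ∃ (β : Type u) (K : SimpleGraph β), OddContractions G₀ K ∧ Nonempty (H ≃g K)

/-- The graph obtained from `H` by subdividing each edge `e` exactly `n e` times, where
`σ` chooses an orientation of each edge. -/
def subdivGraph (H : SimpleGraph W) (σ : H.edgeSet → W × W) (n : H.edgeSet → ℕ) :
    SimpleGraph (W ⊕ (Σ e : H.edgeSet, Fin (n e))) :=
  SimpleGraph.fromRel fun a b =>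
    (∃ (x y : W) (h : H.Adj x y),
        a = Sum.inl x ∧ b = Sum.inl y ∧ n ⟨s(x, y), H.mem_edgeSet.mpr h⟩ = 0) ∨
    (∃ (x : W) (p : Σ e : H.edgeSet, Fin (n e)), a = Sum.inl x ∧ b = Sum.inr p ∧
        ((x = (σ p.1).1 ∧ (p.2 : ℕ) = 0) ∨ (x = (σ p.1).2 ∧ (p.2 : ℕ) = n p.1 - 1))) ∨
    (∃ p q : Σ e : H.edgeSet, Fin (n e), a = Sum.inr p ∧ b = Sum.inr q ∧ p.1 = q.1 ∧
        (p.2 : ℕ) + 1 = (q.2 : ℕ))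

/-- `σ` is a valid orientation of the edges of `H`. -/
def ValidOrientation (H : SimpleGraph W) (σ : H.edgeSet → W × W) : Prop :=
  ∀ e : H.edgeSet, s((σ e).1, (σ e).2) = (e : Sym2 W)

/-- `G` contains a subdivision of `H` as a subgraph. -/
def ContainsSubdivision (H : SimpleGraph W) (G : SimpleGraph V) : Prop :=
  ∃ (σ : H.edgeSet → W × W) (n : H.edgeSet → ℕ), ValidOrientation H σ ∧
    ∃ f : subdivGraph H σ n →g G, Function.Injective f

/-- The strong product of two graphs. -/
def strongProd {α : Type*} {β : Type*} (A : SimpleGraph α) (B : SimpleGraph β) :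
    SimpleGraph (α × β) :=
  SimpleGraph.fromRel fun p q =>
    (A.Adj p.1 q.1 ∧ p.2 = q.2) ∨ (p.1 = q.1 ∧ B.Adj p.2 q.2) ∨
      (A.Adj p.1 q.1 ∧ B.Adj p.2 q.2)


/-- A layering of `G`. -/
def IsLayering (G : SimpleGraph V) (Vl : ℕ → Set V) : Prop :=
  (∀ vv : V, ∃ i : ℕ, vv ∈ Vl i) ∧ (Pairwise fun i j => Disjoint (Vl i) (Vl j)) ∧
  ∀ ⦃a b : V⦄, G.Adj a b → ∃ i : ℕ, a ∈ Vl i ∪ Vl (i + 1) ∧ b ∈ Vl i ∪ Vl (i + 1)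

/-!
By induction on `|V(G)|`, every precolouring of a set `W` of bounded size, in which each `w ∈ W`
also forbids one colour on its uncoloured neighbours, extends to `G`.

If `G - W` has no large clique minor, it has a conflict-free colouring with boundedly many colours,
because contracting each vertex of a colour class into one selected neighbour leaves a graph of
bounded chromatic number. Otherwise Ramsey's theorem and the absence of an odd `K_h` turn the large
clique minor into one with branch sets `T i` all of whose edges are bichromatic in a two-colouring
`c`. Parity-breaking paths linking the `T i` would create an odd `K_h`. Systems of such paths are
matchings in the prism over `G`, so Tutte's theorem, applied to a maximal system, yields a barrier
whose trace in `G` gives a bounded set `Y` and an induced bipartite subgraph `B` such that every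
other vertex lies in a piece of `G - Y - B` attached to at most one vertex of `B`.

If some piece and its complement are both large, the piece is cut off by a bounded separator; the
induction hypothesis is applied to each side, the other side being represented by boundedly many
vertices. Otherwise all the pieces to be considered are small, and a colouring of `B` with `k`
colours extends to `G` with boundedly many new colours.
-/

section ConnectedSets

variable {G H : SimpleGraph V} {S : Set V}

theorem reachable_induce_of_adj {x y : S} (h : G.Adj x y) : (G.induce S).Reachable x y :=
  Adj.reachable (G := G.induce S) h

theorem connected_induce_of_descent {r : V} (hr : r ∈ S) (f : V → ℕ)
    (hf : ∀ x ∈ S, x ≠ r → ∃ y ∈ S, G.Adj x y ∧ f y < f x) : (G.induce S).Connected := by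
  have reach : ∀ n, ∀ x : S, f x = n → (G.induce S).Reachable ⟨r, hr⟩ x := by
    intro n
    induction n using Nat.strong_induction_on with
    | _ n ih =>
      rintro ⟨x, hx⟩ rfl
      by_cases hxr : x = r
      · subst hxr; rfl
      · obtain ⟨y, hy, hxy, hlt⟩ := hf x hx hxr
        exact (ih _ hlt ⟨y, hy⟩ rfl).trans (reachable_induce_of_adj hxy.symm)
  exact (connected_iff_exists_forall_reachable _).2 ⟨⟨r, hr⟩, fun x => reach _ x rfl⟩

theorem connected_induce_image {G' : SimpleGraph W} (f : G →g G')
    (hS : (G.induce S).Connected) : (G'.induce (f '' S)).Connected :=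
  hS.map (induceHom f (Set.mapsTo_image f S)) (Set.surjective_mapsTo_image_restrict f S)

theorem subset_of_connected_induce (hS : (G.induce S).Connected) {P : Set V} {x : V}
    (hxS : x ∈ S) (hxP : x ∈ P)
    (hP : ∀ a ∈ S, a ∈ P → ∀ b ∈ S, G.Adj a b → b ∈ P) : S ⊆ P := by
  intro y hyS
  obtain ⟨w⟩ := hS ⟨x, hxS⟩ ⟨y, hyS⟩
  have stays : ∀ {a b : S}, (G.induce S).Walk a b → (a : V) ∈ P → (b : V) ∈ P := by
    intro a b w
    induction w with
    | nil => exact id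
    | cons hab _ ih => exact fun ha => ih (hP _ (Subtype.property _) ha _ (Subtype.property _) hab)
  exact stays w hxP

theorem connected_induce_biUnion {ι : Type*} {T : ι → Set V} {I : Set ι} (hI : I.Nonempty)
    (hT : ∀ i ∈ I, (G.induce (T i)).Connected)
    (hadj : ∀ i ∈ I, ∀ j ∈ I, i ≠ j → ∃ x ∈ T i, ∃ y ∈ T j, G.Adj x y) :
    (G.induce (⋃ i ∈ I, T i)).Connected := by
  obtain ⟨i, hi⟩ := hI
  obtain ⟨⟨u, hu⟩⟩ := (hT i hi).nonempty
  refine G.induce_connected_of_patches u (Set.mem_biUnion hi hu) fun {v} hv => ?_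
  obtain ⟨j, hj, hvj⟩ := Set.mem_iUnion₂.1 hv
  by_cases hij : i = j
  · subst hij
    exact ⟨T i, Set.subset_biUnion_of_mem hi, hu, hvj, hT i hi _ _⟩
  · obtain ⟨x, hx, y, hy, hxy⟩ := hadj i hi j hj hij
    exact ⟨T i ∪ T j,
      Set.union_subset (Set.subset_biUnion_of_mem hi) (Set.subset_biUnion_of_mem hj),
      .inl hu, .inr hvj,
      connected_induce_union (hT i hi).preconnected (hT j hj).preconnected hx hy hxy _ _⟩

end ConnectedSets

section Bichromatic

variable {G : SimpleGraph V} {α : Type*} {c : V → α}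

/-- The spanning subgraph of `G` consisting of the edges whose ends receive different colours. -/
def bichromatic (G : SimpleGraph V) (c : V → α) : SimpleGraph V :=
  G ⊓ (⊤ : SimpleGraph α).comap c

theorem bichromatic_adj {x y : V} : (bichromatic G c).Adj x y ↔ G.Adj x y ∧ c x ≠ c y :=
  Iff.rfl

theorem induce_bichromatic_congr {c' : V → α} {S : Set V} (h : Set.EqOn c c' S) :
    (bichromatic G c).induce S = (bichromatic G c').induce S := by
  ext x y
  simp only [comap_adj, Function.Embedding.subtype_apply, bichromatic_adj, h x.2, h y.2]

theorem crossGraph_setOf_eq_bichromatic (c : V → Bool) :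
    crossGraph G {v | c v = true} = bichromatic G c := by
  ext x y
  simp only [crossGraph, fromRel_adj, bichromatic_adj, Set.mem_ofPred_eq, G.adj_comm y x]
  cases c x <;> cases c y <;> simp +contextual [G.ne_of_adj]

end Bichromatic

section OddModel

variable {G : SimpleGraph V} {ι : Type*}

/-- A branch-set model of an odd clique minor, indexed by `ι`: for some two-colouring, the branch
sets are connected through bichromatic edges and are pairwise joined by monochromatic edges. -/
def HasOddCliqueModel (G : SimpleGraph V) (ι : Type*) : Prop :=
  ∃ (ρ : ι → Set V) (c : V → Bool), (∀ i, ((bichromatic G c).induce (ρ i)).Connected) ∧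
    Pairwise (Function.onFun Disjoint ρ) ∧
    Pairwise fun i j => ∃ x ∈ ρ i, ∃ y ∈ ρ j, G.Adj x y ∧ c x = c y

theorem nonempty_top_iso_oddContract {A : Set V} {label : V → ι}
    (hsurj : Function.Surjective label)
    (hlabel : ∀ x y, (crossGraph G A).Reachable x y ↔ label x = label y)
    (hadj : Pairwise fun i j => ∃ x y, label x = i ∧ label y = j ∧ G.Adj x y) :
    Nonempty ((⊤ : SimpleGraph ι) ≃g oddContract G A) := by
  let f : ι → (crossGraph G A).ConnectedComponent := fun i =>
    (crossGraph G A).connectedComponentMk (Function.surjInv hsurj i)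
  have mk_eq : ∀ x, (crossGraph G A).connectedComponentMk x = f (label x) := fun x =>
    ConnectedComponent.sound ((hlabel _ _).2 (Function.surjInv_eq hsurj _).symm)
  have inj : Function.Injective f := fun i j hij => by
    simpa only [Function.surjInv_eq] using (hlabel _ _).1 (ConnectedComponent.exact hij)
  have surj : Function.Surjective f := fun C => by
    induction C using ConnectedComponent.ind with
    | h x => exact ⟨label x, (mk_eq x).symm⟩
  refine ⟨⟨Equiv.ofBijective f ⟨inj, surj⟩, @fun i j => ?_⟩⟩
  change (oddContract G A).Adj (f i) (f j) ↔ i ≠ j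
  rw [oddContract, fromRel_adj]
  refine ⟨fun h hij => h.1 (congrArg f hij), fun hij => ⟨inj.ne hij, .inl ?_⟩⟩
  obtain ⟨x, y, rfl, rfl, hxy⟩ := hadj hij
  exact ⟨x, y, mk_eq x, mk_eq y, hxy⟩

theorem IsOddMinor.of_hasOddCliqueModel (h : HasOddCliqueModel G ι) :
    IsOddMinor (⊤ : SimpleGraph ι) G := by
  obtain ⟨ρ, c, hconn, hdisj, hmono⟩ := h
  let s : Set V := ⋃ i, ρ i
  choose label hlabel using fun x : s => Set.mem_iUnion.1 x.2
  have label_eq : ∀ {i} (x : s), (x : V) ∈ ρ i → label x = i := fun x hx =>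
    hdisj.eq (Set.not_disjoint_iff.2 ⟨x, hlabel x, hx⟩)
  -- The edges used by the model: bichromatic inside branch sets, monochromatic between them.
  let G₀ : SimpleGraph s :=
    { Adj := fun x y => G.Adj x y ∧ (label x = label y ↔ c x ≠ c y)
      symm := ⟨fun x y h => ⟨h.1.symm, by rw [eq_comm, h.2, ne_comm]⟩⟩
      loopless := ⟨fun x h => h.1.ne rfl⟩ }
  let A : Set s := {x | c x = true}
  have cross_adj : ∀ x y : s, (crossGraph G₀ A).Adj x y ↔
      (G.Adj x y ∧ (label x = label y ↔ c x ≠ c y)) ∧ c x ≠ c y := fun x y => by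
    rw [crossGraph_setOf_eq_bichromatic fun x : s => c x]; rfl
  have reachable_iff : ∀ x y, (crossGraph G₀ A).Reachable x y ↔ label x = label y := by
    refine fun x y => ⟨?_, fun hxy => ?_⟩
    · rintro ⟨w⟩
      induction w with
      | nil => rfl
      | cons hadj _ ih =>
        obtain ⟨⟨-, h⟩, hc⟩ := (cross_adj _ _).1 hadj
        exact (h.2 hc).trans ih
    · let toCross : (bichromatic G c).induce (ρ (label x)) →g crossGraph G₀ A :=
        { toFun := fun z => ⟨z, Set.mem_iUnion.2 ⟨_, z.2⟩⟩
          map_rel' := fun {a b} hab => (cross_adj _ _).2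
            ⟨⟨hab.1, iff_of_true ((label_eq _ a.2).trans (label_eq _ b.2).symm) hab.2⟩, hab.2⟩ }
      exact ((hconn (label x)).preconnected ⟨x, hlabel x⟩ ⟨y, hxy ▸ hlabel y⟩).map toCross
  refine ⟨s, G₀, fun x y hxy => hxy.1, _, oddContract G₀ A, .step _ A (.refl _),
    nonempty_top_iso_oddContract (label := label) (fun i => ?_) reachable_iff fun i j hij => ?_⟩
  · obtain ⟨⟨x, hx⟩⟩ := (hconn i).nonempty
    exact ⟨⟨x, Set.mem_iUnion.2 ⟨i, hx⟩⟩, label_eq _ hx⟩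
  · obtain ⟨x, hx, y, hy, hxy, hc⟩ := hmono hij
    let x' : s := ⟨x, Set.mem_iUnion.2 ⟨i, hx⟩⟩
    let y' : s := ⟨y, Set.mem_iUnion.2 ⟨j, hy⟩⟩
    have hne : label x' ≠ label y' := by rwa [label_eq x' hx, label_eq y' hy]
    exact ⟨x', y', label_eq x' hx, label_eq y' hy, hxy, iff_of_false hne (not_not.2 hc)⟩

end OddModel

section CliqueMinors

variable {G : SimpleGraph V}

theorem IsMinor.of_injective_hom {α : Type*} {H : SimpleGraph α} {G' : SimpleGraph W}
    (h : IsMinor H G) (f : G →g G') (hf : Function.Injective f) : IsMinor H G' := by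
  obtain ⟨ρ, hconn, hdisj, hadj⟩ := h
  refine ⟨fun i => f '' ρ i, fun i => connected_induce_image f (hconn i),
    fun i j hij => Set.disjoint_image_of_injective hf (hdisj hij), fun i j hij => ?_⟩
  obtain ⟨x, hx, y, hy, hxy⟩ := hadj hij
  exact ⟨f x, ⟨x, hx, rfl⟩, f y, ⟨y, hy, rfl⟩, f.map_adj hxy⟩

theorem isMinor_top_succ_of_induce {t : ℕ} {B S : Set V} (hB : (G.induce B).Connected)
    (hBS : Disjoint B S) (hadj : ∀ y ∈ S, ∃ x ∈ B, G.Adj x y)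
    (h : IsMinor (⊤ : SimpleGraph (Fin t)) (G.induce S)) :
    IsMinor (⊤ : SimpleGraph (Fin (t + 1))) G := by
  obtain ⟨ρ, hconn, hdisj, hρ⟩ := h
  let emb : G.induce S →g G := (Embedding.induce S).toHom
  have image_sub : ∀ i, emb '' ρ i ⊆ S := fun i => by rintro _ ⟨x, -, rfl⟩; exact x.2
  have join : ∀ i, ∃ x ∈ B, ∃ y ∈ emb '' ρ i, G.Adj x y := fun i => by
    obtain ⟨y, hy⟩ := (hconn i).nonempty
    obtain ⟨x, hx, hxy⟩ := hadj y y.2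
    exact ⟨x, hx, y, ⟨y, hy, rfl⟩, hxy⟩
  refine ⟨Fin.cons B fun i => emb '' ρ i, Fin.cases hB fun i =>
    connected_induce_image emb (hconn i), fun i j => ?_, fun i j => ?_⟩
  · cases i using Fin.cases <;> cases j using Fin.cases <;> intro hij <;>
      simp only [Fin.cons_zero, Fin.cons_succ]
    · exact absurd rfl hij
    · exact hBS.mono_right (image_sub _)
    · exact hBS.symm.mono_left (image_sub _)
    · exact Set.disjoint_image_of_injective Subtype.val_injective
        (hdisj fun h => hij (congrArg Fin.succ h))
  · cases i using Fin.cases <;> cases j using Fin.cases <;> intro hij <;>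
      simp only [Fin.cons_zero, Fin.cons_succ]
    · exact absurd rfl hij
    · exact join _
    · obtain ⟨x, hx, y, hy, hxy⟩ := join _
      exact ⟨y, hy, x, hx, hxy.symm⟩
    · obtain ⟨x, hx, y, hy, hxy⟩ := hρ (show (⊤ : SimpleGraph (Fin t)).Adj _ _ from
        fun h => hij (congrArg Fin.succ h))
      exact ⟨x, ⟨x, hx, rfl⟩, y, ⟨y, hy, rfl⟩, hxy⟩

theorem exists_adj_dist_succ_eq (hG : G.Connected) {r v : V} (hv : G.dist r v ≠ 0) :
    ∃ u, G.Adj v u ∧ G.dist r u + 1 = G.dist r v := by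
  obtain ⟨w, hw⟩ := hG.exists_walk_length_eq_dist v r
  rw [dist_comm] at hv
  cases w with
  | nil => exact absurd dist_self hv
  | @cons _ u _ hvu w =>
    refine ⟨u, hvu, ?_⟩
    have := dist_le w
    have := hG.dist_triangle (u := v) (v := u) (w := r)
    rw [Walk.length_cons] at hw
    rw [dist_eq_one_iff_adj.2 hvu] at this
    rw [dist_comm (u := r), dist_comm (u := r)]
    omega

theorem connected_induce_ball (hG : G.Connected) (r : V) {n : ℕ} (hn : n ≠ 0) :
    (G.induce {v | G.dist r v < n}).Connected := by
  have hr : r ∈ {v | G.dist r v < n} := by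
    rw [Set.mem_ofPred_eq, dist_self]
    exact Nat.pos_of_ne_zero hn
  refine connected_induce_of_descent hr (G.dist r) fun x hx hxr => ?_
  obtain ⟨u, hxu, hu⟩ :=
    exists_adj_dist_succ_eq hG fun h => hxr ((hG.dist_eq_zero_iff.1 h).symm)
  exact ⟨u, lt_trans (Nat.lt_of_succ_le hu.le) hx, hxu, Nat.lt_of_succ_le hu.le⟩

theorem colorable_two_mul_of_layers {k : ℕ} (f : V → ℕ)
    (hf : ∀ u v, G.Adj u v → f v ≤ f u + 1) (h : ∀ n, (G.induce {v | f v = n}).Colorable k) :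
    G.Colorable (2 * k) := by
  let C : G.Coloring (Fin 2 × Fin k) := Coloring.mk
    (fun v => (⟨f v % 2, Nat.mod_lt _ two_pos⟩, (h (f v)).some ⟨v, rfl⟩)) fun {u v} huv heq => by
      obtain ⟨hpar, hcol⟩ := Prod.ext_iff.1 heq
      have hfuv : f u = f v := by
        have := hf u v huv
        have := hf v u huv.symm
        have := Fin.ext_iff.1 hpar
        simp only at this
        omega
      have transport : ∀ n (hn : f v = n), (h (f v)).some ⟨v, rfl⟩ = (h n).some ⟨v, hn⟩ := by
        rintro _ rfl; rfl
      exact (h (f u)).some.valid (show (G.induce {v | f v = f u}).Adj ⟨u, rfl⟩ ⟨v, hfuv.symm⟩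
        from huv) (hcol.trans (transport _ hfuv.symm))
  simpa using C.colorable

theorem colorable_of_not_isMinor_top {t : ℕ} (h : ¬ IsMinor (⊤ : SimpleGraph (Fin t)) G) :
    G.Colorable (2 ^ t) := by
  induction t generalizing V with
  | zero => exact absurd ⟨Fin.elim0, fun i => i.elim0, fun i => i.elim0, fun i => i.elim0⟩ h
  | succ t ih =>
    refine colorable_iff_forall_connectedComponent.2 fun C => ?_
    set GC := C.toSimpleGraph
    have hGC : GC.Connected := C.connected_toSimpleGraph
    obtain ⟨r⟩ := hGC.nonempty
    rw [pow_succ, mul_comm]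
    refine colorable_two_mul_of_layers (GC.dist r) (fun u v huv => ?_) fun n => ?_
    · have := hGC.dist_triangle (u := r) (v := u) (w := v)
      rwa [dist_eq_one_iff_adj.2 huv] at this
    · rcases eq_or_ne n 0 with rfl | hn
      · have : Subsingleton {v | GC.dist r v = 0} := ⟨fun x y => Subtype.ext <|
          (hGC.dist_eq_zero_iff.1 x.2).symm.trans (hGC.dist_eq_zero_iff.1 y.2)⟩
        exact chromaticNumber_le_iff_colorable.1 <|
          (chromaticNumber_le_one_of_subsingleton _).trans (mod_cast Nat.one_le_two_pow)
      · refine ih fun hminor => h ?_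
        refine (isMinor_top_succ_of_induce (connected_induce_ball hGC r hn) ?_ ?_
          hminor).of_injective_hom (Embedding.induce C.supp).toHom Subtype.val_injective
        · exact Set.disjoint_left.2 fun x (hx : _ < n) hx' => hx.ne hx'
        · rintro y rfl
          obtain ⟨u, hyu, hu⟩ := exists_adj_dist_succ_eq hGC hn
          exact ⟨u, Nat.lt_of_succ_le hu.le, hyu.symm⟩

end CliqueMinors

section ConflictFreeColorings

variable {G : SimpleGraph V} {α β : Type*}

/-- The colour of some neighbour of `v` in `D` appears only once on the neighbours of `v` in
`D`. -/
def HasUniqueColorIn (G : SimpleGraph V) (φ : V → α) (D : Set V) (v : V) : Prop :=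
  ∃ u ∈ D, G.Adj v u ∧ ∀ u' ∈ D, G.Adj v u' → φ u' = φ u → u' = u

/-- Proper conflict-free colourings with colours in an arbitrary type. -/
structure IsPCFColoring (G : SimpleGraph V) (κ : V → α) : Prop where
  proper : ∀ ⦃u v⦄, G.Adj u v → κ u ≠ κ v
  unique : ∀ ⦃v u⦄, G.Adj v u → HasUniqueColorIn G κ Set.univ v

theorem conflictFree_of_hasUniqueColorIn {φ : V → ℕ}
    (h : ∀ v u, G.Adj v u → HasUniqueColorIn G φ Set.univ v) : ConflictFree G φ := by
  rintro v ⟨u, hu⟩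
  obtain ⟨x, -, hvx, hx⟩ := h v u hu
  refine ⟨φ x, Set.ncard_eq_one.2 ⟨x, Set.eq_singleton_iff_unique_mem.2 ⟨⟨hvx, rfl⟩, ?_⟩⟩⟩
  exact fun y hy => hx y trivial hy.1 hy.2

theorem IsPCFColoring.pcfColorable {t : ℕ} {κ : V → Fin t} (h : IsPCFColoring G κ) :
    PCFColorable G t := by
  refine ⟨fun v => κ v + 1, fun v => Finset.mem_Icc.2 ⟨Nat.succ_pos _, (κ v).2⟩,
    fun u v huv heq => ?_, conflictFree_of_hasUniqueColorIn fun v u hvu => ?_⟩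
  · exact h.proper huv (Fin.ext (Nat.succ.inj heq))
  · obtain ⟨x, hx, hvx, hxu⟩ := h.unique hvu
    exact ⟨x, hx, hvx, fun y hy hvy heq => hxu y hy hvy (Fin.ext (Nat.succ.inj heq))⟩

theorem PCFColorable.exists_isPCFColoring {t : ℕ} (h : PCFColorable G t) :
    ∃ κ : V → Fin t, IsPCFColoring G κ := by
  obtain ⟨φ, hφ, hproper, hcf⟩ := h
  have bounds : ∀ v, 1 ≤ φ v ∧ φ v ≤ t := fun v => Finset.mem_Icc.1 (hφ v)
  have pred_inj : ∀ {u v}, φ u - 1 = φ v - 1 → φ u = φ v := fun {u v} h => by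
    have := bounds u
    have := bounds v
    omega
  refine ⟨fun v => ⟨φ v - 1, by have := bounds v; omega⟩, fun u v huv heq => ?_, fun v u hvu => ?_⟩
  · exact hproper huv (pred_inj (Fin.ext_iff.1 heq))
  · obtain ⟨c, hc⟩ := hcf v ⟨u, hvu⟩
    obtain ⟨x, hx⟩ := Set.ncard_eq_one.1 hc
    obtain ⟨⟨hvx, rfl⟩, hxu⟩ := Set.eq_singleton_iff_unique_mem.1 hx
    exact ⟨x, trivial, hvx, fun y _ hvy heq => hxu y ⟨hvy, pred_inj (Fin.ext_iff.1 heq)⟩⟩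

theorem isPCFColoring_id : IsPCFColoring G id :=
  ⟨fun _ _ h => h.ne, fun _ u h => ⟨u, trivial, h, fun _ _ _ => id⟩⟩

theorem IsPCFColoring.comp_injective {κ : V → α} (h : IsPCFColoring G κ) {e : α → β}
    (he : Function.Injective e) : IsPCFColoring G (e ∘ κ) :=
  ⟨fun _ _ huv heq => h.proper huv (he heq), fun _ _ hvu =>
    (h.unique hvu).imp fun _ hx => ⟨hx.1, hx.2.1, fun y hy hvy heq => hx.2.2 y hy hvy (he heq)⟩⟩

theorem pcfColorable_chiPCF [Finite V] (G : SimpleGraph V) : PCFColorable G (chiPCF G) := by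
  obtain ⟨n, ⟨e⟩⟩ := Finite.exists_equiv_fin V
  exact Nat.sInf_mem (s := {t | PCFColorable G t})
    ⟨n, (isPCFColoring_id.comp_injective e.injective).pcfColorable⟩

theorem PCFColorable.mono {s t : ℕ} (hst : s ≤ t) (h : PCFColorable G s) : PCFColorable G t :=
  h.imp fun _ hφ => ⟨fun v => Finset.Icc_subset_Icc_right hst (hφ.1 v), hφ.2⟩

end ConflictFreeColorings

section MinorFreeConflictFree

variable {G : SimpleGraph V}

/-- The graph obtained from `G` by contracting, for each `v ∈ I`, the edge from `v` to its selected
neighbour `m v`, keeping only the edges that arise in this way. -/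
def selectedNeighborGraph (G : SimpleGraph V) (I : Set V) (m : V → V) : SimpleGraph ↥Iᶜ where
  Adj x y := x ≠ y ∧ ∃ v ∈ I, G.Adj v x ∧ G.Adj v y ∧ (m v = x ∨ m v = y)
  symm := ⟨fun _ _ ⟨hne, v, hv, hx, hy, hm⟩ => ⟨hne.symm, v, hv, hy, hx, hm.symm⟩⟩
  loopless := ⟨fun _ h => h.1 rfl⟩

theorem IsMinor.of_selectedNeighborGraph {H : SimpleGraph W} {I : Set V} {m : V → V}
    (h : IsMinor H (selectedNeighborGraph G I m)) : IsMinor H G := by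
  obtain ⟨ρ, hconn, hdisj, hadj⟩ := h
  let ρ' : W → Set V := fun i =>
    (↑) '' ρ i ∪ {v | v ∈ I ∧ ∃ x ∈ ρ i, m v = x ∧ G.Adj v x}
  have mem_left : ∀ {i} {x : ↥Iᶜ}, x ∈ ρ i → (x : V) ∈ ρ' i := fun hx => .inl ⟨_, hx, rfl⟩
  have mem_right : ∀ {i v} {x : ↥Iᶜ}, v ∈ I → x ∈ ρ i → m v = x → G.Adj v x → v ∈ ρ' i :=
    fun hv hx hm hvx => .inr ⟨hv, _, hx, hm, hvx⟩
  refine ⟨ρ', fun i => ?_, fun i j hij => ?_, fun i j hij => ?_⟩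
  · obtain ⟨r⟩ := (hconn i).nonempty
    have lift_walk : ∀ {a b : ρ i}, ((selectedNeighborGraph G I m).induce (ρ i)).Walk a b →
        (G.induce (ρ' i)).Reachable ⟨a, mem_left a.2⟩ ⟨b, mem_left b.2⟩ := by
      intro a b w
      induction w with
      | nil => rfl
      | @cons x y _ hxy _ ih =>
        obtain ⟨-, v, hv, hvx, hvy, hm⟩ := hxy
        have hvρ : v ∈ ρ' i := hm.elim (fun h => mem_right hv x.2 h hvx)
          fun h => mem_right hv y.2 h hvy
        exact (reachable_induce_of_adj (y := ⟨v, hvρ⟩) hvx.symm).trans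
          ((reachable_induce_of_adj hvy).trans ih)
    have reach : ∀ x (hx : x ∈ ρ i), (G.induce (ρ' i)).Reachable ⟨r, mem_left r.2⟩
        ⟨x, mem_left hx⟩ := fun x hx =>
      let ⟨w⟩ := (hconn i).preconnected r ⟨x, hx⟩
      lift_walk w
    refine (connected_iff_exists_forall_reachable _).2 ⟨⟨r, mem_left r.2⟩, ?_⟩
    rintro ⟨_, ⟨x, hx, rfl⟩ | hv⟩
    · exact reach x hx
    · obtain ⟨-, x, hx, -, hvx⟩ := id hv
      exact (reach x hx).trans (reachable_induce_of_adj hvx.symm)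
  · refine Set.disjoint_left.2 ?_
    rintro _ (⟨x, hx, rfl⟩ | ⟨hv, x, hx, hm, -⟩) (⟨y, hy, hxy⟩ | ⟨hv', y, hy, hm', -⟩)
    · exact Set.disjoint_left.1 (hdisj hij) hx (Subtype.ext hxy ▸ hy)
    · exact x.2 hv'
    · exact y.2 (hxy ▸ hv)
    · exact Set.disjoint_left.1 (hdisj hij) hx (Subtype.ext (hm.symm.trans hm') ▸ hy)
  · obtain ⟨x, hx, y, hy, -, v, hv, hvx, hvy, hm⟩ := hadj hij
    rcases hm with hm | hm
    · exact ⟨v, mem_right hv hx hm hvx, y, mem_left hy, hvy⟩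
    · exact ⟨x, mem_left hx, v, mem_right hv hy hm hvy, hvx.symm⟩

theorem exists_isPCFColoring_of_not_isMinor_top {t : ℕ}
    (h : ¬ IsMinor (⊤ : SimpleGraph (Fin t)) G) :
    ∃ κ : V → Fin (2 ^ t) × (Fin (2 ^ t) → Fin (2 ^ t)), IsPCFColoring G κ := by
  classical
  obtain ⟨c⟩ := colorable_of_not_isMinor_top h
  choose! m hm using fun v => show (∃ u, G.Adj v u) → ∃ u, G.Adj v u from id
  have θ : ∀ i, (selectedNeighborGraph G (c ⁻¹' {i}) m).Coloring (Fin (2 ^ t)) := fun i =>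
    (colorable_of_not_isMinor_top fun h' => h h'.of_selectedNeighborGraph).some
  refine ⟨fun v => (c v, fun i => if hv : c v ≠ i then θ i ⟨v, hv⟩ else i),
    fun u v huv heq => c.valid huv (congrArg Prod.fst heq), fun v u hvu => ?_⟩
  have hvm := hm v ⟨u, hvu⟩
  refine ⟨m v, trivial, hvm, fun u' _ hvu' heq => by_contra fun hne => ?_⟩
  have hθ := congrFun (congrArg Prod.snd heq) (c v)
  simp only [dif_pos (c.valid hvm).symm, dif_pos (c.valid hvu').symm] at hθ
  exact (θ (c v)).valid ⟨fun h => hne (congrArg Subtype.val h), v, rfl, hvu', hvm, .inr rfl⟩ hθ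

end MinorFreeConflictFree

section Extensions

variable {G : SimpleGraph V} {α β : Type*}

/-- `φ` extends the precolouring `ψ` of `W` to a colouring of `D` that is proper and conflict-free
at the new vertices, and in which no new neighbour of `w ∈ W` receives the forbidden colour `f w`.
The precolouring itself need not be proper. -/
structure IsPCFExtension (G : SimpleGraph V) (D W : Set V) (ψ f φ : V → α) : Prop where
  eqOn : Set.EqOn φ ψ W
  proper : ∀ u ∈ D, ∀ v ∈ D \ W, G.Adj u v → φ u ≠ φ v
  unique : ∀ v ∈ D \ W, (∃ u ∈ D \ W, G.Adj v u) → HasUniqueColorIn G φ D v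
  avoid : ∀ w ∈ W, ∀ u ∈ D \ W, G.Adj w u → φ u ≠ f w

/-- Every precolouring of `W`, with any assignment of forbidden colours, extends to `D`. -/
def IsPCFExtendable (α : Type*) (G : SimpleGraph V) (D W : Set V) : Prop :=
  ∀ ψ f : V → α, ∃ φ, IsPCFExtension G D W ψ f φ

theorem IsPCFExtension.isPCFColoring {ψ f φ : V → α} (h : IsPCFExtension G Set.univ ∅ ψ f φ) :
    IsPCFColoring G φ :=
  ⟨fun u v => h.proper u trivial v ⟨trivial, id⟩,
    fun v u hvu => h.unique v ⟨trivial, id⟩ ⟨u, ⟨trivial, id⟩, hvu⟩⟩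

theorem IsPCFExtendable.of_induce {D W : Set V} (hWD : W ⊆ D)
    (h : IsPCFExtendable α (G.induce D) Set.univ ((↑) ⁻¹' W)) : IsPCFExtendable α G D W := by
  intro ψ f
  obtain ⟨φ', hφ'⟩ := h (ψ ∘ (↑)) (f ∘ (↑))
  let φ : V → α := Function.extend (↑) φ' ψ
  have φ_coe : ∀ x : D, φ x = φ' x := Subtype.val_injective.extend_apply φ' ψ
  refine ⟨φ, fun w hw => ?_, fun u hu v hv huv => ?_, fun v hv => ?_, fun w hw u hu hwu => ?_⟩
  · exact (φ_coe ⟨w, hWD hw⟩).trans (hφ'.eqOn hw)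
  · rw [φ_coe ⟨u, hu⟩, φ_coe ⟨v, hv.1⟩]
    exact hφ'.proper _ trivial _ ⟨trivial, hv.2⟩ huv
  · rintro ⟨u, hu, hvu⟩
    obtain ⟨x, -, hvx, hx⟩ := hφ'.unique ⟨v, hv.1⟩ ⟨trivial, hv.2⟩ ⟨⟨u, hu.1⟩, ⟨trivial, hu.2⟩, hvu⟩
    refine ⟨x, x.2, hvx, fun y hy hvy heq => ?_⟩
    rw [φ_coe x, φ_coe ⟨y, hy⟩] at heq
    exact congrArg Subtype.val (hx ⟨y, hy⟩ trivial hvy heq)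
  · rw [φ_coe ⟨u, hu.1⟩]
    exact hφ'.avoid ⟨w, hWD hw⟩ hw ⟨u, hu.1⟩ ⟨trivial, hu.2⟩ hwu

theorem exists_injective_notMem [Fintype α] [Fintype β] {s : Finset α}
    (h : Fintype.card β + s.card ≤ Fintype.card α) :
    ∃ e : β → α, Function.Injective e ∧ ∀ b, e b ∉ s := by
  classical
  have hcard : Fintype.card β ≤ Fintype.card ↥sᶜ := by
    rw [Fintype.card_coe, Finset.card_compl]
    omega
  obtain ⟨e⟩ := Function.Embedding.nonempty_of_card_le hcard
  exact ⟨fun b => e b, Subtype.val_injective.comp e.injective, fun b => Finset.mem_compl.1 (e b).2⟩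

theorem exists_injective_ne_on [Finite V] [Fintype α] [Fintype β] {W : Set V} (ψ f : V → α)
    (hcard : Fintype.card β + 2 * W.ncard ≤ Fintype.card α) :
    ∃ e : β → α, Function.Injective e ∧ ∀ b, ∀ w ∈ W, e b ≠ ψ w ∧ e b ≠ f w := by
  classical
  have : Fintype W := Fintype.ofFinite W
  obtain ⟨e, he, he_notMem⟩ := exists_injective_notMem (β := β)
    (s := W.toFinset.image ψ ∪ W.toFinset.image f) <| by
      have := Finset.card_union_le (W.toFinset.image ψ) (W.toFinset.image f)
      have := Finset.card_image_le (s := W.toFinset) (f := ψ)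
      have := Finset.card_image_le (s := W.toFinset) (f := f)
      rw [← Set.ncard_eq_toFinset_card'] at *
      omega
  refine ⟨e, he, fun b w hw => ?_⟩
  have hwW := Set.mem_toFinset.2 hw
  exact ⟨fun h => he_notMem b (Finset.mem_union_left _ (Finset.mem_image.2 ⟨w, hwW, h.symm⟩)),
    fun h => he_notMem b (Finset.mem_union_right _ (Finset.mem_image.2 ⟨w, hwW, h.symm⟩))⟩

theorem isPCFExtendable_univ_of_isPCFColoring [Finite V] [Fintype α] [Fintype β] {W : Set V}
    (hcard : Fintype.card β + 2 * W.ncard ≤ Fintype.card α) {κ : ↥Wᶜ → β}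
    (hκ : IsPCFColoring (G.induce Wᶜ) κ) : IsPCFExtendable α G Set.univ W := by
  classical
  intro ψ f
  obtain ⟨e, he, he_ne⟩ := exists_injective_ne_on (β := β) ψ f hcard
  let φ : V → α := fun v => if hv : v ∈ W then ψ v else e (κ ⟨v, hv⟩)
  have φ_old : ∀ v ∈ W, φ v = ψ v := fun v hv => dif_pos hv
  have φ_new : ∀ v (hv : v ∉ W), φ v = e (κ ⟨v, hv⟩) := fun v hv => dif_neg hv
  refine ⟨φ, φ_old, ?_, ?_, ?_⟩
  · rintro u - v ⟨-, hv⟩ huv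
    rw [φ_new v hv]
    by_cases hu : u ∈ W
    · exact φ_old u hu ▸ (he_ne _ u hu).1.symm
    · exact φ_new u hu ▸ he.ne (hκ.proper (show (G.induce Wᶜ).Adj ⟨u, hu⟩ ⟨v, hv⟩ from huv))
  · rintro v ⟨-, hv⟩ ⟨u, ⟨-, hu⟩, hvu⟩
    obtain ⟨x, -, hvx, hx⟩ := hκ.unique (show (G.induce Wᶜ).Adj ⟨v, hv⟩ ⟨u, hu⟩ from hvu)
    refine ⟨x, trivial, hvx, fun y _ hvy heq => ?_⟩
    rw [φ_new x x.2] at heq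
    by_cases hy : y ∈ W
    · exact absurd (heq.symm.trans (φ_old y hy)) (he_ne _ y hy).1
    · exact congrArg Subtype.val (hx ⟨y, hy⟩ trivial hvy (he (φ_new y hy ▸ heq)))
  · rintro w hw u ⟨-, hu⟩ -
    exact φ_new u hu ▸ (he_ne _ w hw).2

end Extensions

section PendantPieces

variable {G : SimpleGraph V} {Y B A Z X : Set V} {s : ℕ}

/-- `A` is a union of components of `G - (Y ∪ B)` attached to `B` only through `Z`, which contains
at most one vertex. -/
structure IsPendantPiece (G : SimpleGraph V) (Y B A Z : Set V) : Prop where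
  subsingleton : Z.Subsingleton
  subset : Z ⊆ B
  disjoint : Disjoint A (Y ∪ B)
  mem_of_adj : ∀ ⦃a w⦄, a ∈ A → G.Adj a w → w ∈ A ∪ Y ∪ Z

theorem IsPendantPiece.induce (h : IsPendantPiece G Y B A Z) (S : Set V) :
    IsPendantPiece (G.induce S) ((↑) ⁻¹' Y) ((↑) ⁻¹' B) ((↑) ⁻¹' A) ((↑) ⁻¹' Z) :=
  ⟨h.subsingleton.preimage Subtype.val_injective, fun _ hz => h.subset hz, h.disjoint.preimage _,
    fun _ _ ha haw => h.mem_of_adj ha haw⟩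

theorem IsPendantPiece.mem_of_adj_of_notMem (h : IsPendantPiece G Y B A Z) {a w : V} (ha : a ∈ A)
    (haw : G.Adj a w) (hw : w ∉ Y ∪ B) : w ∈ A := by
  rcases h.mem_of_adj ha haw with (hwA | hwY) | hwZ
  · exact hwA
  · exact absurd (.inl hwY) hw
  · exact absurd (.inr (h.subset hwZ)) hw

theorem IsPendantPiece.eq_of_adj (h : IsPendantPiece G Y B A Z) (hYB : Disjoint Y B)
    {a a' z z' : V} (ha : a ∈ A) (ha' : a' ∈ A) (hz : z ∈ B) (hz' : z' ∈ B) (haz : G.Adj a z)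
    (haz' : G.Adj a' z') : z = z' := by
  have attached : ∀ {a z}, a ∈ A → z ∈ B → G.Adj a z → z ∈ Z := fun ha hz haz => by
    rcases h.mem_of_adj ha haz with (hzA | hzY) | hzZ
    · exact absurd (.inr hz) (Set.disjoint_left.1 h.disjoint hzA)
    · exact absurd hz (Set.disjoint_left.1 hYB hzY)
    · exact hzZ
  exact h.subsingleton (attached ha hz haz) (attached ha' hz' haz')

theorem IsPendantPiece.mem_of_reachable (h : IsPendantPiece G Y B A Z) {u v : ↥(Y ∪ B)ᶜ}
    (hu : (u : V) ∈ A) (huv : (G.induce (Y ∪ B)ᶜ).Reachable u v) : (v : V) ∈ A := by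
  obtain ⟨w⟩ := huv
  induction w with
  | nil => exact hu
  | @cons _ b _ hab _ ih => exact ih (h.mem_of_adj_of_notMem hu hab b.2)

theorem exists_coloring_injOn_components [Finite V]
    (h : ∀ v, {u | G.Reachable v u}.ncard ≤ s) :
    ∃ p : V → Fin s, ∀ u v, G.Reachable u v → p u = p v → u = v := by
  classical
  have embed : ∀ C : G.ConnectedComponent, ∃ e : C.supp → Fin s, Function.Injective e := fun C => by
    have := Fintype.ofFinite C.supp
    induction C using ConnectedComponent.ind with | h v => ?_
    have hcard : (G.connectedComponentMk v).supp.ncard ≤ s :=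
      (Set.ncard_le_ncard fun u hu => (ConnectedComponent.exact hu).symm).trans (h v)
    rw [← Nat.card_coe_set_eq, Nat.card_eq_fintype_card, ← Fintype.card_fin s] at hcard
    obtain ⟨e⟩ := Function.Embedding.nonempty_of_card_le hcard
    exact ⟨e, e.injective⟩
  choose e he using embed
  refine ⟨fun v => e (G.connectedComponentMk v) ⟨v, rfl⟩, fun u v huv heq => ?_⟩
  have transport : ∀ {C}, C = G.connectedComponentMk v → ∀ hu : u ∈ C.supp,
      e C ⟨u, hu⟩ = e (G.connectedComponentMk v) ⟨v, rfl⟩ → u = v := by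
    rintro _ rfl hu heq
    exact congrArg Subtype.val (he _ heq)
  exact transport (ConnectedComponent.sound huv) rfl heq

theorem exists_coloring_injOn_components_of_pendantPieces [Finite V]
    (hpiece : ∀ v ∉ Y ∪ B, ∃ A Z, v ∈ A ∧ IsPendantPiece G Y B A Z ∧ A.ncard ≤ s) :
    ∃ p : ↥(Y ∪ B)ᶜ → Fin s, ∀ u v, (G.induce (Y ∪ B)ᶜ).Reachable u v → p u = p v → u = v := by
  refine exists_coloring_injOn_components fun v => ?_
  obtain ⟨A, Z, hvA, hA, hAs⟩ := hpiece v v.2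
  rw [← Set.ncard_image_of_injective _ Subtype.val_injective]
  refine (Set.ncard_le_ncard ?_).trans hAs
  rintro _ ⟨u, hu, rfl⟩
  exact hA.mem_of_reachable hvA hu

theorem exists_coloring_of_pendantPieces [Finite V] (hYB : Disjoint Y B) (hYX : Y ⊆ X)
    (hpiece : ∀ v ∉ Y ∪ B, ∃ A Z, v ∈ A ∧ IsPendantPiece G Y B A Z ∧ A.ncard ≤ s) :
    ∃ q : V → Option (Fin s),
      (∀ u ∉ X ∪ B, ∀ v ∉ X ∪ B, G.Adj u v → q u ≠ q v) ∧
      ∀ v ∉ Y, ∀ u ∉ X ∪ B, G.Adj v u → HasUniqueColorIn G q (X ∪ B)ᶜ v := by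
  classical
  obtain ⟨p, hp⟩ := exists_coloring_injOn_components_of_pendantPieces hpiece
  choose! g hg using fun z => show (∃ u, u ∉ X ∪ B ∧ G.Adj z u) → ∃ u, u ∉ X ∪ B ∧ G.Adj z u
    from id
  -- The colour `none` marks one outside neighbour of each vertex of `B`; two marked vertices of
  -- the same piece would have the same attachment in `B`.
  let marked : Set V := {v | ∃ z ∈ B, G.Adj z v ∧ g z = v}
  let q : V → Option (Fin s) := fun v =>
    if hv : v ∉ Y ∪ B ∧ v ∉ marked then some (p ⟨v, hv.1⟩) else none
  have notMem : ∀ {v}, v ∉ X ∪ B → v ∉ Y ∪ B := fun hv h => hv (h.imp_left (@hYX _))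
  have marked_of_eq_none : ∀ {v}, v ∉ Y ∪ B → q v = none → v ∈ marked := fun {v} hv h =>
    by_contra fun h' => Option.some_ne_none _ ((dif_pos ⟨hv, h'⟩).symm.trans h)
  have q_eq_none : ∀ {v}, v ∈ marked → q v = none := fun hv => dif_neg fun h => h.2 hv
  have q_inj : ∀ {u v} (hu : u ∉ X ∪ B) (hv : v ∉ X ∪ B),
      (G.induce (Y ∪ B)ᶜ).Reachable ⟨u, notMem hu⟩ ⟨v, notMem hv⟩ → q u = q v → u = v := by
    intro u v hu hv huv heq
    by_cases hmu : u ∈ marked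
    · have hmv := marked_of_eq_none (notMem hv) (heq ▸ q_eq_none hmu)
      obtain ⟨A, Z, huA, hA, -⟩ := hpiece u (notMem hu)
      obtain ⟨z, hz, hzu, rfl⟩ := hmu
      obtain ⟨z', hz', hzv, rfl⟩ := hmv
      rw [hA.eq_of_adj hYB huA (hA.mem_of_reachable huA huv) hz hz' hzu.symm hzv.symm]
    · have hmv : v ∉ marked := fun h => hmu (marked_of_eq_none (notMem hu) (heq ▸ q_eq_none h))
      simp only [q, dif_pos (And.intro (notMem hu) hmu), dif_pos (And.intro (notMem hv) hmv),
        Option.some.injEq] at heq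
      exact congrArg Subtype.val (hp _ _ huv heq)
  refine ⟨q, fun u hu v hv huv heq => ?_, fun v hv u hu hvu => ?_⟩
  · exact huv.ne (q_inj hu hv (reachable_induce_of_adj huv) heq)
  by_cases hvB : v ∈ B
  · obtain ⟨hgX, hvg⟩ := hg v ⟨u, hu, hvu⟩
    refine ⟨g v, hgX, hvg, fun u' hu' hvu' heq => ?_⟩
    obtain ⟨z, hz, hzu', rfl⟩ :=
      marked_of_eq_none (notMem hu') (heq.trans (q_eq_none ⟨v, hvB, hvg, rfl⟩))
    obtain ⟨A, Z, huA, hA, -⟩ := hpiece _ (notMem hu')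
    rw [hA.eq_of_adj hYB huA huA hz hvB hzu'.symm hvu'.symm]
  · have hvYB : v ∉ Y ∪ B := fun h => h.elim hv hvB
    exact ⟨u, hu, hvu, fun u' hu' hvu' heq => q_inj hu' hu
      ((reachable_induce_of_adj (y := ⟨v, hvYB⟩) hvu'.symm).trans (reachable_induce_of_adj hvu))
      heq⟩

open Classical in
/-- The colouring that uses `e` on `X`, `θ` on `B \ X` and `q` elsewhere, on disjoint palettes. -/
noncomputable def stackColoring {γ β δ : Type*} (e : X → γ) (θ : B → β) (q : V → δ) (v : V) :
    γ ⊕ β ⊕ δ :=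
  if hX : v ∈ X then .inl (e ⟨v, hX⟩)
  else if hB : v ∈ B then .inr (.inl (θ ⟨v, hB⟩)) else .inr (.inr (q v))

section StackColoring

variable {γ β δ : Type*} {e : X → γ} {θ : B → β} {q : V → δ} {u v : V}

theorem eq_of_stackColoring_eq (he : Function.Injective e) (hv : v ∈ X)
    (h : stackColoring e θ q u = stackColoring e θ q v) : u = v := by
  unfold stackColoring at h
  rw [dif_pos hv] at h
  by_cases hu : u ∈ X
  · rw [dif_pos hu] at h
    exact congrArg Subtype.val (he (Sum.inl.inj h))
  · rw [dif_neg hu] at h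
    split_ifs at h

theorem stackColoring_eq_of_mem (hvX : v ∉ X) (hv : v ∈ B)
    (h : stackColoring e θ q u = stackColoring e θ q v) :
    ∃ hu : u ∈ B, θ ⟨u, hu⟩ = θ ⟨v, hv⟩ := by
  unfold stackColoring at h
  rw [dif_neg hvX, dif_pos hv] at h
  by_cases huX : u ∈ X
  · rw [dif_pos huX] at h
    cases h
  by_cases hu : u ∈ B
  · rw [dif_neg huX, dif_pos hu] at h
    exact ⟨hu, Sum.inl.inj (Sum.inr.inj h)⟩
  · rw [dif_neg huX, dif_neg hu] at h
    cases h

theorem stackColoring_eq_of_notMem (hv : v ∉ X ∪ B)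
    (h : stackColoring e θ q u = stackColoring e θ q v) : u ∉ X ∪ B ∧ q u = q v := by
  obtain ⟨hvX, hvB⟩ := not_or.1 hv
  unfold stackColoring at h
  rw [dif_neg hvX, dif_neg hvB] at h
  by_cases huX : u ∈ X
  · rw [dif_pos huX] at h
    cases h
  by_cases hu : u ∈ B
  · rw [dif_neg huX, dif_pos hu] at h
    cases h
  · rw [dif_neg huX, dif_neg hu] at h
    exact ⟨not_or.2 ⟨huX, hu⟩, Sum.inr.inj (Sum.inr.inj h)⟩

theorem stackColoring_ne_of_adj (he : Function.Injective e)
    (hθ : ∀ ⦃a b⦄, (G.induce B).Adj a b → θ a ≠ θ b)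
    (hq : ∀ u ∉ X ∪ B, ∀ v ∉ X ∪ B, G.Adj u v → q u ≠ q v) (huv : G.Adj u v) :
    stackColoring e θ q u ≠ stackColoring e θ q v := by
  intro heq
  by_cases hvX : v ∈ X
  · exact huv.ne (eq_of_stackColoring_eq he hvX heq)
  by_cases hvB : v ∈ B
  · obtain ⟨huB, hθuv⟩ := stackColoring_eq_of_mem hvX hvB heq
    exact hθ (show (G.induce B).Adj ⟨u, huB⟩ ⟨v, hvB⟩ from huv) hθuv
  · have hv : v ∉ X ∪ B := not_or.2 ⟨hvX, hvB⟩
    obtain ⟨hu, hquv⟩ := stackColoring_eq_of_notMem hv heq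
    exact hq u hu v hv huv hquv

end StackColoring

theorem exists_isPCFColoring_of_pendantPieces [Finite V] {β : Type*} {y : ℕ}
    (hYB : Disjoint Y B) (hy : 2 * Y.ncard ≤ y) {θ : B → β} (hθ : IsPCFColoring (G.induce B) θ)
    (hpiece : ∀ v ∉ Y ∪ B, ∃ A Z, v ∈ A ∧ IsPendantPiece G Y B A Z ∧ A.ncard ≤ s) :
    ∃ κ : V → Fin y ⊕ β ⊕ Option (Fin s), IsPCFColoring G κ := by
  choose! g hg using fun v => show (∃ u, G.Adj v u) → ∃ u, G.Adj v u from id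
  let X : Set V := Y ∪ g '' Y
  obtain ⟨q, hq_proper, hq_unique⟩ := exists_coloring_of_pendantPieces hYB
    (Set.subset_union_left : Y ⊆ X) hpiece
  obtain ⟨e⟩ : Nonempty (X ↪ Fin y) := by
    have hX : X.ncard ≤ Y.ncard + (g '' Y).ncard := Set.ncard_union_le Y (g '' Y)
    have hgY : (g '' Y).ncard ≤ Y.ncard := Set.ncard_image_le Y.toFinite
    have := Fintype.ofFinite X
    rw [← Nat.card_coe_set_eq, Nat.card_eq_fintype_card] at hX
    exact Function.Embedding.nonempty_of_card_le (by rw [Fintype.card_fin]; omega)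
  refine ⟨stackColoring e θ q,
    fun _ _ huv => stackColoring_ne_of_adj e.injective hθ.proper hq_proper huv, fun v u hvu => ?_⟩
  by_cases hX : ∃ x ∈ X, G.Adj v x
  · obtain ⟨x, hx, hvx⟩ := hX
    exact ⟨x, trivial, hvx, fun _ _ _ => eq_of_stackColoring_eq e.injective hx⟩
  have hvY : v ∉ Y := fun hv => hX ⟨g v, .inr ⟨v, hv, rfl⟩, hg v ⟨u, hvu⟩⟩
  by_cases hq : ∃ x ∉ X ∪ B, G.Adj v x
  · obtain ⟨x, hx, hvx⟩ := hq
    obtain ⟨x, hx, hvx, hxu⟩ := hq_unique v hvY x hx hvx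
    refine ⟨x, trivial, hvx, fun x' _ hvx' heq => ?_⟩
    obtain ⟨hx', hq⟩ := stackColoring_eq_of_notMem hx heq
    exact hxu x' hx' hvx' hq
  have adj_B : ∀ {x}, G.Adj v x → x ∈ B := fun {x} hvx => by_contra fun hxB =>
    hq ⟨x, not_or.2 ⟨fun hxX => hX ⟨x, hxX, hvx⟩, hxB⟩, hvx⟩
  have notMem_X : ∀ {x}, G.Adj v x → x ∉ X := fun hvx hx => hX ⟨_, hx, hvx⟩
  by_cases hvB : v ∈ B
  · obtain ⟨x, -, hvx, hxu⟩ := hθ.unique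
      (show (G.induce B).Adj ⟨v, hvB⟩ ⟨u, adj_B hvu⟩ from hvu)
    refine ⟨x, trivial, hvx, fun x' _ hvx' heq => ?_⟩
    obtain ⟨hx'B, hθx⟩ := stackColoring_eq_of_mem (notMem_X hvx) x.2 heq
    exact congrArg Subtype.val (hxu ⟨x', hx'B⟩ trivial hvx' hθx)
  · obtain ⟨A, Z, hvA, hA, -⟩ := hpiece v (not_or.2 ⟨hvY, hvB⟩)
    exact ⟨u, trivial, hvu, fun u' _ hvu' _ =>
      hA.eq_of_adj hYB hvA hvA (adj_B hvu') (adj_B hvu) hvu' hvu⟩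

end PendantPieces

section Separations

variable {G : SimpleGraph V} {α : Type*} {A S B W Z R : Set V} {ψ f φA φB φ : V → α} {q : V → V}

/-- `S` separates `A` from `B`, the three sets partitioning the vertices. -/
structure IsSeparation (G : SimpleGraph V) (A S B : Set V) : Prop where
  cover : ∀ v, v ∈ A ∨ v ∈ S ∨ v ∈ B
  disjoint_left : Disjoint A S
  disjoint : Disjoint A B
  disjoint_right : Disjoint B S
  not_adj : ∀ ⦃x⦄, x ∈ A → ∀ ⦃y⦄, y ∈ B → ¬ G.Adj x y

theorem IsSeparation.symm (h : IsSeparation G A S B) : IsSeparation G B S A :=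
  ⟨fun v => (h.cover v).elim (.inr ∘ .inr) (·.elim (.inr ∘ .inl) .inl), h.disjoint_right,
    h.disjoint.symm, h.disjoint_left, fun _ hx _ hy hxy => h.not_adj hy hx hxy.symm⟩

theorem IsSeparation.mem_of_adj_right (h : IsSeparation G A S B) {v u : V} (hv : v ∈ B)
    (hvu : G.Adj v u) : u ∈ B ∪ S :=
  (h.cover u).elim (fun hu => absurd hvu.symm (h.not_adj hu hv)) Or.symm

/-- A core of the separation `(A, S, B)` relative to the precoloured set `W`: a set `Z` containing
`S` and `W ∩ B` that decides which vertices still need a uniquely coloured neighbour, and a set `R`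
representing, up to twins, the vertices of `B \ Z` whose neighbours all lie in `Z`. -/
structure IsCore (G : SimpleGraph V) (A S B W Z R : Set V) : Prop extends IsSeparation G A S B where
  separator_subset : S ⊆ Z
  subset_union : Z ⊆ B ∪ S
  inter_subset : W ∩ B ⊆ Z
  exists_adj : ∀ ⦃z⦄, z ∈ Z \ W → ∀ ⦃u⦄, u ∉ W → G.Adj z u → ∃ u' ∈ (A ∪ Z) \ W, G.Adj z u'
  reps_subset : R ⊆ B \ Z
  neighborSet_subset : ∀ ⦃r⦄, r ∈ R → G.neighborSet r ⊆ Z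
  exists_twin : ∀ ⦃v⦄, v ∈ B \ Z → G.neighborSet v ⊆ Z → ∃ r ∈ R, G.neighborSet r = G.neighborSet v

theorem exists_twin_reps [Finite V] (G : SimpleGraph V) (P Z : Set V) :
    ∃ R ⊆ P, (∀ r ∈ R, G.neighborSet r ⊆ Z) ∧ R.ncard ≤ 2 ^ Z.ncard ∧
      ∀ v ∈ P, G.neighborSet v ⊆ Z → ∃ r ∈ R, G.neighborSet r = G.neighborSet v := by
  obtain ⟨R, hR, hbij⟩ := Set.exists_subset_bijOn {v ∈ P | G.neighborSet v ⊆ Z} G.neighborSet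
  refine ⟨R, fun r hr => (hR hr).1, fun r hr => (hR hr).2, ?_, fun v hv hvZ => ?_⟩
  · rw [← Set.ncard_powerset Z]
    exact Set.ncard_le_ncard_of_injOn _ (fun r hr => (hR hr).2) hbij.injOn
  · obtain ⟨r, hr, hrv⟩ := hbij.surjOn ⟨v, ⟨hv, hvZ⟩, rfl⟩
    exact ⟨r, hr, hrv⟩

theorem IsSeparation.exists_isCore [Finite V] (h : IsSeparation G A S B) (W : Set V) :
    ∃ Z R, IsCore G A S B W Z R ∧ (Z \ W).ncard ≤ 2 * S.ncard ∧
      Z.ncard ≤ 2 * S.ncard + (W ∩ B).ncard ∧ R.ncard ≤ 2 ^ Z.ncard := by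
  choose! g hg using fun x => show (∃ u ∈ B \ W, G.Adj x u) → ∃ u ∈ B \ W, G.Adj x u from id
  let T : Set V := {x ∈ S \ W | ∃ u ∈ B \ W, G.Adj x u}
  let Z : Set V := S ∪ g '' T ∪ (W ∩ B)
  have hcard : (S ∪ g '' T).ncard ≤ 2 * S.ncard := by
    have := Set.ncard_union_le S (g '' T)
    have := Set.ncard_image_le (f := g) T.toFinite
    have := Set.ncard_le_ncard (s := T) (t := S) fun x hx => hx.1.1
    omega
  obtain ⟨R, hRB, hRZ, hR, htwin⟩ := exists_twin_reps G (B \ Z) Z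
  refine ⟨Z, R, ⟨h, fun x hx => .inl (.inl hx), ?_, fun x hx => .inr hx, ?_, hRB, hRZ, htwin⟩,
    (Set.ncard_le_ncard ?_).trans hcard, (Set.ncard_union_le _ _).trans (by omega), hR⟩
  · rintro _ ((hx | ⟨x, hx, rfl⟩) | hx)
    exacts [.inr hx, .inl (hg x hx.2).1.1, .inl hx.2]
  · rintro z ⟨(hz | ⟨x, hx, rfl⟩) | hz, hzW⟩ u hu hzu
    · rcases h.cover u with huA | huS | huB
      · exact ⟨u, ⟨.inl huA, hu⟩, hzu⟩
      · exact ⟨u, ⟨.inr (.inl (.inl huS)), hu⟩, hzu⟩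
      · have hex : ∃ u ∈ B \ W, G.Adj z u := ⟨u, ⟨huB, hu⟩, hzu⟩
        exact ⟨g z, ⟨.inr (.inl (.inr ⟨z, ⟨⟨hz, hzW⟩, hex⟩, rfl⟩)), (hg z hex).1.2⟩, (hg z hex).2⟩
    · exact ⟨x, ⟨.inr (.inl (.inl hx.1.1)), hx.1.2⟩, (hg x hx.2).2.symm⟩
    · exact absurd hz.1 hzW
  · exact fun x hx => hx.1.elim id fun hxW => absurd hxW.1 hx.2

/-- The set on which the colouring of the `B`-side is prescribed: the core and those twin
representatives that carry the unique colour `q z` of a new core vertex `z`. -/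
def interfaceSet (W Z R : Set V) (q : V → V) : Set V :=
  Z ∪ R ∩ q '' (Z \ W)

theorem union_interfaceSet_subset : A ∪ interfaceSet W Z R q ⊆ A ∪ Z ∪ R := fun _ hv =>
  hv.elim (.inl ∘ .inl) (·.elim (.inl ∘ .inr) (.inr ∘ And.left))

/-- Data for gluing an extension `φA` on the `A`-side to an extension `φB` on the `B`-side. The
second one must keep the colour of `q z` unique at each new core vertex `z`, which is arranged
through forbidden colours. -/
structure IsGluing (G : SimpleGraph V) (A S B W Z R : Set V) (ψ f φA φB φ : V → α) (q : V → V) :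
    Prop extends IsCore G A S B W Z R where
  left : IsPCFExtension G (A ∪ Z ∪ R) W ψ f φA
  holder : ∀ ⦃z⦄, z ∈ Z \ W → (∃ u ∈ (A ∪ Z ∪ R) \ W, G.Adj z u) → q z ∈ A ∪ Z ∪ R ∧
    G.Adj z (q z) ∧ ∀ u ∈ A ∪ Z ∪ R, G.Adj z u → φA u = φA (q z) → u = q z
  right : ∃ f', (∀ w ∈ W, f' w = f w) ∧ (∀ w ∉ W, f' w = φA (q w)) ∧
    IsPCFExtension G (B ∪ S) (interfaceSet W Z R q) φA f' φB
  eqOn_left : ∀ v ∉ B, φ v = φA v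
  eqOn_right : ∀ v ∈ B, φ v = φB v

namespace IsGluing

variable (h : IsGluing G A S B W Z R ψ f φA φB φ q)

include h

theorem eq_left {v : V} (hv : v ∈ A ∪ interfaceSet W Z R q) : φ v = φA v := by
  by_cases hvB : v ∈ B
  · obtain ⟨f', -, -, hright⟩ := h.right
    exact (h.eqOn_right v hvB).trans
      (hright.eqOn (hv.resolve_left fun hvA => Set.disjoint_left.1 h.disjoint hvA hvB))
  · exact h.eqOn_left v hvB

theorem eq_right {v : V} (hv : v ∈ B ∪ S) : φ v = φB v := by
  obtain ⟨f', -, -, hright⟩ := h.right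
  rcases hv with hvB | hvS
  · exact h.eqOn_right v hvB
  · have hvI : v ∈ interfaceSet W Z R q := .inl (h.separator_subset hvS)
    exact (h.eq_left (.inr hvI)).trans (hright.eqOn hvI).symm

theorem mem_left_or_right (v : V) :
    v ∈ A ∪ interfaceSet W Z R q ∨ v ∈ B \ interfaceSet W Z R q := by
  by_cases hv : v ∈ interfaceSet W Z R q
  · exact .inl (.inr hv)
  · rcases h.cover v with hvA | hvS | hvB
    · exact .inl (.inl hvA)
    · exact absurd (.inl (h.separator_subset hvS)) hv
    · exact .inr ⟨hvB, hv⟩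

theorem mem_union_of_mem {w : V} (hw : w ∈ W) : w ∈ A ∪ Z := by
  rcases h.cover w with hwA | hwS | hwB
  exacts [.inl hwA, .inr (h.separator_subset hwS), .inr (h.inter_subset ⟨hw, hwB⟩)]

theorem proper {u v : V} (hv : v ∉ W) (huv : G.Adj u v) : φ u ≠ φ v := by
  obtain ⟨f', -, -, hright⟩ := h.right
  rcases h.mem_left_or_right v with hvl | hvr
  · rcases h.mem_left_or_right u with hul | hur
    · rw [h.eq_left hul, h.eq_left hvl]
      exact h.left.proper u (union_interfaceSet_subset hul) v
        ⟨union_interfaceSet_subset hvl, hv⟩ huv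
    · have hvB := h.mem_of_adj_right hur.1 huv
      rw [h.eq_right (.inl hur.1), h.eq_right hvB]
      exact (hright.proper v hvB u ⟨.inl hur.1, hur.2⟩ huv.symm).symm
  · have huB := h.mem_of_adj_right hvr.1 huv.symm
    rw [h.eq_right huB, h.eq_right (.inl hvr.1)]
    exact hright.proper u huB v ⟨.inl hvr.1, hvr.2⟩ huv

theorem avoid {w u : V} (hw : w ∈ W) (hu : u ∉ W) (hwu : G.Adj w u) : φ u ≠ f w := by
  obtain ⟨f', hf', -, hright⟩ := h.right
  rcases h.mem_left_or_right u with hul | hur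
  · rw [h.eq_left hul]
    exact h.left.avoid w hw u ⟨union_interfaceSet_subset hul, hu⟩ hwu
  · rw [h.eq_right (.inl hur.1), ← hf' w hw]
    have hwZ : w ∈ Z := (h.mem_union_of_mem hw).resolve_left fun hwA => h.not_adj hwA hur.1 hwu
    exact hright.avoid w (.inl hwZ) u ⟨.inl hur.1, hur.2⟩ hwu

theorem unique_of_mem_left {v u : V} (hv : v ∈ A \ W) (hu : u ∉ W) (hvu : G.Adj v u) :
    HasUniqueColorIn G φ Set.univ v := by
  have adj_left : ∀ {x}, G.Adj v x → x ∈ A ∪ interfaceSet W Z R q := fun hvx =>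
    (h.symm.mem_of_adj_right hv.1 hvx).imp_right fun hxS => .inl (h.separator_subset hxS)
  obtain ⟨x, -, hvx, hx⟩ := h.left.unique v ⟨.inl (.inl hv.1), hv.2⟩
    ⟨u, ⟨union_interfaceSet_subset (adj_left hvu), hu⟩, hvu⟩
  refine ⟨x, trivial, hvx, fun y _ hvy heq =>
    hx y (union_interfaceSet_subset (adj_left hvy)) hvy ?_⟩
  rwa [h.eq_left (adj_left hvy), h.eq_left (adj_left hvx)] at heq

theorem unique_of_mem_core {v u : V} (hv : v ∈ Z \ W) (hu : u ∉ W) (hvu : G.Adj v u) :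
    HasUniqueColorIn G φ Set.univ v := by
  obtain ⟨f', -, hf', hright⟩ := h.right
  obtain ⟨u', hu', hvu'⟩ := h.exists_adj hv hu hvu
  obtain ⟨hq, hvq, hq_unique⟩ := h.holder hv ⟨u', ⟨.inl hu'.1, hu'.2⟩, hvu'⟩
  have hql : q v ∈ A ∪ interfaceSet W Z R q := by
    rcases hq with (hqA | hqZ) | hqR
    exacts [.inl hqA, .inr (.inl hqZ), .inr (.inr ⟨hqR, v, hv, rfl⟩)]
  refine ⟨q v, trivial, hvq, fun y _ hvy heq => ?_⟩
  rw [h.eq_left hql] at heq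
  rcases h.mem_left_or_right y with hyl | hyr
  · exact hq_unique y (union_interfaceSet_subset hyl) hvy (h.eq_left hyl ▸ heq)
  · rw [h.eq_right (.inl hyr.1), ← hf' v hv.2] at heq
    exact absurd heq (hright.avoid v (.inl hv.1) y ⟨.inl hyr.1, hyr.2⟩ hvy)

theorem unique_of_neighborSet_subset {v u : V} (hv : v ∈ B \ Z) (hvZ : G.neighborSet v ⊆ Z)
    (hu : u ∉ W) (hvu : G.Adj v u) : HasUniqueColorIn G φ Set.univ v := by
  obtain ⟨r, hr, hrv⟩ := h.exists_twin hv hvZ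
  have twin : ∀ {x}, G.Adj v x → G.Adj r x := fun {x} hvx => (Set.ext_iff.1 hrv x).2 hvx
  have hrW : r ∉ W := fun hrW =>
    (h.reps_subset hr).2 (h.inter_subset ⟨hrW, (h.reps_subset hr).1⟩)
  obtain ⟨x, -, hrx, hx⟩ := h.left.unique r ⟨.inr hr, hrW⟩
    ⟨u, ⟨.inl (.inr (hvZ hvu)), hu⟩, twin hvu⟩
  have hvx : G.Adj v x := (Set.ext_iff.1 hrv x).1 hrx
  refine ⟨x, trivial, hvx, fun y _ hvy heq => hx y (.inl (.inr (hvZ hvy))) (twin hvy) ?_⟩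
  rwa [h.eq_left (.inr (.inl (hvZ hvy))), h.eq_left (.inr (.inl (hvZ hvx)))] at heq

theorem unique_of_mem_right {v : V} (hv : v ∈ B \ Z) (hvZ : ¬ G.neighborSet v ⊆ Z) :
    HasUniqueColorIn G φ Set.univ v := by
  obtain ⟨f', -, -, hright⟩ := h.right
  obtain ⟨u, hvu, huZ⟩ := Set.not_subset.1 hvZ
  have hvI : v ∉ interfaceSet W Z R q := fun hvI =>
    hvI.elim hv.2 fun hvR => hvZ (h.neighborSet_subset hvR.1)
  have huI : u ∉ interfaceSet W Z R q := fun huI =>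
    huI.elim huZ fun huR => hv.2 (h.neighborSet_subset huR.1 (Adj.symm hvu))
  obtain ⟨x, -, hvx, hx⟩ := hright.unique v ⟨.inl hv.1, hvI⟩
    ⟨u, ⟨h.mem_of_adj_right hv.1 hvu, huI⟩, hvu⟩
  refine ⟨x, trivial, hvx, fun y _ hvy heq => hx y (h.mem_of_adj_right hv.1 hvy) hvy ?_⟩
  rwa [h.eq_right (h.mem_of_adj_right hv.1 hvy), h.eq_right (h.mem_of_adj_right hv.1 hvx)] at heq

theorem isPCFExtension : IsPCFExtension G Set.univ W ψ f φ := by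
  refine ⟨fun w hw => ?_, fun u _ v hv => h.proper hv.2, ?_, fun w hw u hu => h.avoid hw hu.2⟩
  · exact (h.eq_left ((h.mem_union_of_mem hw).imp_right .inl)).trans (h.left.eqOn hw)
  · rintro v ⟨-, hv⟩ ⟨u, ⟨-, hu⟩, hvu⟩
    by_cases hvZ : v ∈ Z
    · exact h.unique_of_mem_core ⟨hvZ, hv⟩ hu hvu
    rcases h.cover v with hvA | hvS | hvB
    · exact h.unique_of_mem_left ⟨hvA, hv⟩ hu hvu
    · exact absurd (h.separator_subset hvS) hvZ
    · by_cases hN : G.neighborSet v ⊆ Z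
      · exact h.unique_of_neighborSet_subset ⟨hvB, hvZ⟩ hN hu hvu
      · exact h.unique_of_mem_right ⟨hvB, hvZ⟩ hN

end IsGluing

theorem IsCore.isPCFExtendable_univ (h : IsCore G A S B W Z R)
    (hleft : IsPCFExtendable α G (A ∪ Z ∪ R) W)
    (hright : ∀ q, IsPCFExtendable α G (B ∪ S) (interfaceSet W Z R q)) :
    IsPCFExtendable α G Set.univ W := by
  classical
  intro ψ f
  obtain ⟨φA, hφA⟩ := hleft ψ f
  choose! q hq using fun z (hz : z ∈ Z \ W) (hex : ∃ u ∈ (A ∪ Z ∪ R) \ W, G.Adj z u) =>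
    hφA.unique z ⟨.inl (.inr hz.1), hz.2⟩ hex
  obtain ⟨φB, hφB⟩ := hright q φA fun w => if w ∈ W then f w else φA (q w)
  exact ⟨fun v => if v ∈ B then φB v else φA v, IsGluing.isPCFExtension (q := q)
    ⟨h, hφA, hq, ⟨_, fun w hw => if_pos hw, fun w hw => if_neg hw, hφB⟩,
      fun v hv => if_neg hv, fun v hv => if_pos hv⟩⟩

theorem IsSeparation.isPCFExtendable_univ [Finite V] {a N : ℕ} (h : IsSeparation G A S B)
    (hA : A.Nonempty) (hS : S.ncard ≤ a) (haN : 8 * a ≤ N) (hB : 2 ^ (2 * a + N) + a + N < B.ncard)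
    (hW : W.ncard ≤ N) (hWB : 2 * (W ∩ B).ncard ≤ N)
    (ih : ∀ D' W' : Set V, D' ≠ Set.univ → W' ⊆ D' → W'.ncard ≤ N → IsPCFExtendable α G D' W') :
    IsPCFExtendable α G Set.univ W := by
  obtain ⟨Z, R, hC, hZW, hZ, hR⟩ := h.exists_isCore W
  refine hC.isPCFExtendable_univ (ih _ _ (fun huniv => ?_) (fun w hw => ?_) hW)
    fun q => ih _ _ (fun huniv => ?_) ?_ ?_
  · have hBZR : B ⊆ Z ∪ R := fun b hb => by
      rcases huniv.symm ▸ Set.mem_univ b with (hbA | hbZ) | hbR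
      exacts [absurd hb (Set.disjoint_left.1 h.disjoint hbA), .inl hbZ, .inr hbR]
    have := Set.ncard_le_ncard hBZR
    have := Set.ncard_union_le Z R
    have : 2 ^ Z.ncard ≤ 2 ^ (2 * a + N) := Nat.pow_le_pow_right two_pos (by omega)
    omega
  · rcases h.cover w with hwA | hwS | hwB
    exacts [.inl (.inl hwA), .inl (.inr (hC.separator_subset hwS)),
      .inl (.inr (hC.inter_subset ⟨hw, hwB⟩))]
  · obtain ⟨x, hx⟩ := hA
    rcases huniv.symm ▸ Set.mem_univ x with hxB | hxS
    exacts [Set.disjoint_left.1 h.disjoint hx hxB, Set.disjoint_left.1 h.disjoint_left hx hxS]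
  · exact Set.union_subset hC.subset_union fun r hr => .inl (hC.reps_subset hr.1).1
  · have := Set.ncard_union_le Z (R ∩ q '' (Z \ W))
    have := Set.ncard_le_ncard (s := R ∩ q '' (Z \ W)) Set.inter_subset_right
    have := Set.ncard_image_le (f := q) (Z \ W).toFinite
    rw [interfaceSet]
    omega

end Separations

section Ramsey

variable {ι : Type*}

theorem exists_isNClique_or_isNClique_compl (R : SimpleGraph ι) {n : ℕ} :
    ∀ {a b : ℕ}, a + b = n → ∀ s : Finset ι, 2 ^ n ≤ s.card →
      (∃ t ⊆ s, R.IsNClique a t) ∨ ∃ t ⊆ s, Rᶜ.IsNClique b t := by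
  classical
  induction n with
  | zero =>
    intro a b hab s _
    obtain rfl : a = 0 := by lia
    exact .inl ⟨∅, s.empty_subset, isNClique_zero.2 rfl⟩
  | succ n ih =>
    intro a b hab s hs
    obtain _ | a := a
    · exact .inl ⟨∅, s.empty_subset, isNClique_zero.2 rfl⟩
    obtain _ | b := b
    · exact .inr ⟨∅, s.empty_subset, isNClique_zero.2 rfl⟩
    have hpos : 0 < 2 ^ n := by positivity
    rw [pow_succ] at hs
    obtain ⟨x, hx⟩ : s.Nonempty := Finset.card_pos.1 (by lia)
    have insert_subset : ∀ {t : Finset ι} {p : ι → Prop} [DecidablePred p],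
        t ⊆ (s.erase x).filter p → insert x t ⊆ s := fun ht =>
      Finset.insert_subset hx
        (ht.trans ((Finset.filter_subset _ _).trans (Finset.erase_subset _ _)))
    have hcard := Finset.card_filter_add_card_filter_not (s := s.erase x) (R.Adj x)
    rw [Finset.card_erase_of_mem hx] at hcard
    by_cases hnbr : 2 ^ n ≤ ((s.erase x).filter (R.Adj x)).card
    · obtain ⟨t, ht, hclique⟩ | ⟨t, ht, hclique⟩ := ih (a := a) (b := b + 1) (by lia) _ hnbr
      · exact .inl ⟨insert x t, insert_subset ht,
          hclique.insert fun y hy => (Finset.mem_filter.1 (ht hy)).2⟩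
      · exact .inr ⟨t, (Finset.subset_insert x t).trans (insert_subset ht), hclique⟩
    · obtain ⟨t, ht, hclique⟩ | ⟨t, ht, hclique⟩ := ih (a := a + 1) (b := b) (by lia)
        ((s.erase x).filter fun y => ¬ R.Adj x y) (by lia)
      · exact .inl ⟨t, (Finset.subset_insert x t).trans (insert_subset ht), hclique⟩
      · refine .inr ⟨insert x t, insert_subset ht, hclique.insert fun y hy => ?_⟩
        obtain ⟨hys, hxy⟩ := Finset.mem_filter.1 (ht hy)
        exact (compl_adj _ _ _).2 ⟨(Finset.ne_of_mem_erase hys).symm, hxy⟩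

end Ramsey

section Expansion

variable {G : SimpleGraph V} {ι : Type*} {T : ι → Set V} {c : V → Bool}

/-- The sets `T i` are the branch sets of a clique minor of `G` indexed by `ι`. -/
structure IsCliqueModel (G : SimpleGraph V) (T : ι → Set V) : Prop where
  connected : ∀ i, (G.induce (T i)).Connected
  disjoint : Pairwise (Function.onFun Disjoint T)
  exists_adj : Pairwise fun i j => ∃ x ∈ T i, ∃ y ∈ T j, G.Adj x y

/-- A bipartite expansion of a clique in `G`: a clique model in the bichromatic edges of a
two-colouring such that all edges between different branch sets are bichromatic. -/
structure IsBipartiteExpansion (G : SimpleGraph V) (T : ι → Set V) (c : V → Bool) : Prop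
    extends IsCliqueModel (bichromatic G c) T where
  color_ne : Pairwise fun i j => ∀ ⦃x⦄, x ∈ T i → ∀ ⦃y⦄, y ∈ T j → G.Adj x y → c x ≠ c y

theorem IsCliqueModel.eq_of_mem (h : IsCliqueModel G T) {i j : ι} {v : V} (hi : v ∈ T i)
    (hj : v ∈ T j) : i = j :=
  h.disjoint.eq (Set.not_disjoint_iff.2 ⟨v, hi, hj⟩)

theorem exists_connected_induce_bichromatic {S : Set V} (hS : (G.induce S).Connected) :
    ∃ c : V → Bool, ((bichromatic G c).induce S).Connected := by
  classical
  obtain ⟨r⟩ := hS.nonempty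
  let d : V → ℕ := fun v => if hv : v ∈ S then (G.induce S).dist r ⟨v, hv⟩ else 0
  have d_eq : ∀ v : S, d v = (G.induce S).dist r v := fun v => dif_pos v.2
  refine ⟨fun v => decide (Even (d v)), connected_induce_of_descent r.2 d fun x hx hxr => ?_⟩
  have hne : (G.induce S).dist r ⟨x, hx⟩ ≠ 0 := by
    rw [Ne, hS.dist_eq_zero_iff]
    rintro rfl
    exact hxr rfl
  obtain ⟨u, hxu, hu⟩ := exists_adj_dist_succ_eq hS hne
  rw [← d_eq u, ← d_eq ⟨x, hx⟩] at hu
  refine ⟨u, u.2, ⟨hxu, ?_⟩, by lia⟩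
  change decide (Even (d x)) ≠ decide (Even (d u))
  rw [← hu, Ne, decide_eq_decide, Nat.even_add_one]
  exact fun h => iff_not_self h.symm

theorem exists_eqOn_of_pairwise_disjoint {α : Type*} [Nonempty α]
    (hT : Pairwise (Function.onFun Disjoint T)) (f : ι → V → α) :
    ∃ g : V → α, ∀ i, Set.EqOn (f i) g (T i) := by
  classical
  choose g hg using fun v => show ∃ a, ∀ i, v ∈ T i → f i v = a by
    by_cases hv : ∃ i, v ∈ T i
    · obtain ⟨i, hi⟩ := hv
      refine ⟨f i v, fun j hj => ?_⟩
      rw [hT.eq (Set.not_disjoint_iff.2 ⟨v, hj, hi⟩)]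
    · exact ⟨Classical.arbitrary α, fun i hi => absurd ⟨i, hi⟩ hv⟩
  exact ⟨g, fun i v hv => hg v i hv⟩

theorem exists_isBipartiteExpansion {h t n : ℕ} (hn : 2 ^ (h + t) ≤ n)
    (hG : ¬ HasOddCliqueModel G (Fin h)) (hK : IsMinor (⊤ : SimpleGraph (Fin n)) G) :
    ∃ (T : Fin t → Set V) (c : V → Bool), IsBipartiteExpansion G T c := by
  obtain ⟨ρ, hconn, hdisj, hadj⟩ := hK
  choose col hcol using fun i => exists_connected_induce_bichromatic (hconn i)
  obtain ⟨c, hc⟩ := exists_eqOn_of_pairwise_disjoint hdisj col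
  have hconn' : ∀ i, ((bichromatic G c).induce (ρ i)).Connected := fun i => by
    rw [← induce_bichromatic_congr (hc i)]
    exact hcol i
  let R : SimpleGraph (Fin n) :=
    { Adj := fun i j => i ≠ j ∧ ∃ x ∈ ρ i, ∃ y ∈ ρ j, G.Adj x y ∧ c x = c y
      symm := ⟨fun i j ⟨hij, x, hx, y, hy, hxy, h⟩ => ⟨hij.symm, y, hy, x, hx, hxy.symm, h.symm⟩⟩
      loopless := ⟨fun i hi => hi.1 rfl⟩ }
  have reindex : ∀ {m} {s : Finset (Fin n)}, s.card = m →
      ∃ e : Fin m → Fin n, Function.Injective e ∧ ∀ i, e i ∈ s := fun hs =>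
    ⟨fun i => (Finset.equivFinOfCardEq hs).symm i,
      Subtype.val_injective.comp (Equiv.injective _), fun i => Subtype.property _⟩
  obtain ⟨s, -, hs⟩ | ⟨s, -, hs⟩ :=
    exists_isNClique_or_isNClique_compl R rfl Finset.univ (by rwa [Finset.card_fin])
  · obtain ⟨e, he, hes⟩ := reindex hs.card_eq
    exact absurd ⟨ρ ∘ e, c, fun i => hconn' _, fun i j hij => hdisj (he.ne hij),
      fun i j hij => (hs.isClique (hes i) (hes j) (he.ne hij)).2⟩ hG
  · obtain ⟨e, he, hes⟩ := reindex hs.card_eq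
    have color_ne : ∀ ⦃i j⦄, i ≠ j → ∀ ⦃x⦄, x ∈ ρ (e i) → ∀ ⦃y⦄, y ∈ ρ (e j) → G.Adj x y →
        c x ≠ c y := fun i j hij x hx y hy hxy heq =>
      ((compl_adj _ _ _).1 (hs.isClique (hes i) (hes j) (he.ne hij))).2
        ⟨he.ne hij, x, hx, y, hy, hxy, heq⟩
    refine ⟨ρ ∘ e, c, ⟨fun i => hconn' _, fun i j hij => hdisj (he.ne hij), fun i j hij => ?_⟩,
      fun i j hij => color_ne hij⟩
    obtain ⟨x, hx, y, hy, hxy⟩ := hadj (he.ne hij)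
    exact ⟨x, hx, y, hy, hxy, color_ne hij hx hy hxy⟩

end Expansion

section Matching

variable {X : Type*} {H : SimpleGraph X} {A B : Set X}

/-- `A` is covered by a perfect matching of `H` within `A`. The matching is encoded by the
involution `N` of `A` exchanging matched vertices; the values of `N` outside `A` are irrelevant. -/
def IsMatchable (H : SimpleGraph X) (A : Set X) : Prop :=
  ∃ N : X → X, ∀ a ∈ A, N a ∈ A ∧ N (N a) = a ∧ H.Adj a (N a)

theorem even_ncard_of_involution (hA : A.Finite) (N : X → X)
    (hN : ∀ a ∈ A, N a ∈ A ∧ N (N a) = a ∧ N a ≠ a) : Even A.ncard := by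
  have hsum := Finset.sum_involution (s := hA.toFinset) (f := fun _ => (1 : ZMod 2))
    (fun a _ => N a) (fun _ _ => by decide)
    (fun a ha _ => (hN a (hA.mem_toFinset.1 ha)).2.2)
    (fun a ha => hA.mem_toFinset.2 (hN a (hA.mem_toFinset.1 ha)).1)
    (fun a ha => (hN a (hA.mem_toFinset.1 ha)).2.1)
  rw [Finset.sum_const, nsmul_one, ← Set.ncard_eq_toFinset_card A hA] at hsum
  exact (ZMod.natCast_eq_zero_iff_even).1 hsum

theorem isMatchable_empty : IsMatchable H ∅ :=
  ⟨id, fun _ h => h.elim⟩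

theorem isMatchable_pair {a b : X} (h : H.Adj a b) : IsMatchable H {a, b} := by
  classical
  refine ⟨Equiv.swap a b, ?_⟩
  rintro z (rfl | rfl)
  · rw [Equiv.swap_apply_left, Equiv.swap_apply_right]
    exact ⟨.inr rfl, rfl, h⟩
  · rw [Equiv.swap_apply_right, Equiv.swap_apply_left]
    exact ⟨.inl rfl, rfl, h.symm⟩

theorem IsMatchable.iUnion {ι : Type*} {B : ι → Set X}
    (hdisj : Pairwise (Function.onFun Disjoint B)) (hB : ∀ i, IsMatchable H (B i)) :
    IsMatchable H (⋃ i, B i) := by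
  obtain hX | hX := isEmpty_or_nonempty X
  · exact ⟨id, fun a => isEmptyElim a⟩
  choose N hN using hB
  obtain ⟨M, hM⟩ := exists_eqOn_of_pairwise_disjoint hdisj N
  refine ⟨M, fun a ha => ?_⟩
  obtain ⟨i, hi⟩ := Set.mem_iUnion.1 ha
  obtain ⟨hmem, hinv, hadj⟩ := hN i a hi
  rw [← hM i hi, ← hM i hmem]
  exact ⟨Set.mem_iUnion.2 ⟨i, hmem⟩, hinv, hadj⟩

theorem IsMatchable.union (hdisj : Disjoint A B) (hA : IsMatchable H A) (hB : IsMatchable H B) :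
    IsMatchable H (A ∪ B) := by
  rw [Set.union_eq_iUnion]
  refine IsMatchable.iUnion (pairwise_disjoint_on_bool.2 hdisj) fun b => ?_
  cases b <;> assumption

end Matching

section Prism

variable {G : SimpleGraph V} {c : V → Bool}

/-- The prism over `G`: two copies of `G` with corresponding vertices joined. -/
abbrev prism (G : SimpleGraph V) : SimpleGraph (V × Bool) :=
  G □ (⊤ : SimpleGraph Bool)

theorem prism_adj_of_ne {x y : V} {a b : Bool} (hne : x ≠ y) (h : (prism G).Adj (x, a) (y, b)) :
    G.Adj x y ∧ a = b :=
  (boxProd_adj.1 h).resolve_right fun h => hne h.2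

theorem isMatchable_prod_univ (S : Set V) : IsMatchable (prism G) (S ×ˢ Set.univ) :=
  ⟨fun a => (a.1, !a.2), fun a ha =>
    ⟨⟨ha.1, trivial⟩, Prod.ext rfl (Bool.not_not a.2),
      boxProd_adj.2 (.inr ⟨(Bool.not_ne_self a.2).symm, rfl⟩)⟩⟩

theorem prism_adj_not_of_bichromatic_adj {x y : V} (h : (bichromatic G c).Adj x y) :
    (prism G).Adj (x, !c x) (y, c y) :=
  boxProd_adj.2 (.inl ⟨h.1, (Bool.eq_not.2 h.2.symm).symm⟩)

theorem isMatchable_support_diff {x y : V} {p : (bichromatic G c).Walk x y} (hp : p.IsPath) :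
    IsMatchable (prism G) ({a | a.1 ∈ p.support} \ {(x, c x), (y, !c y)}) := by
  induction p with
  | @nil x =>
    convert isMatchable_empty (H := prism G) using 1
    ext ⟨v, b⟩
    have hb := Bool.eq_or_eq_not b (c v)
    simp only [Walk.support_nil, List.mem_singleton, Set.mem_empty_iff_false,
      Set.mem_sdiff, Set.mem_ofPred_eq, Set.mem_insert_iff, Set.mem_singleton_iff, Prod.mk.injEq]
    grind
  | @cons x z y hxz p ih =>
    rw [Walk.cons_isPath_iff] at hp
    have hz : z ∈ p.support := p.start_mem_support
    have hy : y ∈ p.support := p.end_mem_support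
    convert IsMatchable.union ?_ (isMatchable_pair (prism_adj_not_of_bichromatic_adj hxz))
      (ih hp.1) using 1
    · ext ⟨v, b⟩
      have hb := Bool.eq_or_eq_not b (c v)
      simp only [Walk.support_cons, List.mem_cons, Set.mem_sdiff, Set.mem_union,
        Set.mem_ofPred_eq, Set.mem_insert_iff, Set.mem_singleton_iff, Prod.mk.injEq]
      grind
    · simp only [Set.disjoint_left, Set.mem_sdiff, Set.mem_ofPred_eq,
        Set.mem_insert_iff, Set.mem_singleton_iff]
      grind

theorem exists_isPath_of_connected_induce {S : Set V} (hS : (G.induce S).Connected) {x y : V}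
    (hx : x ∈ S) (hy : y ∈ S) : ∃ p : G.Walk x y, p.IsPath ∧ ∀ v ∈ p.support, v ∈ S := by
  obtain ⟨p, hp⟩ := (hS.preconnected ⟨x, hx⟩ ⟨y, hy⟩).exists_isPath
  refine ⟨p.map (Embedding.induce S).toHom, hp.map Subtype.val_injective, fun v hv => ?_⟩
  obtain ⟨w, -, rfl⟩ := List.mem_map.1 ((Walk.support_map _ p) ▸ hv)
  exact w.2

theorem isMatchable_prod_univ_diff_pair {S : Set V}
    (hS : ((bichromatic G c).induce S).Connected) {x y : V} (hx : x ∈ S) (hy : y ∈ S) :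
    IsMatchable (prism G) ((S ×ˢ Set.univ) \ {(x, c x), (y, !c y)}) := by
  obtain ⟨q, hq, support_subset⟩ := exists_isPath_of_connected_induce hS hx hy
  have hxq : x ∈ q.support := q.start_mem_support
  have hyq : y ∈ q.support := q.end_mem_support
  convert (isMatchable_support_diff hq).union ?_
    (isMatchable_prod_univ (S \ {v | v ∈ q.support})) using 1
  · ext ⟨v, b⟩
    simp only [Set.mem_prod, Set.mem_univ, and_true, Set.mem_sdiff, Set.mem_union,
      Set.mem_ofPred_eq, Set.mem_insert_iff, Set.mem_singleton_iff, Prod.mk.injEq]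
    grind
  · exact Set.disjoint_left.2 fun a ha hb => hb.1.2 ha.1

end Prism

section Packing

variable {G : SimpleGraph V} {ι : Type*} {T : ι → Set V} {c : V → Bool}

/-- A packing of the branch sets `T i`, `i ∈ K`, with ports in the branch sets indexed by `E`: the
part of the prism over the complement of the branch sets, together with one vertex
`(τ e, c (τ e))` for each `e ∈ E`, has a perfect matching. -/
def HasPacking (G : SimpleGraph V) (T : ι → Set V) (c : V → Bool) (K E : Finset ι) : Prop :=
  ∃ τ : ι → V, (∀ e ∈ E, τ e ∈ T e) ∧
    IsMatchable (prism G)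
      ((⋃ i ∈ K, T i)ᶜ ×ˢ Set.univ ∪ {a | ∃ e ∈ E, a = (τ e, c (τ e))})

theorem hasPacking_empty [Nonempty V] (K : Finset ι) : HasPacking G T c K ∅ :=
  ⟨fun _ => Classical.arbitrary V, fun _ h => absurd h (Finset.notMem_empty _), by
    convert isMatchable_prod_univ (G := G) (⋃ i ∈ K, T i)ᶜ using 1
    exact Set.union_eq_left.2 fun _ ⟨_, he, _⟩ => absurd he (Finset.notMem_empty _)⟩

theorem isMatchable_diff_union_singleton {S : Set V} (hS : ((bichromatic G c).induce S).Connected)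
    {t x y : V} (ht : t ∈ S) (hx : x ∈ S) (hy : y ∉ S) (hxy : (bichromatic G c).Adj x y) :
    IsMatchable (prism G) ((S ×ˢ Set.univ) \ {(t, c t)} ∪ {(y, c y)}) := by
  have hconn : ((bichromatic G c).induce (insert y S)).Connected := by
    rw [← Set.union_singleton]
    exact connected_induce_union hS.preconnected Connected.of_subsingleton.preconnected
      hx rfl hxy
  convert isMatchable_prod_univ_diff_pair hconn (.inr ht) (.inl rfl) using 1
  ext ⟨v, b⟩
  have hb := Bool.eq_or_eq_not b (c v)
  simp only [Set.mem_prod, Set.mem_univ, and_true, Set.mem_sdiff, Set.mem_union,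
    Set.mem_insert_iff, Set.mem_singleton_iff, Prod.mk.injEq]
  grind

theorem IsBipartiteExpansion.hasPacking_of_sdiff [DecidableEq ι] (hT : IsBipartiteExpansion G T c)
    {K₀ E₀ K E : Finset ι} (hE₀ : E₀ ⊆ K₀) (hp : HasPacking G T c K₀ E₀) (hK : K ⊆ K₀ \ E₀)
    (hE : E ⊆ K) (hcard : E.card = E₀.card) : HasPacking G T c K E := by
  classical
  obtain ⟨τ, hτ, hmatch⟩ := hp
  have mem_K₀ : ∀ {i}, i ∈ K → i ∈ K₀ := fun hi => (Finset.mem_sdiff.1 (hK hi)).1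
  have notMem_E₀ : ∀ {i}, i ∈ K → i ∉ E₀ := fun hi => (Finset.mem_sdiff.1 (hK hi)).2
  let β : E ≃ E₀ := Finset.equivOfCardEq hcard
  have hne : ∀ e : E, (β e : ι) ≠ e := fun e he => notMem_E₀ (hE e.2) (he ▸ (β e).2)
  choose x hx y hy hxy using fun e : E => hT.exists_adj (hne e)
  obtain ⟨σ, hσ⟩ : ∃ σ : ι → V, ∀ e : E, σ e = y e :=
    ⟨Function.extend Subtype.val y τ, Subtype.val_injective.extend_apply y τ⟩
  have uniq : ∀ {i j v}, v ∈ T i → v ∈ T j → i = j := hT.eq_of_mem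
  have mem_K : ∀ e : E, (e : ι) ∈ K := fun e => hE e.2
  have β_inj : ∀ {e e'}, (β e : ι) = β e' → e = e' := fun h => β.injective (Subtype.ext h)
  -- The new matching uses, inside each old port set, the path leading to the new port.
  have hreroute : IsMatchable (prism G)
      (⋃ e : E, (T (β e) ×ˢ Set.univ) \ {(τ (β e), c (τ (β e)))} ∪ {(y e, c (y e))}) := by
    refine IsMatchable.iUnion (fun e e' hee => ?_) fun e => isMatchable_diff_union_singleton
      (hT.connected _) (hτ _ (β e).2) (hx e) (fun h => hne e (hT.eq_of_mem h (hy e))) (hxy e)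
    simp only [Function.onFun, Set.disjoint_left, Set.mem_union, Set.mem_sdiff, Set.mem_prod,
      Set.mem_singleton_iff]
    grind
  have hfree : IsMatchable (prism G) ((⋃ i ∈ (K₀ \ E₀) \ K, T i) ×ˢ Set.univ) :=
    isMatchable_prod_univ _
  refine ⟨σ, fun e he => hσ ⟨e, he⟩ ▸ hy ⟨e, he⟩, ?_⟩
  convert (hmatch.union ?_ hreroute).union ?_ hfree using 1
  · ext ⟨v, b⟩
    have old_port : ∀ e ∈ E₀, ∃ e' : E, (β e' : ι) = e := fun e he =>
      ⟨β.symm ⟨e, he⟩, congrArg Subtype.val (β.apply_symm_apply ⟨e, he⟩)⟩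
    have new_port : ∀ e (he : e ∈ E), σ e = y ⟨e, he⟩ := fun e he => hσ ⟨e, he⟩
    simp only [Set.mem_union, Set.mem_sdiff, Set.mem_prod, Set.mem_univ, and_true,
      Set.mem_singleton_iff, Set.mem_iUnion, Set.mem_compl_iff, Set.mem_ofPred_eq, exists_prop,
      not_exists, not_and, Finset.mem_sdiff, Prod.mk.injEq]
    grind
  · simp only [Set.disjoint_left, Set.mem_union, Set.mem_sdiff, Set.mem_prod, Set.mem_univ,
      and_true, Set.mem_singleton_iff, Set.mem_iUnion, Set.mem_compl_iff, Set.mem_ofPred_eq,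
      exists_prop, not_exists, not_and]
    grind
  · simp only [Set.disjoint_left, Set.mem_union, Set.mem_sdiff, Set.mem_prod, Set.mem_univ,
      and_true, Set.mem_singleton_iff, Set.mem_iUnion, Set.mem_compl_iff, Set.mem_ofPred_eq,
      exists_prop, not_exists, not_and, Finset.mem_sdiff]
    grind

end Packing

section PortModel

variable {G : SimpleGraph V} {ι : Type*} {T : ι → Set V} {c : V → Bool} {τ : ι → V}

theorem exists_injective_sumElim_of_involution [Finite ι] {κ : Type*} [Finite κ] {η : ι → ι}
    (hη : ∀ i, η (η i) = i ∧ η i ≠ i) (hcard : 2 * Nat.card κ ≤ Nat.card ι) :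
    ∃ f : κ → ι, Function.Injective (Sum.elim f (η ∘ f)) := by
  classical
  have := Fintype.ofFinite ι
  have := Fintype.ofFinite κ
  let := LinearOrder.lift' (Fintype.equivFin ι) (Fintype.equivFin ι).injective
  have η_inj : Function.Injective η := Function.LeftInverse.injective (g := η) fun i => (hη i).1
  let A : Finset ι := Finset.univ.filter fun i => i < η i
  have hcover : Finset.univ ⊆ A ∪ A.image η := fun i _ => by
    rcases (hη i).2.lt_or_gt with hlt | hgt
    · refine Finset.mem_union_right _ (Finset.mem_image.2 ⟨η i, ?_, (hη i).1⟩)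
      exact Finset.mem_filter.2 ⟨Finset.mem_univ _, by rwa [(hη i).1]⟩
    · exact Finset.mem_union_left _ (Finset.mem_filter.2 ⟨Finset.mem_univ _, hgt⟩)
  have hA : Fintype.card κ ≤ Fintype.card A := by
    have h₁ := (Finset.card_le_card hcover).trans (Finset.card_union_le _ _)
    rw [Finset.card_image_of_injective _ η_inj, Finset.card_univ] at h₁
    rw [Nat.card_eq_fintype_card, Nat.card_eq_fintype_card] at hcard
    rw [Fintype.card_coe]
    lia
  obtain ⟨f⟩ := Function.Embedding.nonempty_of_card_le hA
  have f_inj : Function.Injective fun p => (f p : ι) := Subtype.val_injective.comp f.injective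
  have lt : ∀ p, (f p : ι) < η (f p) := fun p => (Finset.mem_filter.1 (f p).2).2
  refine ⟨fun p => f p, f_inj.sumElim (η_inj.comp f_inj) fun p q hpq => ?_⟩
  have hlt := lt p
  rw [hpq, Function.comp_apply, (hη _).1] at hlt
  exact hlt.asymm (lt q)

theorem hasOddCliqueModel_of_involution {κ : Type*} [Finite κ] [Finite ι]
    (hT : IsCliqueModel (bichromatic G c) T) (hτ : ∀ i, τ i ∈ T i) {η : ι → ι}
    (hη : ∀ i, η (η i) = i ∧ η i ≠ i)
    (hmono : ∀ i, G.Adj (τ i) (τ (η i)) ∧ c (τ i) = c (τ (η i)))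
    (hcard : 2 * (Nat.card κ * Nat.card κ) ≤ Nat.card ι) : HasOddCliqueModel G κ := by
  obtain ⟨f, hf⟩ := exists_injective_sumElim_of_involution hη (Nat.card_prod κ κ ▸ hcard)
  -- The pair matched by `f (p, q)` links the merged branch sets `p` and `q`.
  let I : κ → Set ι := fun p => {i | ∃ q, i = f (p, q) ∨ i = η (f (q, p))}
  have I_disjoint : ∀ {p p' i}, i ∈ I p → i ∈ I p' → p = p' := by
    rintro p p' i ⟨q, rfl | rfl⟩ ⟨q', h | h⟩
    · exact congrArg Prod.fst (Sum.inl_injective (hf (a₁ := .inl _) (a₂ := .inl _) h))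
    · exact absurd (hf (a₁ := .inl _) (a₂ := .inr _) h) Sum.inl_ne_inr
    · exact absurd (hf (a₁ := .inr _) (a₂ := .inl _) h) Sum.inr_ne_inl
    · exact congrArg Prod.snd (Sum.inr_injective (hf (a₁ := .inr _) (a₂ := .inr _) h))
  refine ⟨fun p => ⋃ i ∈ I p, T i, c, fun p => ?_, fun p p' hpp => ?_, fun p p' _ => ?_⟩
  · exact connected_induce_biUnion ⟨_, p, .inl rfl⟩ (fun i _ => hT.connected i)
      fun i _ j _ hij => hT.exists_adj hij
  · refine Set.disjoint_left.2 fun v hv hv' => hpp ?_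
    obtain ⟨i, hi, hvi⟩ := Set.mem_iUnion₂.1 hv
    obtain ⟨j, hj, hvj⟩ := Set.mem_iUnion₂.1 hv'
    exact I_disjoint hi (hT.eq_of_mem hvi hvj ▸ hj)
  · exact ⟨_, Set.mem_biUnion ⟨p', .inl rfl⟩ (hτ (f (p, p'))), _,
      Set.mem_biUnion ⟨p, .inr rfl⟩ (hτ (η (f (p, p')))), hmono _⟩

theorem IsCliqueModel.update_insert [DecidableEq V] [DecidableEq ι]
    (hT : IsCliqueModel (bichromatic G c) T) {i : ι} {t v : V} (ht : t ∈ T i)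
    (hv : ∀ j, v ∉ T j) (htv : G.Adj t v) :
    IsCliqueModel (bichromatic G (Function.update c v (!c t)))
      (Function.update T i (insert v (T i))) := by
  set c' := Function.update c v (!c t)
  have hcc' : ∀ j, Set.EqOn c c' (T j) := fun j x hx =>
    (Function.update_of_ne (by rintro rfl; exact hv j hx) _ _).symm
  have mono : ∀ j, T j ⊆ Function.update T i (insert v (T i)) j := fun j => by
    by_cases hj : j = i
    · subst hj
      rw [Function.update_self]
      exact Set.subset_insert _ _
    · rw [Function.update_of_ne hj]
  refine ⟨fun j => ?_, fun j j' hjj => ?_, fun j j' hjj => ?_⟩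
  · have hj := hT.connected j
    rw [induce_bichromatic_congr (hcc' j)] at hj
    by_cases hji : j = i
    · subst hji
      rw [Function.update_self, ← Set.union_singleton]
      refine connected_induce_union hj.preconnected Connected.of_subsingleton.preconnected
        ht rfl (bichromatic_adj.2 ⟨htv, ?_⟩)
      rw [← hcc' j ht, show c' v = !c t from Function.update_self ..]
      exact (Bool.not_ne_self _).symm
    · rwa [Function.update_of_ne hji]
  · have := hT.disjoint hjj
    simp only [Function.onFun, Function.update_apply, Set.disjoint_left] at this ⊢
    grind
  · obtain ⟨x, hx, y, hy, hxy⟩ := hT.exists_adj hjj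
    rw [bichromatic_adj, hcc' j hx, hcc' j' hy] at hxy
    exact ⟨x, mono j hx, y, mono j' hy, hxy⟩

theorem isMatchable_diff_pair {X : Type*} {H : SimpleGraph X} {A : Set X} {N : X → X}
    (hN : ∀ a ∈ A, N a ∈ A ∧ N (N a) = a ∧ H.Adj a (N a)) {a : X} (ha : a ∈ A) :
    IsMatchable H (A \ {a, N a}) := by
  refine ⟨N, fun b ⟨hb, hne⟩ => ⟨⟨(hN b hb).1, ?_⟩, (hN b hb).2⟩⟩
  have hNb := (hN b hb).2.1
  have hNa := (hN a ha).2.1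
  simp only [Set.mem_insert_iff, Set.mem_singleton_iff] at hne ⊢
  grind

theorem prod_univ_union_range_update [DecidableEq V] [DecidableEq ι] {R : Set V}
    (hτ : Function.Injective τ) (hRτ : ∀ i, τ i ∉ R) {i : ι} {v : V} (hv : v ∈ R) :
    (R \ {v}) ×ˢ Set.univ ∪ Set.range (fun j => (Function.update τ i v j,
        Function.update c v (!c (τ i)) (Function.update τ i v j))) =
      (R ×ˢ Set.univ ∪ Set.range fun j => (τ j, c (τ j))) \ {(τ i, c (τ i)), (v, c (τ i))} := by
  ext ⟨x, b⟩
  have hb := Bool.eq_or_eq_not b (c (τ i))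
  have hne : ∀ j, τ j ≠ v := fun j h => hRτ j (h ▸ hv)
  have hrange : (∃ j, (Function.update τ i v j,
      Function.update c v (!c (τ i)) (Function.update τ i v j)) = (x, b)) ↔
      (x = v ∧ b = !c (τ i)) ∨ ∃ j, j ≠ i ∧ (τ j, c (τ j)) = (x, b) := by
    simp only [Function.update_apply, Prod.mk.injEq]
    grind
  simp only [Set.mem_union, Set.mem_prod, Set.mem_univ, and_true, Set.mem_sdiff, Set.mem_range,
    Set.mem_singleton_iff, Set.mem_insert_iff, Prod.mk.injEq] at hrange ⊢
  rw [hrange]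
  grind [hτ.eq_iff]

theorem hasOddCliqueModel_of_isMatchable_ports [Finite ι] {κ : Type*} [Finite κ]
    (hcard : 2 * (Nat.card κ * Nat.card κ) ≤ Nat.card ι) {R : Set V} (hR : R.Finite)
    (hT : IsCliqueModel (bichromatic G c) T) (hτ : ∀ i, τ i ∈ T i)
    (hRT : ∀ v ∈ R, ∀ i, v ∉ T i)
    (hM : IsMatchable (prism G) (R ×ˢ Set.univ ∪ Set.range fun i => (τ i, c (τ i)))) :
    HasOddCliqueModel G κ := by
  classical
  induction hn : R.ncard using Nat.strong_induction_on generalizing R T c τ with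
  | _ n ih =>
  have τ_inj : Function.Injective τ := fun i j h => hT.eq_of_mem (hτ i) (h ▸ hτ j)
  have hRτ : ∀ i, τ i ∉ R := fun i h => hRT _ h i (hτ i)
  obtain ⟨N, hN⟩ := hM
  by_cases hport : ∃ i, (N (τ i, c (τ i))).1 ∈ R
  · obtain ⟨i, hv⟩ := hport
    obtain ⟨v, b, hvb⟩ : ∃ v b, N (τ i, c (τ i)) = (v, b) := ⟨_, _, rfl⟩
    have hpair := isMatchable_diff_pair hN (.inr ⟨i, rfl⟩)
    have hadj := (hN (τ i, c (τ i)) (.inr ⟨i, rfl⟩)).2.2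
    rw [hvb] at hv hpair hadj
    obtain ⟨hτv, rfl⟩ := prism_adj_of_ne (fun h => hRτ i (by rwa [h])) hadj
    rw [← prod_univ_union_range_update τ_inj hRτ hv] at hpair
    refine ih _ (hn ▸ Set.ncard_sdiff_singleton_lt_of_mem hv hR) hR.sdiff
      (hT.update_insert (hτ i) (hRT v hv) hτv) (fun j => ?_) (fun w hw j => ?_) hpair rfl
    · by_cases hj : j = i
      · subst hj
        rw [Function.update_self, Function.update_self]
        exact Set.mem_insert _ _
      · rw [Function.update_of_ne hj, Function.update_of_ne hj]
        exact hτ j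
    · have := hRT w hw.1
      have hwv := hw.2
      simp only [Function.update_apply, Set.mem_singleton_iff] at hwv ⊢
      grind
  · have hη : ∀ i, ∃ j, (τ j, c (τ j)) = N (τ i, c (τ i)) := fun i =>
      (hN _ (.inr ⟨i, rfl⟩)).1.resolve_left fun h => hport ⟨i, h.1⟩
    choose η hη using hη
    have hadj : ∀ i, (prism G).Adj (τ i, c (τ i)) (τ (η i), c (τ (η i))) := fun i =>
      hη i ▸ (hN _ (.inr ⟨i, rfl⟩)).2.2
    have η_ne : ∀ i, η i ≠ i := fun i h => (h ▸ hadj i).ne rfl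
    refine hasOddCliqueModel_of_involution hT hτ (η := η) (fun i => ⟨τ_inj ?_, η_ne i⟩)
      (fun i => prism_adj_of_ne (τ_inj.ne (η_ne i).symm) (hadj i)) hcard
    exact congrArg Prod.fst (by rw [hη, hη, (hN _ (.inr ⟨i, rfl⟩)).2.1] :
      (τ (η (η i)), c (τ (η (η i)))) = (τ i, c (τ i)))

end PortModel

theorem IsCliqueModel.comp {G : SimpleGraph V} {ι κ : Type*} {T : ι → Set V}
    (hT : IsCliqueModel G T) {f : κ → ι} (hf : Function.Injective f) : IsCliqueModel G (T ∘ f) :=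
  ⟨fun i => hT.connected (f i), fun _ _ h => hT.disjoint (hf.ne h),
    fun _ _ h => hT.exists_adj (hf.ne h)⟩

theorem hasOddCliqueModel_of_hasPacking [Finite V] {G : SimpleGraph V} {ι κ : Type*} [Finite κ]
    {T : ι → Set V} {c : V → Bool} (hT : IsCliqueModel (bichromatic G c) T) {K E : Finset ι}
    (hE : E ⊆ K) (hp : HasPacking G T c K E)
    (hcard : 2 * (Nat.card κ * Nat.card κ) ≤ E.card) : HasOddCliqueModel G κ := by
  obtain ⟨τ, hτ, hM⟩ := hp
  refine hasOddCliqueModel_of_isMatchable_ports (ι := E) (τ := fun e => τ e) (R := (⋃ i ∈ K, T i)ᶜ)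
    (by simpa using hcard) (Set.toFinite _) (hT.comp Subtype.val_injective)
    (fun e => hτ e e.2) (fun v hv e he => hv (Set.mem_biUnion (hE e.2) he)) ?_
  convert hM using 2
  ext a
  simp only [Set.mem_range, Subtype.exists, Set.mem_ofPred_eq, exists_prop, eq_comm]

section Tutte

variable {X : Type u} {L : Type v} {H : SimpleGraph X} {S U : Set X} {comp : X → L} {O : Set L}

/-- A Tutte barrier `U` for the subgraph of `H` induced on `S`: the map `comp` is constant along
edges avoiding `U`, and each of its fibres over `O` contains an odd number of vertices of `S \ U`.
The fibres of `comp` play the role of the components of `S \ U`, but need not be connected. -/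
structure IsOddBarrier (H : SimpleGraph X) (S U : Set X) (comp : X → L) (O : Set L) : Prop where
  comp_eq : ∀ ⦃x⦄, x ∈ S \ U → ∀ ⦃y⦄, y ∈ S \ U → H.Adj x y → comp x = comp y
  odd : ∀ C ∈ O, Odd {x ∈ S \ U | comp x = C}.ncard

theorem IsMatchable.even_ncard (h : IsMatchable H S) (hS : S.Finite) : Even S.ncard := by
  obtain ⟨N, hN⟩ := h
  exact even_ncard_of_involution hS N fun a ha =>
    ⟨(hN a ha).1, (hN a ha).2.1, (hN a ha).2.2.ne'⟩

theorem isMatchable_image {Y : Type*} {H' : SimpleGraph Y} {f : X → Y} (hf : Set.InjOn f S)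
    {N : X → X} (hN : ∀ a ∈ S, N a ∈ S ∧ N (N a) = a ∧ H'.Adj (f a) (f (N a))) :
    IsMatchable H' (f '' S) := by
  obtain hY | hY := isEmpty_or_nonempty X
  · rw [Set.eq_empty_of_isEmpty S, Set.image_empty]
    exact isMatchable_empty
  refine ⟨fun b => f (N (Function.invFunOn f S b)), ?_⟩
  rintro _ ⟨a, ha, rfl⟩
  obtain ⟨hmem, hinv, hadj⟩ := hN a ha
  simp only [hf.leftInvOn_invFunOn ha, hf.leftInvOn_invFunOn hmem, hinv]
  exact ⟨⟨_, hmem, rfl⟩, trivial, hadj⟩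

theorem isMatchable_univ_of_isPerfectMatching {M : H.Subgraph} (hM : M.IsPerfectMatching) :
    IsMatchable H Set.univ := by
  choose N hN huniq using Subgraph.isPerfectMatching_iff.1 hM
  exact ⟨N, fun x _ => ⟨trivial, (huniq (N x) x (hN x).symm).symm, (hN x).adj_sub⟩⟩

theorem ncard_add_two_le_of_isTutteViolator [Finite X] (hX : Even (Nat.card X))
    (hU : H.IsTutteViolator U) :
    U.ncard + 2 ≤ ((⊤ : H.Subgraph).deleteVerts U).coe.oddComponents.ncard := by
  have hodd := odd_ncard_oddComponents ((⊤ : H.Subgraph).deleteVerts U).coe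
  have hverts : Nat.card ((⊤ : H.Subgraph).deleteVerts U).verts = Uᶜ.ncard := by
    rw [Subgraph.deleteVerts_verts, Subgraph.verts_top, Set.compl_eq_univ_sdiff,
      Nat.card_coe_set_eq]
  rw [hverts] at hodd
  have hadd := Set.ncard_add_ncard_compl U
  have hlt : U.ncard < _ := hU
  grind

theorem exists_isOddBarrier_univ [Finite X] (hX : Even (Nat.card X))
    (hH : ¬IsMatchable H Set.univ) :
    ∃ (U : Set X) (L : Type u) (comp : X → L) (O : Set L),
      IsOddBarrier H Set.univ U comp O ∧ U.ncard + 2 ≤ O.ncard := by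
  classical
  have hM : ¬∃ M : H.Subgraph, M.IsPerfectMatching := fun ⟨_, hM⟩ =>
    hH (isMatchable_univ_of_isPerfectMatching hM)
  rw [SimpleGraph.tutte, not_forall_not] at hM
  obtain ⟨U, hU⟩ := hM
  set H' := (⊤ : H.Subgraph).deleteVerts U with hH'
  have mem_verts : ∀ {x}, x ∈ H'.verts ↔ x ∉ U := by simp [hH']
  let comp : X → Option H'.coe.ConnectedComponent := fun x =>
    if h : x ∈ H'.verts then some (H'.coe.connectedComponentMk ⟨x, h⟩) else none
  have comp_of_notMem : ∀ {x} (h : x ∉ U), comp x = some (H'.coe.connectedComponentMk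
    ⟨x, mem_verts.2 h⟩) := fun h => dif_pos (mem_verts.2 h)
  refine ⟨U, _, comp, some '' H'.coe.oddComponents, ⟨?_, ?_⟩, ?_⟩
  · rintro x ⟨-, hx⟩ y ⟨-, hy⟩ hxy
    rw [comp_of_notMem hx, comp_of_notMem hy, Option.some_inj, ConnectedComponent.eq]
    refine Adj.reachable ?_
    exact Subgraph.deleteVerts_adj.2 ⟨trivial, hx, trivial, hy, hxy⟩
  · rintro _ ⟨C, hC, rfl⟩
    have himage : {x ∈ Set.univ \ U | comp x = some C} = (↑) '' C.supp := by
      ext x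
      simp only [Set.mem_ofPred_eq, Set.mem_sdiff, Set.mem_univ, true_and, Set.mem_image,
        Subtype.exists, ConnectedComponent.mem_supp_iff, exists_and_right, exists_eq_right]
      constructor
      · rintro ⟨hx, hxC⟩
        exact ⟨mem_verts.2 hx, Option.some_inj.1 ((comp_of_notMem hx).symm.trans hxC)⟩
      · rintro ⟨hx, hxC⟩
        exact ⟨mem_verts.1 hx, (dif_pos hx).trans (congrArg some hxC)⟩
    rw [himage, Set.ncard_image_of_injective _ Subtype.val_injective]
    exact hC
  · rw [Set.ncard_image_of_injective _ (Option.some_injective _)]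
    exact ncard_add_two_le_of_isTutteViolator hX hU

theorem exists_isOddBarrier (hS : S.Finite) (hcard : Even S.ncard) (hH : ¬IsMatchable H S) :
    ∃ (U : Set X) (L : Type u) (comp : X → L) (O : Set L),
      U ⊆ S ∧ IsOddBarrier H S U comp O ∧ U.ncard + 2 ≤ O.ncard := by
  have := hS.to_subtype
  obtain ⟨U, L, comp, O, hU, hUO⟩ := exists_isOddBarrier_univ (H := H.induce S)
    (by rwa [Nat.card_coe_set_eq]) fun ⟨N, hN⟩ => hH <| by
      simpa using isMatchable_image (f := Subtype.val) (S := Set.univ)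
        Subtype.val_injective.injOn hN
  obtain ⟨C₀, -⟩ : O.Nonempty := Set.nonempty_of_ncard_ne_zero (by omega)
  let comp' : X → L := Function.extend (↑) comp fun _ => C₀
  have comp'_coe : ∀ x : S, comp' x = comp x := Subtype.val_injective.extend_apply comp _
  refine ⟨(↑) '' U, L, comp', O, Subtype.coe_image_subset S U, ⟨?_, fun C hC => ?_⟩, ?_⟩
  · rintro x ⟨hx, hxU⟩ y ⟨hy, hyU⟩ hxy
    rw [comp'_coe ⟨x, hx⟩, comp'_coe ⟨y, hy⟩]
    exact hU.comp_eq ⟨trivial, fun h => hxU ⟨_, h, rfl⟩⟩ ⟨trivial, fun h => hyU ⟨_, h, rfl⟩⟩ hxy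
  · have himage : {x ∈ S \ ((↑) : S → X) '' U | comp' x = C} =
        ((↑) : S → X) '' {x ∈ Set.univ \ U | comp x = C} := by
      ext x
      simp only [Set.mem_ofPred_eq, Set.mem_sdiff, Set.mem_image, Subtype.exists, Set.mem_univ,
        true_and, exists_and_right, exists_eq_right]
      grind
    rw [himage, Set.ncard_image_of_injective _ Subtype.val_injective]
    exact hU.odd C hC
  · rwa [Set.ncard_image_of_injective _ Subtype.val_injective]

theorem IsOddBarrier.ncard_covered_le (h : IsOddBarrier H S U comp O) (hS : S.Finite) (hUS : U ⊆ S)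
    {M : Set X} (hMS : M ⊆ S) (hM : IsMatchable H M) :
    {C ∈ O | ∀ x ∈ S \ U, comp x = C → x ∈ M}.ncard ≤ U.ncard := by
  obtain ⟨N, hN⟩ := hM
  have exit : ∀ C ∈ {C ∈ O | ∀ x ∈ S \ U, comp x = C → x ∈ M},
      ∃ x ∈ M \ U, comp x = C ∧ N x ∈ U := by
    rintro C ⟨hC, hCM⟩
    by_contra! hexit
    refine Nat.not_even_iff_odd.2 (h.odd C hC) (even_ncard_of_involution
      (hS.subset fun x hx => hx.1.1) N fun a ⟨ha, haC⟩ => ?_)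
    obtain ⟨hmem, hinv, hadj⟩ := hN a (hCM a ha haC)
    have hNa : N a ∈ S \ U := ⟨hMS hmem, hexit a ⟨hCM a ha haC, ha.2⟩ haC⟩
    exact ⟨⟨hNa, (h.comp_eq ha hNa hadj).symm.trans haC⟩, hinv, hadj.ne'⟩
  refine (Set.ncard_le_ncard (t := (fun y => comp (N y)) '' U) (fun C hC => ?_)
    ((hS.subset hUS).image _)).trans (Set.ncard_image_le (hS.subset hUS))
  obtain ⟨x, hx, hxC, hxU⟩ := exit C hC
  exact ⟨N x, hxU, (congrArg comp (hN x hx.1).2.1).trans hxC⟩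

theorem IsOddBarrier.separates (h : IsOddBarrier H S U comp O) (hS : S.Finite) (hUS : U ⊆ S)
    (hUO : U.ncard + 2 ≤ O.ncard) {u v : X} (hM : IsMatchable H (S \ {u, v})) :
    u ∉ U ∧ v ∉ U ∧ comp u ≠ comp v := by
  have hcovered := h.ncard_covered_le hS hUS Set.sdiff_subset hM
  set O₁ := {C ∈ O | ∀ x ∈ S \ U, comp x = C → x ∈ S \ {u, v}} with hO₁
  have hO : O.Finite := Set.finite_of_ncard_ne_zero (by omega)
  have hrest : 1 < (O \ O₁).ncard := by
    have := Set.ncard_sdiff_add_ncard_of_subset (s := O₁) (Set.sep_subset O _) hO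
    omega
  have mem_pair : ∀ C ∈ O \ O₁, (u ∉ U ∧ comp u = C) ∨ (v ∉ U ∧ comp v = C) := by
    simp only [hO₁, Set.mem_sdiff, Set.mem_ofPred_eq, Set.mem_insert_iff, Set.mem_singleton_iff]
    grind
  obtain ⟨C, C', hC, hC', hne⟩ := (Set.one_lt_ncard_iff hO.sdiff).1 hrest
  grind

end Tutte

section Deficiency

variable {X : Type u} {H : SimpleGraph X} {M I : Set X} {q : ℕ}

/-- The graph obtained from `H` by adding a clique on `Fin q` all of whose vertices are joined to
all of `I`. -/
def addClique (H : SimpleGraph X) (I : Set X) (q : ℕ) : SimpleGraph (X ⊕ Fin q) where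
  Adj
    | .inl x, .inl y => H.Adj x y
    | .inl x, .inr _ => x ∈ I
    | .inr _, .inl y => y ∈ I
    | .inr p, .inr p' => p ≠ p'
  symm := ⟨by
    rintro (x | p) (y | p') h
    exacts [Adj.symm h, h, h, h.symm]⟩
  loopless := ⟨by
    rintro (x | p) h
    exacts [H.loopless.irrefl x h, h rfl]⟩

theorem isMatchable_addClique {E J : Set X} (hJI : J ⊆ I) (hEJ : E ⊆ J) (hJ : J.Finite)
    (hq : J.ncard = E.ncard + q) (hdisj : Disjoint M J) (hM : IsMatchable H (M ∪ E)) :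
    IsMatchable (addClique H I q) (Sum.inl '' (M ∪ J) ∪ Set.range Sum.inr) := by
  have := (hJ.sdiff (t := E)).to_subtype
  obtain ⟨N, hN⟩ := hM
  let γ : ↥(J \ E) ≃ Fin q := Finite.equivFinOfCardEq <| by
    have := Set.ncard_sdiff_add_ncard_of_subset hEJ hJ
    rw [Nat.card_coe_set_eq]
    omega
  have hpairs : IsMatchable (addClique H I q)
      (⋃ k : ↥(J \ E), {Sum.inl (k : X), Sum.inr (γ k)}) :=
    IsMatchable.iUnion (fun k k' hkk => by
      have hγ := γ.injective.ne hkk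
      simp only [Function.onFun, Set.disjoint_left, Set.mem_insert_iff, Set.mem_singleton_iff]
      grind) fun k => isMatchable_pair (hJI k.2.1)
  have hinl : IsMatchable (addClique H I q) (Sum.inl '' (M ∪ E)) :=
    isMatchable_image Sum.inl_injective.injOn hN
  convert hinl.union ?_ hpairs using 1
  · ext (x | p)
    · simp only [Set.mem_union, Sum.inl_injective.mem_set_image, Set.mem_range, Set.mem_iUnion,
        Set.mem_insert_iff, Set.mem_singleton_iff, Subtype.exists, Set.mem_sdiff]
      grind
    · obtain ⟨k, rfl⟩ := γ.surjective p
      simp only [Set.mem_union, Set.mem_range_self, or_true, Set.mem_iUnion, Set.mem_insert_iff,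
        Set.mem_singleton_iff, true_iff]
      exact .inr ⟨k, .inr rfl⟩
  · rw [Set.disjoint_left] at hdisj ⊢
    simp only [Set.mem_iUnion, Set.mem_insert_iff, Set.mem_singleton_iff]
    grind

theorem exists_isMatchable_of_addClique (hI : I.Finite) (hdisj : Disjoint M I)
    (h : IsMatchable (addClique H I q) (Sum.inl '' (M ∪ I) ∪ Set.range Sum.inr)) :
    ∃ E ⊆ I, IsMatchable H (M ∪ E) ∧ I.ncard ≤ E.ncard + q := by
  obtain ⟨N, hN⟩ := h
  set E : Set X := {x ∈ I | ∃ y, N (Sum.inl x) = Sum.inl y}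
  have hN_inl : ∀ x ∈ M ∪ I, N (N (Sum.inl x)) = Sum.inl x ∧
      N (Sum.inl x) ∈ Sum.inl '' (M ∪ I) ∪ Set.range Sum.inr ∧
      (addClique H I q).Adj (Sum.inl x) (N (Sum.inl x)) := fun x hx => by
    obtain ⟨hmem, hinv, hadj⟩ := hN (Sum.inl x) (.inl ⟨x, hx, rfl⟩)
    exact ⟨hinv, hmem, hadj⟩
  refine ⟨E, Set.sep_subset _ _, ⟨fun x => (N (Sum.inl x)).elim id fun _ => x, ?_⟩, ?_⟩
  · intro x hx
    have hxI : x ∈ M ∪ I := hx.imp id fun h => h.1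
    obtain ⟨hinv, hmem, hadj⟩ := hN_inl x hxI
    rcases hNx : N (Sum.inl x) with y | p
    · rw [hNx] at hinv hmem hadj
      have hy : y ∈ M ∪ I := by simpa using hmem
      simp only [hNx, hinv, Sum.elim_inl, id]
      exact ⟨hy.imp id fun h => ⟨h, x, hinv⟩, trivial, hadj⟩
    · rw [hNx] at hadj
      exact (hx.elim (fun h => Set.disjoint_left.1 hdisj h hadj) fun ⟨_, y, hy⟩ =>
        Sum.inl_ne_inr (hy.symm.trans hNx)).elim
  · have hle : (I \ E).ncard ≤ (Set.range (Sum.inr : Fin q → X ⊕ Fin q)).ncard := by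
      refine Set.ncard_le_ncard_of_injOn (fun x => N (Sum.inl x)) (fun x hx => ?_)
        fun x hx y hy hxy => ?_
      · rcases hNx : N (Sum.inl x) with y | p
        · exact (hx.2 ⟨hx.1, y, hNx⟩).elim
        · exact ⟨p, rfl⟩
      · rw [← Sum.inl_injective.eq_iff (f := Sum.inl), ← (hN_inl x (.inr hx.1)).1,
          ← (hN_inl y (.inr hy.1)).1]
        exact congrArg N hxy
    rw [← Set.image_univ, Set.ncard_image_of_injective _ Sum.inr_injective, Set.ncard_univ,
      Nat.card_fin] at hle
    have := Set.ncard_sdiff_add_ncard_of_subset (s := E) (Set.sep_subset I _) hI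
    omega

theorem isMatchable_addClique_diff_pair {e : ℕ} {u v : X} (hu : u ∈ I) (hv : v ∈ I) (huv : u ≠ v)
    (hI : I.Finite) (hdisj : Disjoint M I) (hcard : I.ncard = e + 2 + q)
    (hpack : ∀ E ⊆ I, E.ncard = e → IsMatchable H (M ∪ E)) :
    IsMatchable (addClique H I q)
      ((Sum.inl '' (M ∪ I) ∪ Set.range Sum.inr) \ {Sum.inl u, Sum.inl v}) := by
  have huvI : {u, v} ⊆ I := Set.pair_subset hu hv
  have hJ : (I \ {u, v}).ncard = e + q := by
    have := Set.ncard_sdiff_add_ncard_of_subset huvI hI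
    rw [Set.ncard_pair huv] at this
    omega
  obtain ⟨E, hE, hEcard⟩ := Set.exists_subset_card_eq (n := e) (s := I \ {u, v}) (by omega)
  convert isMatchable_addClique (q := q) Set.sdiff_subset hE hI.sdiff (by omega)
    (hdisj.mono_right Set.sdiff_subset) (hpack E (hE.trans Set.sdiff_subset) hEcard) using 1
  rw [Set.disjoint_left] at hdisj
  ext (x | p)
  · simp only [Set.mem_sdiff, Set.mem_union, Sum.inl_injective.mem_set_image, Set.mem_range,
      Set.mem_insert_iff, Set.mem_singleton_iff, Sum.inl.injEq]
    grind
  · simp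

theorem IsOddBarrier.of_addClique {S : Set X} {U : Set (X ⊕ Fin q)} {L : Type v}
    {comp : X ⊕ Fin q → L} {O O' : Set L}
    (h : IsOddBarrier (addClique H I q) (Sum.inl '' S ∪ Set.range Sum.inr) U comp O)
    (hU : Set.range Sum.inr ⊆ U) (hO : O' ⊆ O) :
    IsOddBarrier H S (Sum.inl ⁻¹' U) (comp ∘ Sum.inl) O' where
  comp_eq x hx y hy hxy := h.comp_eq ⟨.inl ⟨x, hx.1, rfl⟩, hx.2⟩ ⟨.inl ⟨y, hy.1, rfl⟩, hy.2⟩ hxy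
  odd C hC := by
    convert h.odd C (hO hC) using 1
    rw [← Set.ncard_image_of_injective _ (Sum.inl_injective (β := Fin q))]
    congr 1
    ext (x | p)
    · simp
    · simpa using fun h' => absurd (hU ⟨p, rfl⟩) h'

/-- Tutte's theorem applies because a perfect matching would leave `e + 2` vertices of `I` matched
in `H`. Deleting two vertices of `I` does allow one, which separates the vertices of `I`. -/
theorem exists_isOddBarrier_addClique {e : ℕ} (hM : M.Finite) (hI : I.Finite)
    (hdisj : Disjoint M I) (hpack : ∀ E ⊆ I, E.ncard = e → IsMatchable H (M ∪ E))
    (hmax : ∀ E ⊆ I, IsMatchable H (M ∪ E) → E.ncard ≤ e) (hq : I.ncard = e + 2 + q) :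
    ∃ (U : Set (X ⊕ Fin q)) (L : Type u) (comp : X ⊕ Fin q → L) (O : Set L),
      U ⊆ Sum.inl '' M ∪ Set.range Sum.inr ∧
      IsOddBarrier (addClique H I q) (Sum.inl '' (M ∪ I) ∪ Set.range Sum.inr) U comp O ∧
      U.ncard + 2 ≤ O.ncard ∧ Set.range Sum.inr ⊆ U ∧ Set.InjOn (comp ∘ Sum.inl) I := by
  set S : Set (X ⊕ Fin q) := Sum.inl '' (M ∪ I) ∪ Set.range Sum.inr
  have hSfin : S.Finite := ((hM.union hI).image _).union (Set.finite_range _)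
  have hnear : ∀ u ∈ I, ∀ v ∈ I, u ≠ v →
      IsMatchable (addClique H I q) (S \ {Sum.inl u, Sum.inl v}) := fun u hu v hv huv =>
    isMatchable_addClique_diff_pair hu hv huv hI hdisj hq hpack
  obtain ⟨u₀, hu₀, v₀, hv₀, huv₀⟩ := (Set.one_lt_ncard hI).1 (show 1 < I.ncard by omega)
  have heven : Even S.ncard := by
    have := Set.ncard_sdiff_add_ncard_of_subset (s := {Sum.inl u₀, Sum.inl v₀}) (t := S)
      (Set.pair_subset (.inl ⟨_, .inr hu₀, rfl⟩) (.inl ⟨_, .inr hv₀, rfl⟩)) hSfin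
    rw [Set.ncard_pair (Sum.inl_injective.ne huv₀)] at this
    exact this ▸ ((hnear u₀ hu₀ v₀ hv₀ huv₀).even_ncard hSfin.sdiff).add even_two
  have hnot : ¬IsMatchable (addClique H I q) S := fun h => by
    obtain ⟨E, hE, hmatch, hle⟩ := exists_isMatchable_of_addClique hI hdisj h
    have := hmax E hE hmatch
    omega
  obtain ⟨U, L, comp, O, hUS, hU, hUO⟩ := exists_isOddBarrier hSfin heven hnot
  have hsep : ∀ u ∈ I, ∀ v ∈ I, u ≠ v →
      Sum.inl u ∉ U ∧ Sum.inl v ∉ U ∧ comp (Sum.inl u) ≠ comp (Sum.inl v) :=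
    fun u hu v hv huv => hU.separates hSfin hUS hUO (hnear u hu v hv huv)
  have hIU : ∀ u ∈ I, Sum.inl u ∉ U := fun u hu => by
    by_cases h : u = u₀
    · exact h ▸ (hsep u₀ hu₀ v₀ hv₀ huv₀).1
    · exact (hsep u hu u₀ hu₀ h).1
  refine ⟨U, L, comp, O, fun x hx => ?_, hU, hUO, ?_, fun u hu v hv huv => ?_⟩
  · obtain ⟨y, hy | hy, rfl⟩ | hx' := hUS hx
    exacts [.inl ⟨y, hy, rfl⟩, absurd hx (hIU y hy), .inr hx']
  · rintro _ ⟨p, rfl⟩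
    by_contra hp
    have hadj : ∀ u ∈ I, comp (Sum.inl u) = comp (Sum.inr p) := fun u hu =>
      hU.comp_eq ⟨.inl ⟨u, .inr hu, rfl⟩, hIU u hu⟩ ⟨.inr ⟨p, rfl⟩, hp⟩ hu
    exact (hsep u₀ hu₀ v₀ hv₀ huv₀).2.2 ((hadj u₀ hu₀).trans (hadj v₀ hv₀).symm)
  · by_contra hne
    exact (hsep u hu v hv hne).2.2 huv

theorem ncard_preimage_inl_add_ncard_univ {A B : Type*} {U : Set (A ⊕ B)} (hU : U.Finite)
    (h : Set.range Sum.inr ⊆ U) :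
    (Sum.inl ⁻¹' U).ncard + (Set.univ : Set B).ncard = U.ncard := by
  have hunion : Sum.inl '' (Sum.inl ⁻¹' U) ∪ Sum.inr '' Set.univ = U := by
    ext (x | p)
    · simp
    · simpa using h ⟨p, rfl⟩
  rw [← Set.ncard_image_of_injective _ (Sum.inl_injective (β := B)),
    ← Set.ncard_image_of_injective Set.univ (Sum.inr_injective (α := A)),
    ← Set.ncard_union_eq (by simp [Set.disjoint_left]) (hU.subset (by simp)) (hU.subset (by simpa)),
    hunion]

theorem exists_isOddBarrier_of_maximal {e : ℕ} (hM : M.Finite) (hI : I.Finite)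
    (hdisj : Disjoint M I) (hpack : ∀ E ⊆ I, E.ncard = e → IsMatchable H (M ∪ E))
    (hmax : ∀ E ⊆ I, IsMatchable H (M ∪ E) → E.ncard ≤ e) (hcard : e + 2 ≤ I.ncard) :
    ∃ (U : Set X) (L : Type u) (comp : X → L) (O : Set L),
      U ⊆ M ∧ IsOddBarrier H (M ∪ I) U comp O ∧ Set.InjOn comp I ∧ Disjoint O (comp '' I) ∧
        U.ncard ≤ O.ncard + e := by
  obtain ⟨q, hq⟩ := Nat.exists_eq_add_of_le hcard
  obtain ⟨U, L, comp, O, hUM, hU, hUO, hqU, hinj⟩ :=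
    exists_isOddBarrier_addClique hM hI hdisj hpack hmax hq
  refine ⟨Sum.inl ⁻¹' U, L, comp ∘ Sum.inl, O \ (comp ∘ Sum.inl) '' I,
    fun x hx => by simpa using hUM hx, hU.of_addClique hqU Set.sdiff_subset, hinj,
    Set.disjoint_sdiff_left, ?_⟩
  have hUcard := ncard_preimage_inl_add_ncard_univ
    (((hM.image _).union (Set.finite_range _)).subset hUM) hqU
  have hOcard := Set.ncard_le_ncard_sdiff_add_ncard O _ (hI.image (comp ∘ Sum.inl))
  have hIcard := Set.ncard_image_le (f := comp ∘ Sum.inl) hI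
  rw [Set.ncard_univ, Nat.card_fin] at hUcard
  omega

end Deficiency

section PortGraph

variable {ι : Type*} {G : SimpleGraph V} {T : ι → Set V} {c : V → Bool} {K E : Finset ι}

/-- The prism over `G` with an additional vertex `inr i` for each `i`, standing for the not yet
chosen port of the branch set `T i`. -/
def portGraph (G : SimpleGraph V) (T : ι → Set V) (c : V → Bool) :
    SimpleGraph (V × Bool ⊕ ι) where
  Adj
    | .inl a, .inl b => (prism G).Adj a b
    | .inl a, .inr i => ∃ t ∈ T i, (prism G).Adj a (t, c t)
    | .inr i, .inl a => ∃ t ∈ T i, (prism G).Adj a (t, c t)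
    | .inr _, .inr _ => False
  symm := ⟨by
    rintro (a | i) (b | j) h
    exacts [Adj.symm h, h, h, h]⟩
  loopless := ⟨by
    rintro (a | i) h
    exacts [(prism G).loopless.irrefl a h, h]⟩

/-- The vertices of `portGraph` to be matched by a packing of the branch sets in `K` with ports in
the branch sets in `E`. -/
def portSet (T : ι → Set V) (K E : Finset ι) : Set (V × Bool ⊕ ι) :=
  Sum.inl '' ((⋃ i ∈ K, T i)ᶜ ×ˢ Set.univ) ∪ Sum.inr '' (E : Set ι)

theorem IsBipartiteExpansion.not_prism_adj (hT : IsBipartiteExpansion G T c) {i j : ι} {x y : V}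
    (hij : i ≠ j) (hx : x ∈ T i) (hy : y ∈ T j) : ¬(prism G).Adj (x, c x) (y, c y) := fun h =>
  have ⟨hxy, hc⟩ := prism_adj_of_ne (by rintro rfl; exact hij (hT.eq_of_mem hx hy)) h
  hT.color_ne hij hx hy hxy hc

theorem IsBipartiteExpansion.isMatchable_portSet (hT : IsBipartiteExpansion G T c) (hE : E ⊆ K)
    (h : HasPacking G T c K E) : IsMatchable (portGraph G T c) (portSet T K E) := by
  classical
  obtain ⟨τ, hτ, N, hN⟩ := h
  let f : V × Bool → V × Bool ⊕ ι := fun a =>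
    if h : ∃ e ∈ E, a.1 ∈ T e then .inr h.choose else .inl a
  have f_port : ∀ {e}, e ∈ E → f (τ e, c (τ e)) = .inr e := fun {e} he => by
    have h : ∃ e' ∈ E, τ e ∈ T e' := ⟨e, he, hτ e he⟩
    rw [show f (τ e, c (τ e)) = .inr h.choose from dif_pos h,
      hT.eq_of_mem h.choose_spec.2 (hτ e he)]
  have f_outside : ∀ {a : V × Bool}, a.1 ∉ ⋃ i ∈ K, T i → f a = .inl a := fun ha =>
    dif_neg fun ⟨e, he, hae⟩ => ha (Set.mem_biUnion (hE he) hae)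
  convert isMatchable_image (f := f)
    (S := (⋃ i ∈ K, T i)ᶜ ×ˢ Set.univ ∪ {a | ∃ e ∈ E, a = (τ e, c (τ e))}) ?_ (N := N)
    fun a ha => ?_ using 1
  · rw [Set.image_union]
    refine congrArg₂ _ (Set.image_congr fun a ha => (f_outside ha.1).symm) (Set.ext fun b => ?_)
    exact ⟨fun ⟨e, he, hb⟩ => ⟨_, ⟨e, he, rfl⟩, (f_port he).trans hb⟩,
      by rintro ⟨_, ⟨e, he, rfl⟩, hb⟩; exact ⟨e, he, (f_port he).symm.trans hb⟩⟩
  · rintro a (⟨ha, -⟩ | ⟨e, he, rfl⟩) b (⟨hb, -⟩ | ⟨e', he', rfl⟩) hab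
    · rwa [f_outside ha, f_outside hb, Sum.inl.injEq] at hab
    · rw [f_outside ha, f_port he'] at hab
      cases hab
    · rw [f_port he, f_outside hb] at hab
      cases hab
    · rw [f_port he, f_port he', Sum.inr.injEq] at hab
      rw [hab]
  · obtain ⟨hmem, hinv, hadj⟩ := hN a ha
    refine ⟨hmem, hinv, ?_⟩
    generalize N a = b at hmem hadj
    obtain ⟨ha, -⟩ | ⟨e, he, rfl⟩ := ha <;> obtain ⟨hb, -⟩ | ⟨e', he', rfl⟩ := hmem
    · rwa [f_outside ha, f_outside hb]
    · rw [f_outside ha, f_port he']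
      exact ⟨_, hτ e' he', hadj⟩
    · rw [f_port he, f_outside hb]
      exact ⟨_, hτ e he, hadj.symm⟩
    · refine absurd hadj (hT.not_prism_adj ?_ (hτ e he) (hτ e' he'))
      rintro rfl
      exact (prism G).loopless.irrefl _ hadj

theorem IsCliqueModel.hasPacking_of_isMatchable_portSet (hT : IsCliqueModel (bichromatic G c) T)
    (hE : E ⊆ K) (h : IsMatchable (portGraph G T c) (portSet T K E)) : HasPacking G T c K E := by
  obtain ⟨N, hN⟩ := h
  have port : ∀ e, ∃ t ∈ T e, e ∈ E → ∀ a, N (.inr e) = .inl a → (prism G).Adj a (t, c t) := by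
    intro e
    by_cases he : e ∈ E
    · obtain ⟨-, -, hadj⟩ := hN (.inr e) (.inr ⟨e, he, rfl⟩)
      generalize N (.inr e) = b at hadj ⊢
      obtain a | i := b
      · obtain ⟨t, ht, hat⟩ := hadj
        exact ⟨t, ht, fun _ _ h => Sum.inl.inj h ▸ hat⟩
      · exact hadj.elim
    · obtain ⟨⟨t, ht⟩⟩ := (hT.connected e).nonempty
      exact ⟨t, ht, fun h => absurd h he⟩
  choose τ hτ hadj using port
  let g : V × Bool ⊕ ι → V × Bool := Sum.elim id fun e => (τ e, c (τ e))
  have port_mem : ∀ {e}, e ∈ E → τ e ∈ ⋃ i ∈ K, T i := fun he =>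
    Set.mem_biUnion (hE he) (hτ _)
  refine ⟨τ, fun e _ => hτ e, ?_⟩
  convert isMatchable_image (f := g) (S := portSet T K E) ?_ (N := N) (H' := prism G)
    fun a ha => ?_ using 1
  · rw [portSet, Set.image_union, Set.image_image, Set.image_image]
    exact congrArg₂ _ (Set.image_id _).symm (by ext; simp [g, eq_comm])
  · rintro _ (⟨a, ha, rfl⟩ | ⟨e, he, rfl⟩) _ (⟨b, hb, rfl⟩ | ⟨e', he', rfl⟩) hab
    · exact congrArg _ hab
    · exact absurd (show a.1 = τ e' from congrArg Prod.fst hab) fun h => ha.1 (h ▸ port_mem he')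
    · exact absurd (show τ e = b.1 from congrArg Prod.fst hab) fun h => hb.1 (h ▸ port_mem he)
    · have hτeq : τ e = τ e' := congrArg Prod.fst hab
      rw [hT.eq_of_mem (hτ e) (hτeq ▸ hτ e')]
  · obtain ⟨hmem, hinv, hNadj⟩ := hN a ha
    refine ⟨hmem, hinv, ?_⟩
    obtain ⟨a, -, rfl⟩ | ⟨e, he, rfl⟩ := ha
    · obtain ⟨b, -, hb⟩ | ⟨e, he, hb⟩ := hmem <;> rw [← hb] at hNadj hinv ⊢
      · exact hNadj
      · exact hadj e he a hinv
    · obtain ⟨b, -, hb⟩ | ⟨e', -, hb⟩ := hmem <;> rw [← hb] at hNadj ⊢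
      · exact (hadj e he b hb.symm).symm
      · exact hNadj.elim

end PortGraph

section Decomposition

theorem two_mul_ncard_le_of_subset_image {α β : Type*} {f : α → β} {S X : Set α} {O : Set β}
    (hS : S.Finite) (hX : X.Finite) (hO : O ⊆ f '' S)
    (hOX : ∀ v ∈ S, f v ∈ O → (∀ w ∈ S, f w = f v → w = v) → v ∈ X) :
    2 * O.ncard ≤ S.ncard + X.ncard := by
  have := Classical.decEq β
  lift O to Finset β using (hS.image f).subset hO
  lift S to Finset α using hS
  lift X to Finset α using hX
  simp only [Set.ncard_coe_finset, Finset.mem_coe] at hOX ⊢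
  have two_le_fiber : ∀ C ∈ O,
      2 ≤ (S.filter fun v => f v = C).card + (X.filter fun v => f v = C).card := by
    intro C hC
    obtain ⟨v, hv, rfl⟩ := hO hC
    have hvS : 0 < (S.filter fun w => f w = f v).card :=
      Finset.card_pos.2 ⟨v, Finset.mem_filter.2 ⟨hv, rfl⟩⟩
    by_cases huniq : ∀ w ∈ S, f w = f v → w = v
    · have hvX : 0 < (X.filter fun w => f w = f v).card :=
        Finset.card_pos.2 ⟨v, Finset.mem_filter.2 ⟨hOX v hv hC huniq, rfl⟩⟩
      omega
    · push Not at huniq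
      obtain ⟨w, hw, hwv, hne⟩ := huniq
      have : 1 < (S.filter fun w => f w = f v).card := Finset.one_lt_card.2
        ⟨w, Finset.mem_filter.2 ⟨hw, hwv⟩, v, Finset.mem_filter.2 ⟨hv, rfl⟩, hne⟩
      omega
  calc 2 * O.card = ∑ _C ∈ O, 2 := by rw [Finset.sum_const, smul_eq_mul, mul_comm]
    _ ≤ ∑ C ∈ O, ((S.filter fun v => f v = C).card + (X.filter fun v => f v = C).card) :=
      Finset.sum_le_sum two_le_fiber
    _ ≤ S.card + X.card := by
      rw [Finset.sum_add_distrib, Finset.sum_card_fiberwise_eq_card_filter,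
        Finset.sum_card_fiberwise_eq_card_filter]
      exact add_le_add (Finset.card_filter_le _ _) (Finset.card_filter_le _ _)

variable {ι : Type*} {L : Type*} {G : SimpleGraph V} {T : ι → Set V} {c : V → Bool}
  {K E : Finset ι} {col : V → Bool} {cls : V → L} {root : ι → L}

/-- A decomposition of `G - Y` relative to the branch sets `T i`, `i ∈ K`. The classes of `cls`
are separated from each other by the set `X`, which is properly coloured by `col`; each class
contains at most one branch set or at most one vertex of `X`, but not both. -/
structure IsDecomposition (G : SimpleGraph V) (T : ι → Set V) (c : V → Bool) (K : Finset ι)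
    (Y X : Set V) (col : V → Bool) (cls : V → L) (root : ι → L) : Prop where
  notMem_branch : ∀ ⦃v⦄, v ∈ Y ∪ X → ∀ ⦃i⦄, i ∈ K → v ∉ T i
  cls_branch : ∀ ⦃i⦄, i ∈ K → ∀ ⦃t⦄, t ∈ T i → cls t = root i
  injOn_root : Set.InjOn root K
  injOn_cls : Set.InjOn cls X
  cls_ne_root : ∀ ⦃x⦄, x ∈ X → ∀ ⦃i⦄, i ∈ K → cls x ≠ root i
  cls_eq_of_adj : ∀ ⦃v⦄, v ∉ Y ∪ X → (∀ i ∈ K, v ∉ T i) → ∀ ⦃w⦄, w ∉ Y → G.Adj v w → cls v = cls w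
  col_ne : ∀ ⦃x⦄, x ∈ X → ∀ ⦃y⦄, y ∈ X → G.Adj x y → col x ≠ col y
  col_ne_branch : ∀ ⦃x⦄, x ∈ X → ∀ ⦃i⦄, i ∈ K → ∀ ⦃t⦄, t ∈ T i → G.Adj x t → col x ≠ c t

section OfBarrier

variable {U : Set (V × Bool ⊕ ι)} {comp : V × Bool ⊕ ι → L} {O : Set L}

/-- The vertices met by the barrier `U`; `col v` is chosen such that `U` contains `(v, !col v)` if
it contains a lift of `v` at all. -/
def barrierTrace (U : Set (V × Bool ⊕ ι)) (col : V → Bool) : Set V :=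
  {v | Sum.inl (v, !col v) ∈ U}

/-- The vertices met by the barrier `U` in exactly one lift, namely `(v, !col v)`. -/
def barrierHalf (U : Set (V × Bool ⊕ ι)) (col : V → Bool) : Set V :=
  barrierTrace U col \ {v | Sum.inl (v, col v) ∈ U}

/-- The vertices of `barrierHalf` that are alone in their class, and whose class contains no branch
set. -/
def barrierSole (U : Set (V × Bool ⊕ ι)) (K : Finset ι) (col : V → Bool) (cls : V → L)
    (root : ι → L) : Set V :=
  {v ∈ barrierHalf U col | (∀ i ∈ K, cls v ≠ root i) ∧
    ∀ w ∈ barrierHalf U col, cls w = cls v → w = v}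

theorem inl_mem_portSet {v : V} (hv : ∀ i ∈ K, v ∉ T i) (b : Bool) :
    Sum.inl (v, b) ∈ portSet T K E :=
  .inl ⟨_, ⟨by simpa using hv, trivial⟩, rfl⟩

theorem notMem_branch_of_mem_barrierTrace {v : V} {i : ι}
    (hUsub : U ⊆ Sum.inl '' ((⋃ i ∈ K, T i)ᶜ ×ˢ Set.univ)) (hv : v ∈ barrierTrace U col)
    (hi : i ∈ K) : v ∉ T i := fun ht => by
  obtain ⟨_, h, heq⟩ := hUsub hv
  cases heq
  exact h.1 (Set.mem_biUnion hi ht)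

theorem IsOddBarrier.comp_inl_eq_inr {v t : V} {i : ι}
    (hU : IsOddBarrier (portGraph G T c) (portSet T K K) U comp O)
    (hUsub : U ⊆ Sum.inl '' ((⋃ i ∈ K, T i)ᶜ ×ˢ Set.univ)) (hv : ∀ i ∈ K, v ∉ T i) (hi : i ∈ K)
    (ht : t ∈ T i) (hvt : G.Adj v t) (hvU : Sum.inl (v, c t) ∉ U) :
    comp (.inl (v, c t)) = comp (.inr i) := by
  have inr_notMem : Sum.inr i ∉ U := fun h => by
    obtain ⟨_, -, h⟩ := hUsub h
    cases h
  exact hU.comp_eq ⟨inl_mem_portSet hv _, hvU⟩ ⟨.inr ⟨i, hi, rfl⟩, inr_notMem⟩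
    ⟨t, ht, boxProd_adj_left.2 hvt⟩

theorem IsOddBarrier.comp_inl_eq_inl {v w : V} {b : Bool}
    (hU : IsOddBarrier (portGraph G T c) (portSet T K K) U comp O) (hv : ∀ i ∈ K, v ∉ T i)
    (hw : ∀ i ∈ K, w ∉ T i) (hvw : G.Adj v w) (hvU : Sum.inl (v, b) ∉ U)
    (hwU : Sum.inl (w, b) ∉ U) : comp (.inl (v, b)) = comp (.inl (w, b)) :=
  hU.comp_eq ⟨inl_mem_portSet hv _, hvU⟩ ⟨inl_mem_portSet hw _, hwU⟩ (boxProd_adj_left.2 hvw)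

theorem IsOddBarrier.isDecomposition
    (hU : IsOddBarrier (portGraph G T c) (portSet T K K) U comp O)
    (hUsub : U ⊆ Sum.inl '' ((⋃ i ∈ K, T i)ᶜ ×ˢ Set.univ)) (hinj : Set.InjOn (comp ∘ .inr) K)
    (hcol : ∀ v, Sum.inl (v, col v) ∈ U → v ∈ barrierTrace U col)
    (hcls : ∀ v, (∀ i ∈ K, v ∉ T i) → cls v = comp (.inl (v, col v)))
    (hroot : ∀ i ∈ K, ∀ t ∈ T i, cls t = comp (.inr i)) :
    IsDecomposition G T c K (barrierTrace U col \ barrierSole U K col cls (comp ∘ .inr))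
      (barrierSole U K col cls (comp ∘ .inr)) col cls (comp ∘ .inr) := by
  set X := barrierSole U K col cls (comp ∘ .inr)
  refine ⟨?_, hroot, hinj, fun x hx y hy h => hy.2.2 x hx.1 h,
    fun x hx => hx.2.1, fun v hv hvT w hw hvw => ?_, fun x hx y hy hxy heq => ?_,
    fun x hx i hi t ht hxt heq => ?_⟩
  · rintro v (hv | hv)
    exacts [fun _ => notMem_branch_of_mem_barrierTrace hUsub hv.1,
      fun _ => notMem_branch_of_mem_barrierTrace hUsub hv.1.1]
  · have hvU : ∀ b, Sum.inl (v, b) ∉ U := fun b hb => hv <| by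
      obtain rfl | rfl := Bool.eq_or_eq_not b (col v)
      exacts [Set.sdiff_union_self.symm ▸ .inl (hcol v hb),
        Set.sdiff_union_self.symm ▸ .inl hb]
    have hvcls : ∀ b, cls v = comp (.inl (v, b)) := fun b => by
      obtain rfl | rfl := Bool.eq_or_eq_not b (col v)
      exacts [hcls v hvT, (hcls v hvT).trans <| hU.comp_eq ⟨inl_mem_portSet hvT _, hvU _⟩
        ⟨inl_mem_portSet hvT _, hvU _⟩ (boxProd_adj_right.2 (Bool.not_ne_self _).symm)]
    by_cases hwT : ∃ i ∈ K, w ∈ T i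
    · obtain ⟨i, hi, hwi⟩ := hwT
      rw [hroot i hi w hwi, hvcls (c w), hU.comp_inl_eq_inr hUsub hvT hi hwi hvw (hvU _)]
    · push Not at hwT
      have hwU : Sum.inl (w, col w) ∉ U := fun h =>
        hw ⟨hcol w h, fun hX => hX.1.2 h⟩
      rw [hcls w hwT, hvcls (col w), hU.comp_inl_eq_inl hvT hwT hvw (hvU _) hwU]
  · have hxT := fun i => notMem_branch_of_mem_barrierTrace (i := i) hUsub hx.1.1
    have hyT := fun i => notMem_branch_of_mem_barrierTrace (i := i) hUsub hy.1.1
    refine hxy.ne (hy.2.2 x hx.1 ?_)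
    rw [hcls x hxT, hcls y hyT, heq]
    exact hU.comp_inl_eq_inl hxT hyT hxy (heq ▸ hx.1.2) hy.1.2
  · have hxT := fun i => notMem_branch_of_mem_barrierTrace (i := i) hUsub hx.1.1
    refine hx.2.1 i hi ?_
    rw [hcls x hxT, heq]
    exact hU.comp_inl_eq_inr hUsub hxT hi ht hxt (heq ▸ hx.1.2)

theorem IsOddBarrier.subset_cls_image [Finite V] [Finite ι]
    (hU : IsOddBarrier (portGraph G T c) (portSet T K K) U comp O)
    (hO : Disjoint O (comp ∘ .inr '' (K : Set ι)))
    (hcol : ∀ v, Sum.inl (v, col v) ∈ U → v ∈ barrierTrace U col)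
    (hcls : ∀ v, (∀ i ∈ K, v ∉ T i) → cls v = comp (.inl (v, col v))) :
    O ⊆ cls '' barrierHalf U col := by
  intro C hC
  by_contra hCB
  refine Nat.not_even_iff_odd.2 (hU.odd C hC) (even_ncard_of_involution (Set.toFinite _)
    (Sum.map (fun a => (a.1, !a.2)) id) ?_)
  rintro _ ⟨⟨⟨⟨v, b⟩, hv, rfl⟩ | ⟨i, hi, rfl⟩, hxU⟩, rfl⟩
  · have hvT : ∀ i ∈ K, v ∉ T i := by simpa using hv.1
    have hbU : Sum.inl (v, !b) ∉ U := by
      obtain rfl | rfl := Bool.eq_or_eq_not b (col v)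
      · exact fun h => hCB ⟨v, ⟨h, hxU⟩, hcls v hvT⟩
      · rw [Bool.not_not]
        exact fun h => hxU (hcol v h)
    have hbS : Sum.inl (v, !b) ∈ portSet T K K \ U := ⟨inl_mem_portSet hvT _, hbU⟩
    refine ⟨⟨hbS, hU.comp_eq hbS ⟨inl_mem_portSet hvT b, hxU⟩ ?_⟩, ?_, ?_⟩
    · exact boxProd_adj_right.2 (Bool.not_ne_self b)
    · simp
    · simp
  · exact absurd ⟨i, hi, rfl⟩ (Set.disjoint_left.1 hO hC)

theorem ncard_eq_ncard_add_ncard_barrierTrace [Finite V] (hUsub : U ⊆ Set.range Sum.inl) :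
    U.ncard = {v | Sum.inl (v, col v) ∈ U}.ncard + (barrierTrace U col).ncard := by
  have hU_eq : U = (fun v => Sum.inl (v, col v)) '' {v | Sum.inl (v, col v) ∈ U} ∪
      (fun v => Sum.inl (v, !col v)) '' barrierTrace U col := by
    refine Set.Subset.antisymm (fun x hx => ?_) ?_
    · obtain ⟨⟨v, b⟩, rfl⟩ := hUsub hx
      obtain rfl | rfl := Bool.eq_or_eq_not b (col v)
      exacts [.inl ⟨v, hx, rfl⟩, .inr ⟨v, hx, rfl⟩]
    · rintro _ (⟨v, hv, rfl⟩ | ⟨v, hv, rfl⟩) <;> exact hv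
  have hinj : ∀ b : V → Bool, Function.Injective fun v => (Sum.inl (v, b v) : V × Bool ⊕ ι) :=
    fun _ _ _ h => congrArg Prod.fst (Sum.inl.inj h)
  have hdisj : Disjoint ((fun v => (Sum.inl (v, col v) : V × Bool ⊕ ι)) ''
      {v | Sum.inl (v, col v) ∈ U}) ((fun v => Sum.inl (v, !col v)) '' barrierTrace U col) := by
    simp only [Set.disjoint_left, Set.mem_image]
    grind
  conv_lhs => rw [hU_eq]
  rw [Set.ncard_union_eq hdisj, Set.ncard_image_of_injective _ (hinj col),
    Set.ncard_image_of_injective _ (hinj fun v => !col v)]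

theorem ncard_barrierTrace_diff_barrierSole_le [Finite V] {e : ℕ}
    (hUsub : U ⊆ Set.range Sum.inl) (hUO : U.ncard ≤ O.ncard + e)
    (hcol : ∀ v, Sum.inl (v, col v) ∈ U → v ∈ barrierTrace U col)
    (hO : O ⊆ cls '' barrierHalf U col) (hroot : ∀ i ∈ K, root i ∉ O) :
    (barrierTrace U col \ barrierSole U K col cls root).ncard ≤ 2 * e := by
  have hA : {v | Sum.inl (v, col v) ∈ U} ⊆ barrierTrace U col := hcol
  have hX : barrierSole U K col cls root ⊆ barrierTrace U col := fun _ h => h.1.1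
  have hUcard : U.ncard = {v | Sum.inl (v, col v) ∈ U}.ncard + (barrierTrace U col).ncard :=
    ncard_eq_ncard_add_ncard_barrierTrace hUsub
  have hhalf : (barrierHalf U col).ncard = _ := Set.ncard_sdiff hA
  have hYcard := Set.ncard_sdiff hX
  have hAcard := Set.ncard_le_ncard hA
  have hXcard := Set.ncard_le_ncard hX
  have := two_mul_ncard_le_of_subset_image (Set.toFinite _)
    (barrierSole U K col cls root).toFinite hO fun v hv hvO huniq =>
      ⟨hv, fun i hi h => hroot i hi (h ▸ hvO), huniq⟩
  omega

end OfBarrier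

theorem IsBipartiteExpansion.exists_isOddBarrier_portSet {ι : Type v} {T : ι → Set V} [Finite V]
    [DecidableEq ι] (hT : IsBipartiteExpansion G T c) {K₀ E₀ K : Finset ι} (hE₀ : E₀ ⊆ K₀)
    (hp : HasPacking G T c K₀ E₀) (hK : K ⊆ K₀ \ E₀)
    (hmax : ∀ E ⊆ K, HasPacking G T c K E → E.card ≤ E₀.card) (hcard : E₀.card + 2 ≤ K.card) :
    ∃ (U : Set (V × Bool ⊕ ι)) (L : Type (max u v)) (comp : V × Bool ⊕ ι → L) (O : Set L),
      U ⊆ Sum.inl '' ((⋃ i ∈ K, T i)ᶜ ×ˢ Set.univ) ∧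
      IsOddBarrier (portGraph G T c) (portSet T K K) U comp O ∧ Set.InjOn (comp ∘ .inr) K ∧
      Disjoint O (comp ∘ .inr '' (K : Set ι)) ∧ U.ncard ≤ O.ncard + E₀.card := by
  have subset_image : ∀ {J : Set (V × Bool ⊕ ι)}, J ⊆ Sum.inr '' (K : Set ι) →
      ∃ E ⊆ K, J = Sum.inr '' (E : Set ι) ∧ J.ncard = E.card := fun {J} hJ => by
    obtain ⟨E, hE, rfl⟩ := Set.subset_image_iff.1 hJ
    lift E to Finset ι using K.finite_toSet.subset hE
    exact ⟨E, Finset.coe_subset.1 hE, rfl,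
      (Set.ncard_image_of_injective _ Sum.inr_injective).trans (Set.ncard_coe_finset E)⟩
  obtain ⟨U, L, comp, O, hUsub, hU, hinj, hO, hUO⟩ := exists_isOddBarrier_of_maximal
    (H := portGraph G T c) (M := Sum.inl '' ((⋃ i ∈ K, T i)ᶜ ×ˢ Set.univ))
    (I := Sum.inr '' (K : Set ι)) (e := E₀.card) (Set.toFinite _)
    (K.finite_toSet.image _) Set.disjoint_image_inl_image_inr
    (fun J hJ hJe => by
      obtain ⟨E, hE, rfl, hEcard⟩ := subset_image hJ
      exact hT.isMatchable_portSet hE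
        (hT.hasPacking_of_sdiff hE₀ hp hK hE (hEcard.symm.trans hJe)))
    (fun J hJ hJm => by
      obtain ⟨E, hE, rfl, hEcard⟩ := subset_image hJ
      exact hEcard.trans_le (hmax E hE (hT.hasPacking_of_isMatchable_portSet hE hJm)))
    (by rwa [Set.ncard_image_of_injective _ Sum.inr_injective, Set.ncard_coe_finset])
  exact ⟨U, L, comp, O, hUsub, hU, hinj.comp Sum.inr_injective.injOn (Set.mapsTo_image _ _),
    Set.image_comp comp .inr _ ▸ hO, hUO⟩

theorem exists_eq_and_eqOn_const {T : ι → Set V} (hT : Pairwise (Function.onFun Disjoint T))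
    (K : Finset ι) (f : V → L) (root : ι → L) :
    ∃ g : V → L, (∀ v, (∀ i ∈ K, v ∉ T i) → g v = f v) ∧ ∀ i ∈ K, ∀ t ∈ T i, g t = root i := by
  classical
  refine ⟨fun v => if h : ∃ i ∈ K, v ∈ T i then root h.choose else f v,
    fun v hv => dif_neg (by simpa using hv), fun i hi t ht => ?_⟩
  have h : ∃ i ∈ K, t ∈ T i := ⟨i, hi, ht⟩
  exact (dif_pos h).trans (congrArg root (by_contra fun hne =>
    Set.disjoint_left.1 (hT hne) h.choose_spec.2 ht))

theorem IsBipartiteExpansion.exists_isDecomposition {ι : Type v} {T : ι → Set V} [Finite V]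
    [Finite ι] [DecidableEq ι] (hT : IsBipartiteExpansion G T c) {K₀ E₀ K : Finset ι}
    (hE₀ : E₀ ⊆ K₀) (hp : HasPacking G T c K₀ E₀) (hK : K ⊆ K₀ \ E₀)
    (hmax : ∀ E ⊆ K, HasPacking G T c K E → E.card ≤ E₀.card) (hcard : E₀.card + 2 ≤ K.card) :
    ∃ (Y X : Set V) (col : V → Bool) (L : Type (max u v)) (cls : V → L) (root : ι → L),
      IsDecomposition G T c K Y X col cls root ∧ Y.ncard ≤ 2 * E₀.card := by
  obtain ⟨U, L, comp, O, hUsub, hU, hinj, hO, hUO⟩ :=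
    hT.exists_isOddBarrier_portSet hE₀ hp hK hmax hcard
  have exists_col : ∀ v, ∃ b : Bool, Sum.inl (v, b) ∈ U → Sum.inl (v, !b) ∈ U := fun v => by
    by_cases h : Sum.inl (v, true) ∈ U
    exacts [⟨false, fun _ => h⟩, ⟨true, fun h' => absurd h' h⟩]
  choose col hcol using exists_col
  obtain ⟨cls, hcls, hroot⟩ := exists_eq_and_eqOn_const hT.disjoint K
    (fun v => comp (.inl (v, col v))) (comp ∘ .inr)
  exact ⟨_, _, col, L, cls, _, hU.isDecomposition hUsub hinj hcol hcls hroot,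
    ncard_barrierTrace_diff_barrierSole_le (hUsub.trans (Set.image_subset_range _ _)) hUO hcol
      (hU.subset_cls_image hO hcol hcls)
      fun i hi hiO => Set.disjoint_left.1 hO hiO ⟨i, hi, rfl⟩⟩

end Decomposition

section Linked

variable {G : SimpleGraph V} {ι : Type*} {T : ι → Set V} {K : Finset ι} {A A' Y Z P : Set V}
  {v : V}

/-- The vertex `v` is connected in `G - A` to a branch set `T i`, `i ∈ K`, that avoids `A`. -/
inductive IsLinked (G : SimpleGraph V) (T : ι → Set V) (K : Finset ι) (A : Set V) : V → Prop
  | branch {i : ι} {t : V} : i ∈ K → Disjoint (T i) A → t ∈ T i → IsLinked G T K A t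
  | step {v w : V} : IsLinked G T K A v → G.Adj v w → w ∉ A → IsLinked G T K A w

theorem IsLinked.notMem (h : IsLinked G T K A v) : v ∉ A := by
  cases h with
  | branch _ hiA ht => exact Set.disjoint_left.1 hiA ht
  | step _ _ hv => exact hv

theorem IsLinked.of_forall_not_isLinked (h : IsLinked G T K A v)
    (hA' : ∀ a ∈ A', ¬IsLinked G T K A a) : IsLinked G T K A' v := by
  induction h with
  | branch hi hiA ht =>
    exact .branch hi (Set.disjoint_left.2 fun a ha haA' => hA' a haA' (.branch hi hiA ha)) ht
  | step hv hvw hw ih => exact .step ih hvw fun hwA' => hA' _ hwA' (.step hv hvw hw)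

theorem IsLinked.anti (h : IsLinked G T K A v) (hA : A' ⊆ A) : IsLinked G T K A' v :=
  h.of_forall_not_isLinked fun _ ha hl => hl.notMem (hA ha)

theorem IsLinked.exists_branch_subset (h : IsLinked G T K A v)
    (hT : ∀ i ∈ K, (G.induce (T i)).Connected)
    (hP : ∀ a ∈ P, ∀ b ∉ A, G.Adj a b → b ∈ P) (hv : v ∈ P) :
    ∃ i ∈ K, Disjoint (T i) A ∧ T i ⊆ P := by
  induction h with
  | @branch i _ hi hiA ht =>
    exact ⟨i, hi, hiA, subset_of_connected_induce (hT i hi) ht hv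
      fun a _ haP b hb => hP a haP b (Set.disjoint_left.1 hiA hb)⟩
  | step hv' hvw _ ih => exact ih (hP _ hv _ hv'.notMem hvw.symm)

theorem IsLinked.mem_of_branch_subset (h : IsLinked G T K Y v) (hT : IsCliqueModel G T)
    (hP : ∀ a ∈ P, ∀ b ∉ Y, G.Adj a b → b ∈ P) {j : ι} (hj : T j ⊆ P) : v ∈ P := by
  by_contra hvP
  have hclosed : ∀ a ∈ (P ∪ Y)ᶜ, ∀ b ∉ Y, G.Adj a b → b ∈ (P ∪ Y)ᶜ := by
    rintro a ha b hbY hab (hbP | hbY')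
    · exact ha (.inl (hP b hbP a (fun haY => ha (.inr haY)) hab.symm))
    · exact hbY hbY'
  obtain ⟨i, -, -, hi⟩ := h.exists_branch_subset (fun i _ => hT.connected i) hclosed
    fun hv => hv.elim hvP h.notMem
  by_cases hij : i = j
  · subst hij
    obtain ⟨⟨t, ht⟩⟩ := (hT.connected i).nonempty
    exact hi ht (.inl (hj ht))
  · obtain ⟨x, hx, y, hy, hxy⟩ := hT.exists_adj hij
    exact hi hx (.inl (hP y (hj hy) x (fun hxY => hi hx (.inr hxY)) hxy.symm))

/-- The vertices that stay linked to the branch sets `T i`, `i ∈ K`, in `G - Y` whenever at most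
one further vertex is deleted. -/
def core (G : SimpleGraph V) (T : ι → Set V) (K : Finset ι) (Y : Set V) : Set V :=
  {v | ∀ Z : Set V, Z.Subsingleton → v ∉ Z → IsLinked G T K (Y ∪ Z) v}

theorem isLinked_of_mem_core (hv : v ∈ core G T K Y) : IsLinked G T K Y v :=
  (hv ∅ Set.subsingleton_empty (Set.notMem_empty v)).anti Set.subset_union_left

theorem disjoint_core : Disjoint Y (core G T K Y) :=
  Set.disjoint_right.2 fun _ hv => (isLinked_of_mem_core hv).notMem

theorem isPendantPiece_setOf_not_isLinked (hZ : Z.Subsingleton) (hZcore : Z ⊆ core G T K Y) :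
    IsPendantPiece G Y (core G T K Y) {w | w ∉ Y ∪ Z ∧ ¬IsLinked G T K (Y ∪ Z) w} Z where
  subsingleton := hZ
  subset := hZcore
  disjoint := Set.disjoint_left.2 fun w hw hw' =>
    hw'.elim (fun hwY => hw.1 (.inl hwY))
      fun hwcore => hw.2 (hwcore Z hZ fun hwZ => hw.1 (.inr hwZ))
  mem_of_adj a w ha haw := by
    by_cases hw : w ∈ Y ∪ Z
    · exact hw.imp_left .inr
    · exact .inl (.inl ⟨hw, fun hl => ha.2 (hl.step haw.symm ha.1)⟩)

open Classical in
theorem card_filter_not_disjoint_le [Finite V] (hT : Pairwise (Function.onFun Disjoint T))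
    (K : Finset ι) (S : Set V) : (K.filter fun i => ¬Disjoint (T i) S).card ≤ S.ncard := by
  rw [Set.ncard_eq_toFinset_card S]
  refine Finset.card_le_card_of_forall_subsingleton (fun i v => v ∈ T i) (fun i hi => ?_)
    fun v _ i hi j hj => hT.eq (Set.not_disjoint_iff.2 ⟨v, hi.2, hj.2⟩)
  obtain ⟨v, hv, hvS⟩ := Set.not_disjoint_iff.1 (Finset.mem_filter.1 hi).2
  exact ⟨v, (Set.toFinite S).mem_toFinset.2 hvS, hv⟩

theorem exists_disjoint_of_subsingleton [Finite V] (hT : Pairwise (Function.onFun Disjoint T))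
    (hK : 1 < K.card) (hZ : Z.Subsingleton) : ∃ i ∈ K, Disjoint (T i) Z := by
  classical
  by_contra! h
  have := card_filter_not_disjoint_le hT K Z
  rw [Finset.filter_true_of_mem h] at this
  exact hK.not_ge (this.trans (Set.ncard_le_one_iff_subsingleton.2 hZ))

theorem card_le_ncard_isLinked_add_one [Finite V] (hT : IsCliqueModel G T)
    (hTY : ∀ i ∈ K, Disjoint (T i) Y) (hZ : Z.Subsingleton) :
    K.card ≤ {w | IsLinked G T K (Y ∪ Z) w}.ncard + 1 := by
  classical
  choose t ht using fun i => Set.nonempty_coe_sort.1 (hT.connected i).nonempty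
  have hmeet : (K.filter fun i => ¬Disjoint (T i) Z).card ≤ 1 :=
    (card_filter_not_disjoint_le hT.disjoint K Z).trans (Set.ncard_le_one_iff_subsingleton.2 hZ)
  have havoid : (K.filter fun i => Disjoint (T i) Z).card ≤
      {w | IsLinked G T K (Y ∪ Z) w}.ncard := by
    rw [← Set.ncard_coe_finset]
    refine Set.ncard_le_ncard_of_injOn t (fun i hi => ?_)
      fun i _ j _ hij => hT.eq_of_mem (ht i) (hij ▸ ht j)
    obtain ⟨hiK, hiZ⟩ := Finset.mem_filter.1 hi
    exact .branch hiK (Set.disjoint_union_right.2 ⟨hTY i hiK, hiZ⟩) (ht i)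
  have := Finset.card_filter_add_card_filter_not (s := K) fun i => Disjoint (T i) Z
  lia

theorem exists_subset_core_not_isLinked [Finite V] (hT : IsCliqueModel G T)
    (hTY : ∀ i ∈ K, Disjoint (T i) Y) (hK : 1 < K.card) (hv : v ∉ core G T K Y) :
    ∃ Z : Set V, Z.Subsingleton ∧ Z ⊆ core G T K Y ∧ v ∉ Z ∧ ¬IsLinked G T K (Y ∪ Z) v := by
  by_cases hvY : IsLinked G T K Y v
  swap
  · exact ⟨∅, Set.subsingleton_empty, Set.empty_subset _, Set.notMem_empty v,
      fun h => hvY (h.anti Set.subset_union_left)⟩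
  obtain ⟨Z, ⟨hZ, hvZ, hl⟩, hmin⟩ := (Set.toFinite {Z : Set V | Z.Subsingleton ∧ v ∉ Z ∧
    ¬IsLinked G T K (Y ∪ Z) v}).exists_minimalFor (fun Z => {w | IsLinked G T K (Y ∪ Z) w}) _
    (by simpa only [core, Set.Nonempty, Set.mem_ofPred_eq, not_forall, exists_prop] using hv)
  refine ⟨Z, hZ, fun z hzZ => ?_, hvZ, hl⟩
  by_contra hz
  obtain ⟨Z', hZ', hzZ', hl'⟩ : ∃ Z' : Set V, Z'.Subsingleton ∧ z ∉ Z' ∧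
      ¬IsLinked G T K (Y ∪ Z') z := by
    simpa only [core, Set.mem_ofPred_eq, not_forall, exists_prop] using hz
  have hsub : ∀ w, IsLinked G T K (Y ∪ Z') w → IsLinked G T K (Y ∪ Z) w := fun w hw =>
    hw.of_forall_not_isLinked fun a ha hla => ha.elim (fun haY => hla.notMem (.inl haY))
      fun haZ => hl' (hZ haZ hzZ ▸ hla)
  have hsup : ∀ w, IsLinked G T K (Y ∪ Z) w → IsLinked G T K (Y ∪ Z') w := by
    by_cases hvZ' : v ∈ Z'
    · exact fun w hw => hw.of_forall_not_isLinked fun a ha hla =>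
        ha.elim (fun haY => hla.notMem (.inl haY)) fun haZ' => hl (hZ' haZ' hvZ' ▸ hla)
    · exact hmin ⟨hZ', hvZ', fun h => hl (hsub v h)⟩ hsub
  have hclosed : ∀ a ∈ {w | IsLinked G T K (Y ∪ Z) w}, ∀ b ∉ Y, G.Adj a b →
      b ∈ {w | IsLinked G T K (Y ∪ Z) w} := fun a ha b hbY hab => by
    by_cases hbZ : b ∈ Z
    · exact hsub b ((hsup a ha).step hab fun hb => hb.elim hbY (hZ hbZ hzZ ▸ hzZ'))
    · exact IsLinked.step ha hab fun hb => hb.elim hbY hbZ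
  obtain ⟨j, hj, hjZ⟩ := exists_disjoint_of_subsingleton hT.disjoint hK hZ
  exact hl (hvY.mem_of_branch_subset hT hclosed fun t ht =>
    .branch hj (Set.disjoint_union_right.2 ⟨hTY j hj, hjZ⟩) ht)

end Linked

section DecompositionCore

variable {G : SimpleGraph V} {ι L L' : Type*} {T : ι → Set V} {c : V → Bool} {K K' : Finset ι}
  {Y Y' X X' : Set V} {col col' : V → Bool} {cls : V → L} {cls' : V → L'} {root : ι → L}
  {root' : ι → L'} {i : ι} {v : V}

theorem IsCliqueModel.mono {H : SimpleGraph V} (h : IsCliqueModel G T) (hGH : G ≤ H) :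
    IsCliqueModel H T where
  connected i := (h.connected i).mono (comap_monotone _ hGH)
  disjoint := h.disjoint
  exists_adj _ _ hij :=
    let ⟨x, hx, y, hy, hxy⟩ := h.exists_adj hij
    ⟨x, hx, y, hy, hGH hxy⟩

theorem IsBipartiteExpansion.isCliqueModel (h : IsBipartiteExpansion G T c) : IsCliqueModel G T :=
  h.toIsCliqueModel.mono inf_le_left

theorem IsDecomposition.exists_branch_col_eq (hD : IsDecomposition G T c K Y X col cls root)
    (hT : IsBipartiteExpansion G T c) (hK : 1 < K.card) (hi : i ∉ K) (hiY : Disjoint (T i) Y) :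
    ∃ x ∈ X, x ∈ T i ∧ col x = c x := by
  have hne : ∀ j ∈ K, i ≠ j := fun j hj h => hi (h ▸ hj)
  by_contra! hcol
  have cls_eq_of_adj : ∀ x ∈ T i, x ∉ X → ∀ y ∉ Y, G.Adj x y → cls x = cls y :=
    fun x hx hxX y hy hxy => hD.cls_eq_of_adj
      (fun h => h.elim (Set.disjoint_left.1 hiY hx) hxX)
      (fun j hj hxj => hne j hj (hT.eq_of_mem hx hxj)) hy hxy
  have cls_eq_root : ∀ j ∈ K, T i ⊆ {x | cls x = root j} := by
    intro j hj
    obtain ⟨x, hx, y, hy, hxy⟩ := hT.exists_adj (hne j hj)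
    rw [bichromatic_adj] at hxy
    have hxX : x ∉ X := fun hxX => hcol x hxX hx
      ((Bool.eq_not_of_ne (hD.col_ne_branch hxX hj hy hxy.1)).trans (Bool.eq_not_of_ne hxy.2).symm)
    have hyY : y ∉ Y := fun hyY => hD.notMem_branch (.inl hyY) hj hy
    refine subset_of_connected_induce (hT.connected i) hx
      ((cls_eq_of_adj x hx hxX y hyY hxy.1).trans (hD.cls_branch hj hy))
      fun a ha haroot b hb hab => ?_
    rw [bichromatic_adj] at hab
    exact (cls_eq_of_adj a ha (fun haX => hD.cls_ne_root haX hj haroot) b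
      (Set.disjoint_left.1 hiY hb) hab.1).symm.trans haroot
  obtain ⟨j, hj, k, hk, hjk⟩ := Finset.one_lt_card.1 hK
  obtain ⟨t, ht⟩ := Set.nonempty_coe_sort.1 (hT.connected i).nonempty
  exact hjk (hD.injOn_root hj hk ((cls_eq_root j hj ht).symm.trans (cls_eq_root k hk ht)))

theorem IsDecomposition.exists_cls_eq_col_eq (hD : IsDecomposition G T c K Y X col cls root)
    (hT : IsBipartiteExpansion G T c) (hK : 1 < K.card) (hi : i ∉ K) (hiY : Disjoint (T i) Y)
    (hv : v ∈ T i) : ∃ x ∈ X, cls x = cls v ∧ col x = c x := by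
  obtain ⟨x, hxX, hx, hcol⟩ := hD.exists_branch_col_eq hT hK hi hiY
  suffices T i ⊆ {v | ∃ x ∈ X, cls x = cls v ∧ col x = c x} from this hv
  refine subset_of_connected_induce (hT.connected i) hx ⟨x, hxX, rfl, hcol⟩ ?_
  rintro a ha ⟨x, hxX, hxa, hcol⟩ b hb hab
  rw [bichromatic_adj] at hab
  have notMem : ∀ {w}, w ∈ T i → w ∉ X → w ∉ Y ∪ X ∧ ∀ j ∈ K, w ∉ T j := fun hw hwX =>
    ⟨fun h => h.elim (Set.disjoint_left.1 hiY hw) hwX,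
      fun j hj hwj => hi (hT.eq_of_mem hw hwj ▸ hj)⟩
  by_cases haX : a ∈ X
  · by_cases hbX : b ∈ X
    · have hxa : x = a := hD.injOn_cls hxX haX hxa
      subst hxa
      exact ⟨b, hbX, rfl, (Bool.eq_not_of_ne (hcol ▸ hD.col_ne hxX hbX hab.1).symm).trans
        (Bool.eq_not_of_ne hab.2.symm).symm⟩
    · exact ⟨x, hxX, hxa.trans (hD.cls_eq_of_adj (notMem hb hbX).1 (notMem hb hbX).2
        (Set.disjoint_left.1 hiY ha) hab.1.symm).symm, hcol⟩
  · exact ⟨x, hxX, hxa.trans (hD.cls_eq_of_adj (notMem ha haX).1 (notMem ha haX).2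
      (Set.disjoint_left.1 hiY hb) hab.1), hcol⟩

theorem IsDecomposition.mem_or_cls_eq_root_of_mem_core
    (hD : IsDecomposition G T c K' Y' X' col cls root) (hT : IsCliqueModel G T)
    (hY : Y' ⊆ Y) (hK' : K'.Nonempty) (hv : v ∈ core G T K Y) :
    v ∈ X' ∨ ∃ k ∈ K', cls v = root k := by
  by_contra! ⟨hvX, hvroot⟩
  have hlinked : IsLinked G T K (Y ∪ {x ∈ X' | cls x = cls v}) v :=
    hv _ (fun x hx y hy => hD.injOn_cls hx.1 hy.1 (hx.2.trans hy.2.symm)) fun h => hvX h.1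
  have hclosed : ∀ a ∈ {w | w ∉ Y ∧ w ∉ X' ∧ cls w = cls v},
      ∀ b ∉ Y ∪ {x ∈ X' | cls x = cls v}, G.Adj a b →
      b ∈ {w | w ∉ Y ∧ w ∉ X' ∧ cls w = cls v} := by
    rintro a ⟨haY, haX, ha⟩ b hb hab
    have hbY : b ∉ Y := fun hbY => hb (.inl hbY)
    have hcls : cls a = cls b := hD.cls_eq_of_adj (fun h => h.elim (fun h => haY (hY h)) haX)
      (fun k hk hak => hvroot k hk (ha.symm.trans (hD.cls_branch hk hak)))
      (fun h => hbY (hY h)) hab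
    exact ⟨hbY, fun hbX => hb (.inr ⟨hbX, hcls.symm.trans ha⟩), hcls.symm.trans ha⟩
  obtain ⟨i, -, -, hsub⟩ := hlinked.exists_branch_subset (fun i _ => hT.connected i) hclosed
    ⟨(isLinked_of_mem_core hv).notMem, hvX, rfl⟩
  obtain ⟨k, hk⟩ := hK'
  by_cases hik : i = k
  · subst hik
    obtain ⟨t, ht⟩ := Set.nonempty_coe_sort.1 (hT.connected i).nonempty
    exact hvroot i hk ((hsub ht).2.2.symm.trans (hD.cls_branch hk ht))
  · obtain ⟨x, hx, y, hy, hxy⟩ := hT.exists_adj hik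
    obtain ⟨hxY, hxX, hxv⟩ := hsub hx
    refine hvroot k hk (hxv.symm.trans ((hD.cls_eq_of_adj ?_ ?_ ?_ hxy).trans
      (hD.cls_branch hk hy)))
    · exact fun h => h.elim (fun h => hxY (hY h)) hxX
    · exact fun j hj hxj => hvroot j hj (hxv.symm.trans (hD.cls_branch hj hxj))
    · exact fun h => hD.notMem_branch (.inl h) hk hy

theorem IsDecomposition.mem_and_col_eq_of_mem_core_of_mem_branch
    (hD : IsDecomposition G T c K' Y' X' col cls root) (hT : IsBipartiteExpansion G T c)
    (hTY : ∀ i ∈ K, Disjoint (T i) Y) (hY : Y' ⊆ Y) (hK' : 1 < K'.card) (hi : i ∈ K)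
    (hiK' : i ∉ K') (hv : v ∈ core G T K Y) (hvi : v ∈ T i) : v ∈ X' ∧ col v = c v := by
  obtain ⟨x, hxX, hxv, hcol⟩ := hD.exists_cls_eq_col_eq hT hK' hiK' ((hTY i hi).mono_right hY) hvi
  rcases hD.mem_or_cls_eq_root_of_mem_core hT.isCliqueModel hY
    (Finset.card_pos.1 (Nat.zero_lt_of_lt hK')) hv with hvX | ⟨k, hk, hvk⟩
  · exact hD.injOn_cls hxX hvX hxv ▸ ⟨hxX, hcol⟩
  · exact absurd (hxv.trans hvk) (hD.cls_ne_root hxX hk)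

theorem IsDecomposition.mem_of_mem_core_of_cls_eq_root {Y₁ X₁ : Set V}
    (hD' : IsDecomposition G T c K' Y' X' col' cls' root')
    (hD : IsDecomposition G T c K Y₁ X₁ col cls root) (hT : IsBipartiteExpansion G T c)
    (hTY : ∀ i ∈ K, Disjoint (T i) Y) (hY' : Y' ⊆ Y) (hY₁ : Y₁ ⊆ Y) (hK' : 1 < K'.card)
    (hK'K : K' ⊆ K) (hi : i ∈ K) (hiK' : i ∉ K') (hv : v ∈ core G T K Y)
    (hvi : cls v = root i) : v ∈ X' := by
  by_cases hvT : v ∈ T i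
  · exact (hD'.mem_and_col_eq_of_mem_core_of_mem_branch hT hTY hY' hK' hi hiK' hv hvT).1
  by_contra hvX
  obtain ⟨j, hj, hvj⟩ := (hD'.mem_or_cls_eq_root_of_mem_core hT.isCliqueModel hY'
    (Finset.card_pos.1 (Nat.zero_lt_of_lt hK')) hv).resolve_left hvX
  have hclosed : ∀ a ∈ {w | w ∉ Y ∧ w ∉ T i ∧ cls w = root i ∧ cls' w = root' j}, ∀ b ∉ Y,
      G.Adj a b → b ∈ {w | w ∉ Y ∧ w ∉ T i ∧ cls w = root i ∧ cls' w = root' j} := by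
    rintro a ⟨haY, haT, hai, haj⟩ b hbY hab
    have notMem_branch : ∀ k ∈ K, a ∉ T k := fun k hk hak =>
      haT (hD.injOn_root hi hk (hai.symm.trans (hD.cls_branch hk hak)) ▸ hak)
    have hbj : cls' b = root' j := haj ▸ (hD'.cls_eq_of_adj
      (fun h => h.elim (fun h => haY (hY' h)) fun h => hD'.cls_ne_root h hj haj)
      (fun k hk => notMem_branch k (hK'K hk)) (fun h => hbY (hY' h)) hab).symm
    have hbi : cls b = root i := hai ▸ (hD.cls_eq_of_adj
      (fun h => h.elim (fun h => haY (hY₁ h)) fun h => hD.cls_ne_root h hi hai)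
      notMem_branch (fun h => hbY (hY₁ h)) hab).symm
    refine ⟨hbY, fun hbT => ?_, hbi, hbj⟩
    obtain ⟨x, hxX, hxb, -⟩ := hD'.exists_cls_eq_col_eq hT hK' hiK' ((hTY i hi).mono_right hY') hbT
    exact hD'.cls_ne_root hxX hj (hxb.trans hbj)
  have hvY := (isLinked_of_mem_core hv).notMem
  obtain ⟨k, hk, -, hsub⟩ := (isLinked_of_mem_core hv).exists_branch_subset
    (fun k _ => hT.isCliqueModel.connected k) hclosed ⟨hvY, hvT, hvi, hvj⟩
  obtain ⟨t, ht⟩ := Set.nonempty_coe_sort.1 (hT.connected k).nonempty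
  obtain ⟨-, htT, hti, -⟩ := hsub ht
  exact htT (hD.injOn_root hi hk (hti.symm.trans (hD.cls_branch hk ht)) ▸ ht)

theorem exists_eq_of_cls_eq_root {α : Type*} (hroot : Set.InjOn root K) (cls : V → L)
    (γ : ι → V → α) (f : V → α) :
    ∃ κ : V → α, (∀ i ∈ K, ∀ v, cls v = root i → κ v = γ i v) ∧
      ∀ v, (¬∃ i ∈ K, cls v = root i) → κ v = f v := by
  classical
  refine ⟨fun v => if h : ∃ i ∈ K, cls v = root i then γ h.choose v else f v,
    fun i hi v hv => ?_, fun v h => dif_neg h⟩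
  have h : ∃ i ∈ K, cls v = root i := ⟨i, hi, hv⟩
  have : h.choose = i := hroot h.choose_spec.1 hi (h.choose_spec.2.symm.trans hv)
  simp only [dif_pos h, this]

theorem IsDecomposition.mem_branch_of_adj (hD : IsDecomposition G T c K Y X col cls root)
    (hi : i ∈ K) {w : V} (hv : v ∉ Y) (hw : w ∉ Y) (hvi : cls v = root i) (hne : cls v ≠ cls w)
    (hvw : G.Adj v w) : v ∈ T i := by
  by_contra hvT
  refine hne (hD.cls_eq_of_adj (fun h => h.elim hv fun h => hD.cls_ne_root h hi hvi)
    (fun k hk hvk => ?_) hw hvw)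
  exact hvT (hD.injOn_root hi hk (hvi.symm.trans (hD.cls_branch hk hvk)) ▸ hvk)

theorem IsDecomposition.colorable_two_core (hD : IsDecomposition G T c K Y' X col cls root)
    (hT : IsBipartiteExpansion G T c) (hY : Y' ⊆ Y) (hK : K.Nonempty) {γ : ι → V → Bool}
    (hγc : ∀ i ∈ K, ∀ v ∈ core G T K Y, v ∈ T i → γ i v = c v)
    (hγ : ∀ i ∈ K, ∀ v ∈ core G T K Y, cls v = root i → ∀ w ∈ core G T K Y, cls w = root i →
      G.Adj v w → γ i v ≠ γ i w) :
    (G.induce (core G T K Y)).Colorable 2 := by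
  obtain ⟨κ, κ_of_root, κ_of_not_root⟩ := exists_eq_of_cls_eq_root hD.injOn_root cls γ col
  have notMem : ∀ {v}, v ∈ core G T K Y → v ∉ Y' := fun hv h =>
    (isLinked_of_mem_core hv).notMem (hY h)
  have mem_X : ∀ {v}, v ∈ core G T K Y → (¬∃ i ∈ K, cls v = root i) → v ∈ X := fun hv h =>
    (hD.mem_or_cls_eq_root_of_mem_core hT.isCliqueModel hY hK hv).resolve_right h
  have ne_of_not_root : ∀ {v w}, v ∈ core G T K Y → w ∈ core G T K Y →
      (¬∃ i ∈ K, cls w = root i) → G.Adj v w → κ v ≠ κ w := by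
    intro v w hv hw hwr hvw
    rw [κ_of_not_root w hwr]
    by_cases hvr : ∃ i ∈ K, cls v = root i
    · obtain ⟨i, hi, hvi⟩ := hvr
      have hvT := hD.mem_branch_of_adj hi (notMem hv) (notMem hw) hvi
        (fun h => hwr ⟨i, hi, h.symm.trans hvi⟩) hvw
      rw [κ_of_root i hi v hvi, hγc i hi v hv hvT]
      exact (hD.col_ne_branch (mem_X hw hwr) hi hvT hvw.symm).symm
    · rw [κ_of_not_root v hvr]
      exact hD.col_ne (mem_X hv hvr) (mem_X hw hwr) hvw
  refine (Coloring.mk (fun v : core G T K Y => κ v) ?_).colorable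
  rintro ⟨v, hv⟩ ⟨w, hw⟩ hvw
  by_cases hvr : ∃ i ∈ K, cls v = root i
  swap
  · exact (ne_of_not_root hw hv hvr hvw.symm).symm
  by_cases hwr : ∃ i ∈ K, cls w = root i
  swap
  · exact ne_of_not_root hv hw hwr hvw
  obtain ⟨i, hi, hvi⟩ := hvr
  obtain ⟨j, hj, hwj⟩ := hwr
  rw [κ_of_root i hi v hvi, κ_of_root j hj w hwj]
  by_cases hij : i = j
  · subst hij
    exact hγ i hi v hv hvi w hw hwj hvw
  · have hne : cls v ≠ cls w := fun h => hij (hD.injOn_root hi hj (hvi ▸ h.trans hwj))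
    have hvT := hD.mem_branch_of_adj hi (notMem hv) (notMem hw) hvi hne hvw
    have hwT := hD.mem_branch_of_adj hj (notMem hw) (notMem hv) hwj hne.symm hvw.symm
    rw [hγc i hi v hv hvT, hγc j hj w hw hwT]
    exact hT.color_ne hij hvT hwT hvw

theorem IsDecomposition.colorable_two_core_of_disjoint {K₁ K₂ : Finset ι} {Y₁ Y₂ X₁ X₂ : Set V}
    {col₁ col₂ : V → Bool} {L₁ L₂ : Type*} {cls₁ : V → L₁} {cls₂ : V → L₂} {root₁ : ι → L₁}
    {root₂ : ι → L₂} (hD : IsDecomposition G T c K Y' X col cls root)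
    (hD₁ : IsDecomposition G T c K₁ Y₁ X₁ col₁ cls₁ root₁)
    (hD₂ : IsDecomposition G T c K₂ Y₂ X₂ col₂ cls₂ root₂) (hT : IsBipartiteExpansion G T c)
    (hTY : ∀ i ∈ K, Disjoint (T i) Y) (hY : Y' ⊆ Y) (hY₁ : Y₁ ⊆ Y) (hY₂ : Y₂ ⊆ Y)
    (hK₁ : K₁ ⊆ K) (hK₂ : K₂ ⊆ K) (hcard₁ : 1 < K₁.card) (hcard₂ : 1 < K₂.card)
    (hdisj : Disjoint K₁ K₂) : (G.induce (core G T K Y)).Colorable 2 := by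
  classical
  refine hD.colorable_two_core hT hY ((Finset.card_pos.1 (Nat.zero_lt_of_lt hcard₁)).mono hK₁)
    (γ := fun i => if i ∈ K₁ then col₂ else col₁) (fun i hi v hv hvi => ?_)
    fun i hi v hv hvi w hw hwi hvw => ?_
  · split_ifs with hi₁
    · exact (hD₂.mem_and_col_eq_of_mem_core_of_mem_branch hT hTY hY₂ hcard₂ hi
        (Finset.disjoint_left.1 hdisj hi₁) hv hvi).2
    · exact (hD₁.mem_and_col_eq_of_mem_core_of_mem_branch hT hTY hY₁ hcard₁ hi hi₁ hv hvi).2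
  · split_ifs with hi₁
    · have mem_X₂ : ∀ {v}, v ∈ core G T K Y → cls v = root i → v ∈ X₂ := fun hv hvi =>
        hD₂.mem_of_mem_core_of_cls_eq_root hD hT hTY hY₂ hY hcard₂ hK₂ hi
          (Finset.disjoint_left.1 hdisj hi₁) hv hvi
      exact hD₂.col_ne (mem_X₂ hv hvi) (mem_X₂ hw hwi) hvw
    · have mem_X₁ : ∀ {v}, v ∈ core G T K Y → cls v = root i → v ∈ X₁ := fun hv hvi =>
        hD₁.mem_of_mem_core_of_cls_eq_root hD hT hTY hY₁ hY hcard₁ hK₁ hi hi₁ hv hvi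
      exact hD₁.col_ne (mem_X₁ hv hvi) (mem_X₁ hw hwi) hvw

end DecompositionCore

section Selection

theorem exists_forall_le_of_forall_lt {β : Type*} (f g : β → ℕ) (N : ℕ → ℕ) {m : ℕ}
    (hf : ∀ b, f b < m) {b₀ : β} (hb₀ : N m ≤ g b₀) :
    ∃ j b, N (j + 1) ≤ g b ∧ ∀ b', N j ≤ g b' → f b' ≤ f b := by
  suffices ∀ j b, N j ≤ g b → m ≤ f b + j →
      ∃ j b, N (j + 1) ≤ g b ∧ ∀ b', N j ≤ g b' → f b' ≤ f b from
    this m b₀ hb₀ (Nat.le_add_left _ _)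
  intro j
  induction j with
  | zero => exact fun b _ hm => absurd (hf b) hm.not_gt
  | succ j ih =>
    intro b hb hm
    by_cases! h : ∀ b', N j ≤ g b' → f b' ≤ f b
    · exact ⟨j, b, hb, h⟩
    · obtain ⟨b', hb', hlt⟩ := h
      exact ih b' hb' (by lia)

variable {ι : Type*} {d n : ℕ} {K : Finset ι}

theorem exists_pairwise_disjoint_subsets (m n : ℕ) (hK : m * n ≤ K.card) :
    ∃ A : Fin m → Finset ι, (∀ l, A l ⊆ K ∧ (A l).card = n) ∧
      Pairwise (Function.onFun Disjoint A) := by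
  obtain ⟨f⟩ : Nonempty (Fin m × Fin n ↪ K) := Function.Embedding.nonempty_of_card_le (by
    rwa [Fintype.card_prod, Fintype.card_fin, Fintype.card_fin, Fintype.card_coe])
  refine ⟨fun l => Finset.univ.map ⟨fun x => (f (l, x) : ι), fun x y hxy =>
    (Prod.ext_iff.1 (f.injective (Subtype.ext hxy))).2⟩, fun l => ⟨fun i hi => ?_, ?_⟩,
    fun l l' hll' => Finset.disjoint_left.2 fun i hi hi' => hll' ?_⟩
  · obtain ⟨x, -, rfl⟩ := Finset.mem_map.1 hi
    exact (f (l, x)).2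
  · rw [Finset.card_map, Finset.card_univ, Fintype.card_fin]
  · obtain ⟨x, -, rfl⟩ := Finset.mem_map.1 hi
    obtain ⟨y, -, hy⟩ := Finset.mem_map.1 hi'
    exact (Prod.ext_iff.1 (f.injective (Subtype.ext hy))).1.symm

theorem exists_disjoint_of_card_lt {κ : Type*} [Fintype κ] {A : κ → Finset ι}
    (hA : Pairwise (Function.onFun Disjoint A)) {S : Finset ι} (hS : S.card < Fintype.card κ) :
    ∃ l, Disjoint (A l) S := by
  by_contra! h
  refine hS.not_ge (Finset.card_le_card_of_forall_subsingleton (fun l i => i ∈ A l)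
    (fun l _ => ?_) fun i _ l hl l' hl' =>
      hA.eq (Finset.not_disjoint_iff.2 ⟨i, hl.2, hl'.2⟩))
  obtain ⟨i, hi, hiS⟩ := Finset.not_disjoint_iff.1 (h l)
  exact ⟨i, hiS, hi⟩

theorem exists_disjoint_pair (F : Finset ι → Finset ι)
    (hF : ∀ A ⊆ K, A.card = n → (F A).card ≤ d) (hK : (d + 1) * (n + d) + n ≤ K.card) :
    ∃ A ⊆ K, ∃ B ⊆ K, A.card = n ∧ B.card = n ∧ Disjoint A B ∧ Disjoint A (F B) ∧
      Disjoint B (F A) := by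
  classical
  obtain ⟨A, hA, hdisj⟩ := exists_pairwise_disjoint_subsets (K := K) (d + 1) n (by grind)
  set U := Finset.univ.biUnion fun l => A l ∪ F (A l)
  have hU : U.card ≤ (d + 1) * (n + d) := by
    refine (Finset.card_biUnion_le_card_mul _ _ (n + d) fun l _ => ?_).trans_eq
      (by rw [Finset.card_univ, Fintype.card_fin])
    exact (Finset.card_union_le _ _).trans
      (add_le_add (hA l).2.le (hF (A l) (hA l).1 (hA l).2))
  obtain ⟨B, hB, hBcard⟩ := Finset.exists_subset_card_eq (s := K \ U) (n := n)
    (by have := Finset.le_card_sdiff U K; lia)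
  have hBK : B ⊆ K := hB.trans Finset.sdiff_subset
  obtain ⟨l, hl⟩ := exists_disjoint_of_card_lt hdisj (S := F B)
    (by simpa only [Fintype.card_fin] using Nat.lt_succ_of_le (hF B hBK hBcard))
  have hBU : Disjoint B (A l ∪ F (A l)) :=
    (Finset.sdiff_disjoint.mono_left hB).mono_right
      (Finset.subset_biUnion_of_mem (fun l => A l ∪ F (A l)) (Finset.mem_univ l))
  rw [Finset.disjoint_union_right] at hBU
  exact ⟨A l, (hA l).1, B, hBK, (hA l).2, hBcard, hBU.1.symm, hl, hBU.2⟩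

end Selection

section PendantDecomposition

variable {G : SimpleGraph V} {ι : Type v} {T : ι → Set V} {c : V → Bool} {K K₁ : Finset ι}
  {Y B : Set V} {d n s : ℕ}

/-- Away from `Y`, the graph `G` consists of the bipartite graph `G[B]` and pendant pieces attached
to it, each of which leaves more than `s` vertices of `G` uncovered. -/
structure IsPendantDecomposition (G : SimpleGraph V) (Y B : Set V) (s : ℕ) : Prop where
  disjoint : Disjoint Y B
  colorable : (G.induce B).Colorable 2
  exists_piece : ∀ v ∉ Y ∪ B, ∃ A Z, v ∈ A ∧ IsPendantPiece G Y B A Z ∧ s < (A ∪ Y ∪ Z)ᶜ.ncard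

theorem isPendantDecomposition_core [Finite V] (hT : IsCliqueModel G T)
    (hTY : ∀ i ∈ K, Disjoint (T i) Y) (hK : s + 2 ≤ K.card)
    (hcol : (G.induce (core G T K Y)).Colorable 2) :
    IsPendantDecomposition G Y (core G T K Y) s where
  disjoint := disjoint_core
  colorable := hcol
  exists_piece v hv := by
    obtain ⟨Z, hZ, hZcore, hvZ, hl⟩ := exists_subset_core_not_isLinked hT hTY (by lia)
      fun h => hv (.inr h)
    refine ⟨{w | w ∉ Y ∪ Z ∧ ¬IsLinked G T K (Y ∪ Z) w}, Z,
      ⟨fun h => h.elim (fun h => hv (.inl h)) hvZ, hl⟩,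
      isPendantPiece_setOf_not_isLinked hZ hZcore, ?_⟩
    have hcard := card_le_ncard_isLinked_add_one hT hTY hZ
    have hsub : {w | IsLinked G T K (Y ∪ Z) w} ⊆
        ({w | w ∉ Y ∪ Z ∧ ¬IsLinked G T K (Y ∪ Z) w} ∪ Y ∪ Z)ᶜ := by
      rintro w hw ((hw' | hw') | hw')
      · exact hw'.2 hw
      · exact hw.notMem (.inl hw')
      · exact hw.notMem (.inr hw')
    have := Set.ncard_le_ncard hsub
    lia

theorem exists_isPendantDecomposition_of_isDecomposition [Finite V]
    (hT : IsBipartiteExpansion G T c) (hn : s + 2 ≤ n)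
    (hcard : (d + 1) * (n + d) + n ≤ K₁.card)
    (hdec : ∀ K ⊆ K₁, n ≤ K.card → ∃ (Y X : Set V) (col : V → Bool) (L : Type (max u v))
      (cls : V → L) (root : ι → L), IsDecomposition G T c K Y X col cls root ∧ Y.ncard ≤ d) :
    ∃ Y B, Y.ncard ≤ 3 * d ∧ IsPendantDecomposition G Y B s := by
  classical
  choose! Y X col L cls root hD hY using hdec
  let meeting (K : Finset ι) := K₁.filter fun i => ¬Disjoint (T i) (Y K)
  obtain ⟨A, hA, B, hB, hAn, hBn, hdisj, hAB, hBA⟩ := exists_disjoint_pair meeting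
    (fun K hK hKn => (card_filter_not_disjoint_le hT.disjoint _ _).trans (hY K hK hKn.ge)) hcard
  set K := K₁ \ (meeting A ∪ meeting B)
  have disjoint_meeting : ∀ D ⊆ K₁, n ≤ D.card → Disjoint D (meeting D) := fun D hD₁ hDn =>
    Finset.disjoint_left.2 fun i hi him => (Finset.mem_filter.1 him).2 <|
      Set.disjoint_right.2 fun v hv => (hD D hD₁ hDn).notMem_branch (.inl hv) hi
  have hAK : A ⊆ K := Finset.subset_sdiff.2
    ⟨hA, Finset.disjoint_union_right.2 ⟨disjoint_meeting A hA hAn.ge, hAB⟩⟩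
  have hBK : B ⊆ K := Finset.subset_sdiff.2
    ⟨hB, Finset.disjoint_union_right.2 ⟨hBA, disjoint_meeting B hB hBn.ge⟩⟩
  have hK : K ⊆ K₁ := Finset.sdiff_subset
  have hKn : n ≤ K.card := hAn.ge.trans (Finset.card_le_card hAK)
  have hTY : ∀ i ∈ K, Disjoint (T i) (Y K ∪ Y A ∪ Y B) := fun i hi => by
    have disjoint_of_notMem : ∀ D, i ∉ meeting D → Disjoint (T i) (Y D) := fun D h =>
      of_not_not fun h' => h (Finset.mem_filter.2 ⟨hK hi, h'⟩)
    have hi' := (Finset.mem_sdiff.1 hi).2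
    rw [Finset.mem_union, not_or] at hi'
    exact Set.disjoint_union_right.2 ⟨Set.disjoint_union_right.2
      ⟨disjoint_of_notMem K (Finset.disjoint_left.1 (disjoint_meeting K hK hKn) hi),
        disjoint_of_notMem A hi'.1⟩, disjoint_of_notMem B hi'.2⟩
  refine ⟨Y K ∪ Y A ∪ Y B, core G T K (Y K ∪ Y A ∪ Y B), ?_,
    isPendantDecomposition_core hT.isCliqueModel hTY (hn.trans hKn) ?_⟩
  · have := Set.ncard_union_le (Y K ∪ Y A) (Y B)
    have := Set.ncard_union_le (Y K) (Y A)
    have := hY K hK hKn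
    have := hY A hA hAn.ge
    have := hY B hB hBn.ge
    lia
  · exact (hD K hK hKn).colorable_two_core_of_disjoint (hD A hA hAn.ge) (hD B hB hBn.ge) hT hTY
      (fun _ h => .inl (.inl h)) (fun _ h => .inl (.inr h)) (fun _ h => .inr h) hAK hBK
      (by lia) (by lia) hdisj

/-- The number of branch sets from which `j` successive improvements of a packing are possible;
`a` bounds the size of the packings that occur. -/
def packingBound (a s : ℕ) : ℕ → ℕ
  | 0 => a + s + 2
  | j + 1 => a + ((2 * a + 1) * (packingBound a s j + 2 * a) + packingBound a s j)

theorem le_packingBound (a s j : ℕ) : a + s + 2 ≤ packingBound a s j := by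
  induction j with
  | zero => exact le_rfl
  | succ j ih =>
    rw [packingBound]
    lia

theorem IsBipartiteExpansion.exists_isPendantDecomposition [Finite V] {h : ℕ}
    {T : Fin (packingBound (2 * (h * h)) s (2 * (h * h))) → Set V}
    (hT : IsBipartiteExpansion G T c) (hG : ¬HasOddCliqueModel G (Fin h)) :
    ∃ Y B, Y.ncard ≤ 12 * (h * h) ∧ IsPendantDecomposition G Y B s := by
  have hpos := le_packingBound (2 * (h * h)) s (2 * (h * h))
  have : Nonempty V := (hT.connected ⟨0, by lia⟩).nonempty.map Subtype.val
  have hbound : ∀ K E, E ⊆ K → HasPacking G T c K E → E.card < 2 * (h * h) := fun K E hE hp =>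
    lt_of_not_ge fun hcard => hG (hasOddCliqueModel_of_hasPacking hT.toIsCliqueModel hE hp
      (by rwa [Nat.card_fin]))
  obtain ⟨j, ⟨⟨K₀, E₀⟩, hE₀, hp₀⟩, hK₀, hmax⟩ := exists_forall_le_of_forall_lt
    (β := {p : Finset _ × Finset _ // p.2 ⊆ p.1 ∧ HasPacking G T c p.1 p.2})
    (fun p => p.1.2.card) (fun p => p.1.1.card) (packingBound (2 * (h * h)) s)
    (fun p => hbound _ _ p.2.1 p.2.2)
    (b₀ := ⟨(Finset.univ, ∅), Finset.empty_subset _, hasPacking_empty _⟩)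
    (by simp only [Finset.card_univ, Fintype.card_fin, le_refl])
  have hj := le_packingBound (2 * (h * h)) s j
  have hE₀card := hbound K₀ E₀ hE₀ hp₀
  have hcard := Finset.card_sdiff_add_card_eq_card hE₀
  simp only [packingBound] at hK₀
  obtain ⟨Y, B, hY, hYB⟩ := exists_isPendantDecomposition_of_isDecomposition
    (K₁ := K₀ \ E₀) (s := s) hT (n := packingBound (2 * (h * h)) s j) (d := 2 * (2 * (h * h)))
    (by lia) (by lia) fun K hK hn => by
      obtain ⟨Y, X, col, L, cls, root, hD, hY⟩ := hT.exists_isDecomposition hE₀ hp₀ hK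
        (fun E hE hp => hmax ⟨(K, E), hE, hp⟩ hn) (by lia)
      exact ⟨Y, X, col, L, cls, root, hD, by lia⟩
  exact ⟨Y, B, by lia, hYB⟩

end PendantDecomposition

section Main

variable {G : SimpleGraph V} {α β : Type*} {A B Y Z S : Set V}

theorem ncard_preimage_val_le [Finite V] (D X : Set V) :
    (((↑) : D → V) ⁻¹' X).ncard ≤ X.ncard :=
  Set.ncard_le_ncard_of_injOn (↑) (fun _ hx => hx) Subtype.val_injective.injOn

theorem IsPCFColoring.comp_iso {G' : SimpleGraph W} {κ : W → α} (h : IsPCFColoring G' κ)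
    (e : G ≃g G') : IsPCFColoring G (κ ∘ e) := by
  refine ⟨fun u v huv => h.proper (e.map_adj_iff.2 huv), fun v u hvu => ?_⟩
  obtain ⟨x, -, hvx, hx⟩ := h.unique (e.map_adj_iff.2 hvu)
  refine ⟨e.symm x, trivial, e.map_adj_iff.1 (by rwa [e.apply_symm_apply]), fun y _ hvy heq => ?_⟩
  rw [Function.comp_apply, Function.comp_apply, e.apply_symm_apply] at heq
  rw [← hx (e y) trivial (e.map_adj_iff.2 hvy) heq, e.symm_apply_apply]

/-- Every induced bipartite subgraph of `G` has a proper conflict-free colouring with colours in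
`β`. -/
def BipartitePCFColorable (β : Type*) (G : SimpleGraph V) : Prop :=
  ∀ B : Set V, (G.induce B).Colorable 2 → ∃ κ : B → β, IsPCFColoring (G.induce B) κ

theorem BipartitePCFColorable.induce (h : BipartitePCFColorable β G) (D : Set V) :
    BipartitePCFColorable β (G.induce D) := fun B hB => by
  let e : (G.induce D).induce B ≃g G.induce ((↑) '' B) :=
    ⟨Equiv.Set.image _ B Subtype.val_injective, Iff.rfl⟩
  obtain ⟨κ, hκ⟩ := h _ (hB.of_hom e.symm.toHom)
  exact ⟨κ ∘ e, hκ.comp_iso e⟩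

theorem HasOddCliqueModel.of_injective_hom {ι : Type*} {G' : SimpleGraph W}
    (h : HasOddCliqueModel G ι) (f : G →g G') (hf : Function.Injective f) :
    HasOddCliqueModel G' ι := by
  obtain ⟨ρ, c, hconn, hdisj, hmono⟩ := h
  let c' : W → Bool := Function.extend f c fun _ => true
  have c'_apply : ∀ v, c' (f v) = c v := hf.extend_apply c _
  let f' : bichromatic G c →g bichromatic G' c' :=
    ⟨f, fun {x y} hxy => bichromatic_adj.2 ⟨f.map_adj hxy.1, by
      rw [c'_apply, c'_apply]
      exact hxy.2⟩⟩
  refine ⟨fun i => f '' ρ i, c', fun i => connected_induce_image f' (hconn i),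
    fun i j hij => Set.disjoint_image_of_injective hf (hdisj hij), fun i j hij => ?_⟩
  obtain ⟨x, hx, y, hy, hxy, hc⟩ := hmono hij
  exact ⟨f x, ⟨x, hx, rfl⟩, f y, ⟨y, hy, rfl⟩, f.map_adj hxy, by rwa [c'_apply, c'_apply]⟩

theorem IsPendantPiece.isSeparation (h : IsPendantPiece G Y B A Z) :
    IsSeparation G A (Y ∪ Z) (A ∪ Y ∪ Z)ᶜ where
  cover v := by
    simp only [Set.mem_compl_iff, Set.mem_union]
    tauto
  disjoint_left := h.disjoint.mono_right (Set.union_subset_union_right Y h.subset)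
  disjoint := Set.disjoint_compl_right_iff_subset.2 fun _ ha => .inl (.inl ha)
  disjoint_right := Set.disjoint_compl_left_iff_subset.2 <|
    Set.union_subset (fun _ hv => .inl (.inr hv)) fun _ hv => .inr hv
  not_adj _ ha _ hw haw := hw (h.mem_of_adj ha haw)

theorem IsSeparation.isPCFExtendable_univ_of_lt_ncard [Finite V] {W : Set V} {a N s : ℕ}
    (h : IsSeparation G A S B) (hs : 2 ^ (2 * a + N) + a + N ≤ s) (hA : s < A.ncard)
    (hB : s < B.ncard) (hS : S.ncard ≤ a) (haN : 8 * a ≤ N) (hW : W.ncard ≤ N)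
    (ih : ∀ D' W' : Set V, D' ≠ Set.univ → W' ⊆ D' → W'.ncard ≤ N → IsPCFExtendable α G D' W') :
    IsPCFExtendable α G Set.univ W := by
  by_cases hWB : 2 * (W ∩ B).ncard ≤ N
  · exact h.isPCFExtendable_univ (Set.nonempty_of_ncard_ne_zero (by lia)) hS haN (by lia) hW hWB ih
  · have hdisj : Disjoint (W ∩ A) (W ∩ B) :=
      h.disjoint.mono Set.inter_subset_right Set.inter_subset_right
    have := Set.ncard_union_eq hdisj
    have := Set.ncard_le_ncard (Set.union_subset Set.inter_subset_left Set.inter_subset_left :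
      W ∩ A ∪ W ∩ B ⊆ W)
    exact h.symm.isPCFExtendable_univ (Set.nonempty_of_ncard_ne_zero (by lia)) hS haN (by lia) hW
      (by lia) ih

theorem exists_isPCFColoring_induce_of_pendantPieces [Finite V] {y s : ℕ}
    (hYB : Disjoint Y B) (hB : (G.induce B).Colorable 2) (hy : 2 * Y.ncard ≤ y)
    (hpiece : ∀ v ∉ Y ∪ B, ∃ A Z, v ∈ A ∧ IsPendantPiece G Y B A Z ∧ A.ncard ≤ s)
    (D : Set V) (hG : BipartitePCFColorable β (G.induce D)) :
    ∃ κ : D → Fin y ⊕ β ⊕ Option (Fin s), IsPCFColoring (G.induce D) κ := by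
  let f : (G.induce D).induce ((↑) ⁻¹' B) →g G.induce B := ⟨fun x => ⟨x.1, x.2⟩, id⟩
  obtain ⟨θ, hθ⟩ := hG _ (hB.of_hom f)
  refine exists_isPCFColoring_of_pendantPieces (hYB.preimage _)
    ((Nat.mul_le_mul_left 2 (ncard_preimage_val_le D Y)).trans hy) hθ fun v hv => ?_
  obtain ⟨A, Z, hvA, hA, hAs⟩ := hpiece v hv
  exact ⟨_, _, hvA, hA.induce D, (ncard_preimage_val_le D A).trans hAs⟩

theorem IsPendantDecomposition.isPCFExtendable_univ [Finite V] [Fintype α] [Fintype β]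
    {W : Set V} {a N s : ℕ} (h : IsPendantDecomposition G Y B s) (hG : BipartitePCFColorable β G)
    (hY : Y.ncard < a) (haN : 8 * a ≤ N) (hs : 2 ^ (2 * a + N) + a + N ≤ s) (hW : W.ncard ≤ N)
    (hcard : Fintype.card β + (2 * a + s + 1 + 2 * N) ≤ Fintype.card α)
    (ih : ∀ D' W' : Set V, D' ≠ Set.univ → W' ⊆ D' → W'.ncard ≤ N → IsPCFExtendable α G D' W') :
    IsPCFExtendable α G Set.univ W := by
  by_cases hlarge : ∃ A Z, IsPendantPiece G Y B A Z ∧ s < (A ∪ Y ∪ Z)ᶜ.ncard ∧ s < A.ncard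
  · obtain ⟨A, Z, hA, hcompl, hAs⟩ := hlarge
    refine hA.isSeparation.isPCFExtendable_univ_of_lt_ncard hs hAs hcompl ?_ haN hW ih
    have := Set.ncard_union_le Y Z
    have := Set.ncard_le_one_iff_subsingleton.2 hA.subsingleton
    lia
  · obtain ⟨κ, hκ⟩ := exists_isPCFColoring_induce_of_pendantPieces h.disjoint h.colorable
      (Nat.mul_le_mul_left 2 hY.le) (s := s) (fun v hv => by
        obtain ⟨A, Z, hvA, hA, hcompl⟩ := h.exists_piece v hv
        exact ⟨A, Z, hvA, hA, not_lt.1 fun hAs => hlarge ⟨A, Z, hA, hcompl, hAs⟩⟩)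
      Wᶜ (hG.induce Wᶜ)
    refine isPCFExtendable_univ_of_isPCFColoring ?_ hκ
    simp only [Fintype.card_sum, Fintype.card_fin, Fintype.card_option]
    lia

theorem isPCFExtendable_univ_of_not_isMinor_top [Finite V] [Fintype α] {W : Set V} {n : ℕ}
    (h : ¬IsMinor (⊤ : SimpleGraph (Fin n)) (G.induce Wᶜ))
    (hcard : 2 ^ n * (2 ^ n) ^ 2 ^ n + 2 * W.ncard ≤ Fintype.card α) :
    IsPCFExtendable α G Set.univ W := by
  obtain ⟨κ, hκ⟩ := exists_isPCFColoring_of_not_isMinor_top h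
  exact isPCFExtendable_univ_of_isPCFColoring
    (by simpa only [Fintype.card_prod, Fintype.card_fun, Fintype.card_fin] using hcard) hκ

theorem exists_forall_isPCFExtendable_univ (h : ℕ) : ∃ N c : ℕ,
    ∀ (V : Type u) [Finite V] (G : SimpleGraph V) (α β : Type v) [Fintype α] [Fintype β],
      ¬HasOddCliqueModel G (Fin h) → BipartitePCFColorable β G →
        Fintype.card β + c ≤ Fintype.card α →
          ∀ W : Set V, W.ncard ≤ N → IsPCFExtendable α G Set.univ W := by
  obtain ⟨a, ha⟩ : ∃ a, a = 12 * (h * h) + 1 := ⟨_, rfl⟩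
  obtain ⟨N, hN⟩ : ∃ N, N = 8 * a := ⟨_, rfl⟩
  obtain ⟨s, hs⟩ : ∃ s, s = 2 ^ (2 * a + N) + a + N := ⟨_, rfl⟩
  obtain ⟨n, hn⟩ : ∃ n, n = 2 ^ (h + packingBound (2 * (h * h)) s (2 * (h * h))) := ⟨_, rfl⟩
  refine ⟨N, 2 ^ n * (2 ^ n) ^ 2 ^ n + (2 * a + s + 1 + 2 * N), ?_⟩
  intro V _ G α β _ _ hodd hbip hcard
  induction hm : Nat.card V using Nat.strong_induction_on generalizing V with
  | _ m ih =>
  intro W hW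
  by_cases hK : IsMinor (⊤ : SimpleGraph (Fin n)) (G.induce Wᶜ)
  · obtain ⟨T, c, hT⟩ := exists_isBipartiteExpansion hn.ge hodd
      (hK.of_injective_hom (Embedding.induce Wᶜ).toHom Subtype.val_injective)
    obtain ⟨Y, B, hY, hdec⟩ := hT.exists_isPendantDecomposition hodd
    refine hdec.isPCFExtendable_univ hbip (a := a) (by lia) hN.ge hs.ge hW (by lia) ?_
    intro D W' hD hWD hW'
    refine .of_induce hWD (ih _ (hm ▸ Set.ncard_lt_card hD) D (G.induce D) (fun hmodel => hodd ?_)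
      (hbip.induce D) rfl _ ((ncard_preimage_val_le D W').trans hW'))
    exact hmodel.of_injective_hom (Embedding.induce D).toHom Subtype.val_injective
  · exact isPCFExtendable_univ_of_not_isMinor_top hK (by lia)

end Main

theorem stmt3 (h : ℕ) (hh : 0 < h) :
    ∃ c : ℤ, ∀ (V : Type) [Fintype V] (G : SimpleGraph V),
      ¬ IsOddMinor (⊤ : SimpleGraph (Fin h)) G →
      ∀ k : ℕ, 0 < k →
        (∀ s : Set V, (G.induce s).Colorable 2 → chiPCF (G.induce s) ≤ k) →
        (chiPCF G : ℤ) ≤ (k : ℤ) + c := by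
  obtain ⟨N, c, hext⟩ := exists_forall_isPCFExtendable_univ.{0, 0} h
  refine ⟨c, fun V _ G hG k hk hchi => ?_⟩
  have hodd : ¬HasOddCliqueModel G (Fin h) := fun hmodel => hG (.of_hasOddCliqueModel hmodel)
  have hbip : BipartitePCFColorable (Fin k) G := fun B hB =>
    ((pcfColorable_chiPCF (G.induce B)).mono (hchi B hB)).exists_isPCFColoring
  have : NeZero k := ⟨hk.ne'⟩
  obtain ⟨φ, hφ⟩ := hext V G (Fin (k + c)) (Fin k) hodd hbip
    (by rw [Fintype.card_fin, Fintype.card_fin]) ∅ (by rw [Set.ncard_empty]; exact N.zero_le) 0 0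
  have hle : chiPCF G ≤ k + c := Nat.sInf_le hφ.isPCFColoring.pcfColorable
  exact_mod_cast hle

end CFPaper
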